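/- arXiv:1609.06355 — 2 statements merged into one kernel-verified Lean document; each statement's English description precedes it below -/
import Mathlib

section
/- For every odd prime p and every ε ∈ (0,1], there exist a positive integer n1(p,ε) and c = c(p,ε) ∈ (0,1/2] such that the following holds for all positive integers n ≥ n1(p,ε) and k. Suppose that for independent uniformly distributed directions z_1, …, z_k ∈ PF_p^{n−1} (the projective space of directions in F_p^n), with probability at least 1/2 there exists a set B ⊆ F_p^n with |B| ≥ ε·p^n that contains no line with direction in {z_1, …, z_k}. Then there exists a (p, c, c)-locally decodable code sending {0,1}^l to {0,1}^{p^n}, where l = Ω(c²·k / log(1/c)) (with an absolute implied constant). -/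
/-- A randomized non-adaptive `q`-query decoder for codewords in `{0,1}^n`, modeled as a
finitely supported probability distribution over pairs `(S, g)` where `S` is the query set
(of size at most `q`) and `g` is an output function depending only on the coordinates in `S`. -/
structure Decoder (n q : ℕ) where
  p : Finset (Fin n) × ((Fin n → Bool) → Bool) → ℝ
  nonneg : ∀ a, 0 ≤ p a
  sum_one : ∑ a, p a = 1
  query_bound : ∀ a, p a ≠ 0 → a.1.card ≤ q
  local_dep : ∀ a, p a ≠ 0 → ∀ y y' : Fin n → Bool, (∀ j ∈ a.1, y j = y' j) → a.2 y = a.2 y'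

/-- The probability that the decoder `D`, run on input `y`, outputs the bit `b`. -/
noncomputable def Decoder.correctProb {n q : ℕ} (D : Decoder n q) (y : Fin n → Bool)
    (b : Bool) : ℝ :=
  ∑ a : Finset (Fin n) × ((Fin n → Bool) → Bool), if a.2 y = b then D.p a else 0

/-- The probability that the decoder `D` queries coordinate `j`. -/
noncomputable def Decoder.queryProb {n q : ℕ} (D : Decoder n q) (j : Fin n) : ℝ :=
  ∑ a : Finset (Fin n) × ((Fin n → Bool) → Bool), if j ∈ a.1 then D.p a else 0

/-- `C : {0,1}^k → {0,1}^n` is a `(q,δ,η)`-locally decodable code. -/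
def IsLDC (k n q : ℕ) (δ η : ℝ) (C : (Fin k → Bool) → Fin n → Bool) : Prop :=
  ∀ i : Fin k, ∃ D : Decoder n q,
    ∀ x : Fin k → Bool, ∀ y : Fin n → Bool,
      ((Finset.univ.filter fun j => y j ≠ C x j).card : ℝ) ≤ δ * n →
      1/2 + η ≤ D.correctProb y (x i)

/-- `C : {0,1}^k → {0,1}^n` is a `(q,c,η)`-smooth code. -/
def IsSmoothCode (k n q : ℕ) (c η : ℝ) (C : (Fin k → Bool) → Fin n → Bool) : Prop :=
  ∀ i : Fin k, ∃ D : Decoder n q,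
    (∀ x : Fin k → Bool, 1/2 + η ≤ D.correctProb (C x) (x i)) ∧
    ∀ j : Fin n, D.queryProb j ≤ c / n

/-- `C : {0,1}^k → {0,1}^n` is a `(q,c,η)`-average-case smooth code: the success probability
`1/2 + η` is only required on average over a uniform message `x` and uniform index `i`. -/
def IsAvgSmoothCode (k n q : ℕ) (c η : ℝ) (C : (Fin k → Bool) → Fin n → Bool) : Prop :=
  ∃ D : Fin k → Decoder n q,
    (∀ i : Fin k, ∀ j : Fin n, (D i).queryProb j ≤ c / n) ∧
    1/2 + η ≤ (∑ x : Fin k → Bool, ∑ i : Fin k, (D i).correctProb (C x) (x i)) / (2^k * k)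

/-!
By the density Hales–Jewett theorem and averaging over embedded cubes, a set of density at least
`ε` contains a proportion at least `κ = κ(p, ε) > 0` of all lines, whereas the sets `B` of the
hypothesis contain no line with direction among `z₁, …, zₖ`. Write `Φ_z(B)` for the proportion of
the lines with direction `z` that are contained in `B`. Comparing `z` with an independent copy and
symmetrizing turns this gap into directions `z₁, …, zₖ` and sets `S_σ`, one for every sign vector
`σ`, such that `∑ σᵢ Φ_{zᵢ}(S_σ)` is at least of order `κ k` on average.

Random thresholds and the Sauer–Shelah lemma then give a set `I` of at least `k / M` indices,
thresholds `mᵢ` and a margin `γ > 0` such that, for every sign pattern on `I`, some `S_σ` satisfies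
`Φ_{zᵢ}(S_σ) ≥ mᵢ + γ` where the sign is positive and `Φ_{zᵢ}(S_σ) ≤ mᵢ - γ` where it is negative.
A message, read as a sign pattern on `I`, is encoded by the indicator function of such a set. The
`i`-th bit is decoded by testing whether a random line with direction `zᵢ` is contained in the
received set, and the errors do little harm because `Φ_z` is Lipschitz for the Hamming distance.

The density Hales–Jewett theorem is proved by induction on the alphabet, following Dodos,
Kanellopoulos and Tyros. A set of nearly critical density without lines is essentially disjoint from
an intersection of insensitive sets that has noticeable density. By the induction hypothesis, the
complement of this intersection can essentially be partitioned into subspaces. So the density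
increases on one of them, which is impossible at the critical value.
-/

namespace ForbiddenDirections

open Function
open scoped BigOperators

section Mean

/-- The average of a real function over a finite type. It is written with `finsum` and `Nat.card`,
so that it depends on no `Fintype` or `DecidableEq` instance of the (function) types occurring
below. -/
noncomputable def mean {X : Type*} (f : X → ℝ) : ℝ :=
  (∑ᶠ x, f x) / Nat.card X

/-- The uniform probability of a subset of a finite type. -/
noncomputable def density {X : Type*} (A : Set X) : ℝ :=
  mean (A.indicator 1)

variable {X Y : Type*}

theorem mean_eq_sum_div [Fintype X] (f : X → ℝ) : mean f = (∑ x, f x) / Fintype.card X := by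
  rw [mean, finsum_eq_sum_of_fintype, Nat.card_eq_fintype_card]

theorem mean_eq_expect [Fintype X] (f : X → ℝ) : mean f = 𝔼 x, f x := by
  rw [mean_eq_sum_div, Fintype.expect_eq_sum_div_card]

theorem mean_equiv (e : X ≃ Y) (f : Y → ℝ) : mean (fun x ↦ f (e x)) = mean f := by
  rw [mean, mean, finsum_comp_equiv, Nat.card_congr e]

theorem density_preimage_equiv (e : X ≃ Y) (A : Set Y) : density (e ⁻¹' A) = density A :=
  mean_equiv e (A.indicator 1)

theorem density_empty : density (∅ : Set X) = 0 := by
  simp [density, mean]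

section Finite

variable [Finite X] {f g : X → ℝ} {c d : ℝ} {A B : Set X}

theorem mean_add (f g : X → ℝ) : mean (fun x ↦ f x + g x) = mean f + mean g := by
  cases nonempty_fintype X
  simp only [mean_eq_expect, Finset.expect_add_distrib]

theorem mean_sub (f g : X → ℝ) : mean (fun x ↦ f x - g x) = mean f - mean g := by
  cases nonempty_fintype X
  simp only [mean_eq_expect, Finset.expect_sub_distrib]

theorem mean_mul_left (c : ℝ) (f : X → ℝ) : mean (fun x ↦ c * f x) = c * mean f := by
  cases nonempty_fintype X
  simp only [mean_eq_expect, Finset.mul_expect]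

theorem mean_sum {ι : Type*} (s : Finset ι) (f : ι → X → ℝ) :
    mean (fun x ↦ ∑ i ∈ s, f i x) = ∑ i ∈ s, mean (f i) := by
  cases nonempty_fintype X
  simp only [mean_eq_expect, Finset.expect_sum_comm]

theorem mean_const [Nonempty X] (c : ℝ) : mean (fun _ : X ↦ c) = c := by
  cases nonempty_fintype X
  rw [mean_eq_expect, Fintype.expect_const]

theorem mean_mono (h : ∀ x, f x ≤ g x) : mean f ≤ mean g := by
  cases nonempty_fintype X
  simpa only [mean_eq_expect] using Finset.expect_le_expect fun x _ ↦ h x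

theorem mean_nonneg (h : ∀ x, 0 ≤ f x) : 0 ≤ mean f := by
  cases nonempty_fintype X
  simpa only [mean_eq_expect] using Finset.expect_nonneg fun x _ ↦ h x

theorem exists_pos_of_mean_pos (h : 0 < mean f) : ∃ x, 0 < f x := by
  cases nonempty_fintype X
  rw [mean_eq_expect] at h
  rw [← Finset.expect_const_zero (Finset.univ : Finset X)] at h
  obtain ⟨x, -, hx⟩ := Finset.exists_lt_of_expect_lt_expect h
  exact ⟨x, hx⟩

theorem mean_prod [Finite Y] (f : X × Y → ℝ) : mean f = mean fun x ↦ mean fun y ↦ f (x, y) := by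
  cases nonempty_fintype X
  cases nonempty_fintype Y
  simp only [mean_eq_expect, ← Finset.univ_product_univ, Finset.expect_product]

theorem mean_comm [Finite Y] (f : X → Y → ℝ) :
    (mean fun x ↦ mean fun y ↦ f x y) = mean fun y ↦ mean fun x ↦ f x y := by
  cases nonempty_fintype X
  cases nonempty_fintype Y
  simpa only [mean_eq_expect] using Finset.expect_comm Finset.univ Finset.univ f

theorem mean_fst_of_involutive [Finite Y] [Nonempty Y] {e : X × Y → X × Y} (he : Involutive e)
    (f : X → ℝ) : mean f = mean fun x ↦ mean fun y ↦ f (e (x, y)).1 := by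
  have hequiv : (mean fun z ↦ f (e z).1) = mean fun z : X × Y ↦ f z.1 :=
    mean_equiv he.toPerm fun z ↦ f z.1
  rw [← mean_prod fun z ↦ f (e z).1, hequiv, mean_prod]
  simp only [mean_const]

theorem mean_sumElim {ι κ α : Type*} [Finite ι] [Finite κ] [Finite α] (f : (ι ⊕ κ → α) → ℝ) :
    mean f = mean fun x : ι → α ↦ mean fun y : κ → α ↦ f (Sum.elim x y) := by
  rw [← mean_equiv (Equiv.sumArrowEquivProdArrow ι κ α).symm f, mean_prod]
  rfl

theorem mean_prod_apply {ι : Type*} [Fintype ι] (f : ι → X → ℝ) :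
    mean (fun x : ι → X ↦ ∏ i, f i (x i)) = ∏ i, mean (f i) := by
  classical
  cases nonempty_fintype X
  simp only [mean_eq_sum_div, Finset.prod_div_distrib, Finset.prod_univ_sum, Fintype.piFinset_univ]
  simp

theorem density_eq_ncard_div (A : Set X) : density A = A.ncard / Nat.card X := by
  classical
  cases nonempty_fintype X
  rw [density, mean_eq_sum_div, Nat.card_eq_fintype_card, Set.ncard_eq_toFinset_card',
    ← Set.filter_mem_univ_eq_toFinset]
  simp [Set.indicator_apply, Finset.sum_boole]

theorem density_singleton (a : X) : density {a} = 1 / Nat.card X := by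
  rw [density_eq_ncard_div, Set.ncard_singleton, Nat.cast_one]

theorem density_nonneg (A : Set X) : 0 ≤ density A :=
  mean_nonneg fun x ↦ Set.indicator_nonneg (fun _ _ ↦ zero_le_one) x

theorem density_mono (h : A ⊆ B) : density A ≤ density B :=
  mean_mono (Set.indicator_le_indicator_of_subset h fun _ ↦ zero_le_one)

theorem nonempty_of_density_pos (h : 0 < density A) : A.Nonempty := by
  obtain ⟨x, hx⟩ := exists_pos_of_mean_pos h
  exact ⟨x, Set.mem_of_indicator_ne_zero hx.ne'⟩

theorem mean_indicator_range {e : X → Y} (he : Injective e) (f : Y → ℝ) :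
    mean ((Set.range e).indicator f) = Nat.card X / Nat.card Y * mean fun x ↦ f (e x) := by
  rw [mean, ← finsum_mem_def, finsum_mem_range he, mean, div_mul_div_comm, mul_comm]
  cases isEmpty_or_nonempty X
  · simp [finsum_of_isEmpty]
  · exact (mul_div_mul_right _ _ (Nat.cast_ne_zero.2 Nat.card_pos.ne')).symm

theorem mul_density_le_mean (hf : ∀ x, 0 ≤ f x) (h : ∀ x ∈ A, c ≤ f x) :
    c * density A ≤ mean f := by
  rw [density, ← mean_mul_left]
  refine mean_mono fun x ↦ ?_
  by_cases hx : x ∈ A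
  · simpa [hx] using h x hx
  · simpa [hx] using hf x

theorem density_sdiff_add_density_inter (A B : Set X) :
    density (A \ B) + density (A ∩ B) = density A := by
  rw [density, density, density, ← mean_add]
  exact congrArg mean <| funext fun x ↦ by
    by_cases hA : x ∈ A <;> by_cases hB : x ∈ B <;> simp [hA, hB]

theorem density_sub_density_le (A B : Set X) : density A - density B ≤ density (A \ B) := by
  linarith [density_sdiff_add_density_inter A B,
    density_mono (Set.inter_subset_right : A ∩ B ⊆ B)]

theorem density_le_sum_of_subset_biUnion {ι : Type*} {s : Finset ι} {S : ι → Set X}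
    (h : A ⊆ ⋃ i ∈ s, S i) : density A ≤ ∑ i ∈ s, density (S i) := by
  refine (mean_mono fun x ↦ ?_).trans_eq (mean_sum _ _)
  have hnonneg (i : ι) : 0 ≤ (S i).indicator (1 : X → ℝ) x :=
    Set.indicator_nonneg (fun _ _ ↦ zero_le_one) x
  by_cases hx : x ∈ A
  · obtain ⟨i, hi, hxi⟩ := Set.mem_iUnion₂.1 (h hx)
    rw [Set.indicator_of_mem hx, ← Set.indicator_of_mem hxi (1 : X → ℝ)]
    exact Finset.single_le_sum (fun i _ ↦ hnonneg i) hi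
  · rw [Set.indicator_of_notMem hx]
    exact Finset.sum_nonneg fun i _ ↦ hnonneg i

theorem mean_density_comm [Finite Y] (G : X → Set Y) :
    (mean fun x ↦ density (G x)) = mean fun y ↦ density {x | y ∈ G x} :=
  mean_comm fun x y ↦ (G x).indicator 1 y

variable [Nonempty X]

theorem mean_le (h : ∀ x, f x ≤ c) : mean f ≤ c :=
  (mean_mono h).trans_eq (mean_const c)

theorem le_mean (h : ∀ x, c ≤ f x) : c ≤ mean f :=
  (mean_const c).symm.trans_le (mean_mono h)

theorem exists_le_of_le_mean (h : c ≤ mean f) : ∃ x, c ≤ f x := by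
  cases nonempty_fintype X
  rw [mean_eq_expect] at h
  obtain ⟨x, -, hx⟩ := Finset.exists_le_of_le_expect Finset.univ_nonempty h
  exact ⟨x, hx⟩

theorem sub_card_mul_le_of_le_mean {a : ℝ} (hf : ∀ x, f x ≤ c) (ha : a ≤ mean f) (x : X) :
    c - Nat.card X * (c - a) ≤ f x := by
  cases nonempty_fintype X
  have hsum : c - f x ≤ ∑ y, (c - f y) :=
    Finset.single_le_sum (f := fun y ↦ c - f y) (fun y _ ↦ sub_nonneg.2 (hf y)) (Finset.mem_univ x)
  rw [mean_eq_sum_div, le_div_iff₀ (by positivity)] at ha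
  rw [Finset.sum_sub_distrib, Finset.sum_const, Finset.card_univ, nsmul_eq_mul] at hsum
  rw [Nat.card_eq_fintype_card]
  linarith

theorem half_le_density_of_card_le (h : Nat.card X ≤ 2 * A.ncard) : 1 / 2 ≤ density A := by
  rw [density_eq_ncard_div, div_le_div_iff₀ two_pos (Nat.cast_pos.2 Nat.card_pos), one_mul]
  exact_mod_cast h.trans_eq (mul_comm _ _)

theorem density_le_one (A : Set X) : density A ≤ 1 :=
  mean_le fun x ↦ Set.indicator_le_self' (fun _ _ ↦ zero_le_one) x

theorem density_univ : density (Set.univ : Set X) = 1 := by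
  rw [density, Set.indicator_univ]
  exact mean_const 1

theorem density_compl (A : Set X) : density Aᶜ = 1 - density A := by
  rw [← density_univ (X := X), ← density_sdiff_add_density_inter Set.univ A, Set.univ_inter,
    Set.compl_eq_univ_sdiff, add_sub_cancel_right]

theorem density_setOf_forall_mem {ι : Type*} [Finite ι] (s : Finset ι) (S : ι → Set X) :
    density {x : ι → X | ∀ i ∈ s, x i ∈ S i} = ∏ i ∈ s, density (S i) := by
  classical
  cases nonempty_fintype ι
  have hfactor (i : ι) : mean (fun x ↦ if i ∈ s then (S i).indicator 1 x else (1 : ℝ)) =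
      if i ∈ s then density (S i) else 1 := by
    split_ifs
    exacts [rfl, mean_const 1]
  rw [← Finset.univ_inter s, ← Finset.prod_ite_mem, ← Finset.prod_congr rfl fun i _ ↦ hfactor i,
    ← mean_prod_apply]
  refine congrArg mean <| funext fun x ↦ ?_
  simp [Set.indicator_apply, Finset.prod_ite_mem, Finset.prod_boole]

theorem le_density_setOf_le (hf : ∀ x, f x ≤ 1) (hd : 0 ≤ d) (h : c + d ≤ mean f) :
    c ≤ density {x | d ≤ f x} := by
  have hpoint (x : X) : f x ≤ {x | d ≤ f x}.indicator 1 x + d := by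
    by_cases hx : d ≤ f x
    · simpa [hx] using (hf x).trans (le_add_of_nonneg_right hd)
    · simpa [hx] using le_of_not_ge hx
  have := mean_mono hpoint
  rw [mean_add, mean_const] at this
  unfold density
  linarith

end Finite

end Mean

section Subspace

open Combinatorics

variable {α β σ τ ι κ : Type*}

/-- The subspace `V ∘ W` of `V`, for a subspace `W` of the parameter space of `V`. -/
def subspaceComp (V : Subspace σ α ι) (W : Subspace τ α σ) : Subspace τ α ι where
  idxFun i := (V.idxFun i).elim Sum.inl W.idxFun
  proper e := by
    obtain ⟨j, hj⟩ := W.proper e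
    obtain ⟨i, hi⟩ := V.proper j
    exact ⟨i, by simp [hi, hj]⟩

/-- The line `V ∘ l` of a subspace `V`, for a line `l` of the parameter space of `V`. -/
def lineComp (V : Subspace σ α ι) (l : Line α σ) : Line α ι where
  idxFun i := (V.idxFun i).elim some l.idxFun
  proper := by
    obtain ⟨j, hj⟩ := l.proper
    obtain ⟨i, hi⟩ := V.proper j
    exact ⟨i, by simp [hi, hj]⟩

/-- The subspace `V × {y}`. -/
def appendRight (V : Subspace σ α ι) (y : κ → α) : Subspace σ α (ι ⊕ κ) where
  idxFun := Sum.elim V.idxFun (Sum.inl ∘ y)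
  proper e := by
    obtain ⟨i, hi⟩ := V.proper e
    exact ⟨Sum.inl i, by simp [hi]⟩

/-- The subspace `{y} × V`. -/
def appendLeft (y : κ → α) (V : Subspace σ α ι) : Subspace σ α (κ ⊕ ι) where
  idxFun := Sum.elim (Sum.inl ∘ y) V.idxFun
  proper e := by
    obtain ⟨i, hi⟩ := V.proper e
    exact ⟨Sum.inr i, by simp [hi]⟩

/-- The subspace `l × V`, whose parameter `none` is that of the line `l`. -/
def lineProd (l : Line α ι) (V : Subspace σ α κ) : Subspace (Option σ) α (ι ⊕ κ) where
  idxFun := Sum.elim (fun i ↦ (l.idxFun i).elim (Sum.inr none) Sum.inl)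
    (fun i ↦ (V.idxFun i).map id some)
  proper
    | none => by
      obtain ⟨i, hi⟩ := l.proper
      exact ⟨Sum.inl i, by simp [hi]⟩
    | some e => by
      obtain ⟨i, hi⟩ := V.proper e
      exact ⟨Sum.inr i, by simp [hi]⟩

/-- The extension of a subspace to the alphabet `Option β`, whose new letter `none` also serves as
a wildcard: a word over `Option β` with a letter `none` is a combinatorial line over `β`. -/
def liftOption (V : Subspace σ β ι) : Subspace σ (Option β) ι where
  idxFun i := (V.idxFun i).map some id
  proper e := by
    obtain ⟨i, hi⟩ := V.proper e
    exact ⟨i, by simp [hi]⟩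

/-- The subspace of dimension zero formed by the empty word. -/
def emptySubspace (α : Type*) : Subspace PEmpty α PEmpty where
  idxFun := PEmpty.elim
  proper := PEmpty.rec

/-- The word over `β` obtained by replacing each letter `none` by `b`. -/
def substitute (x : ι → Option β) (b : β) : ι → β :=
  fun i ↦ (x i).getD b

/-- The line over `Option β` spanned by a word `x` with a letter `none`: its point at `some b` is
`substitute x b`, and its point at `none` is `x` itself. -/
def wordLine (x : ι → Option β) (hx : ∃ i, x i = none) : Line (Option β) ι where
  idxFun i := (x i).map some
  proper := hx.imp fun i hi ↦ by simp [hi]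

theorem subspaceComp_apply (V : Subspace σ α ι) (W : Subspace τ α σ) (x : τ → α) :
    subspaceComp V W x = V (W x) := by
  ext i
  cases h : V.idxFun i <;> simp [Subspace.coe_apply, subspaceComp, h]

theorem lineComp_apply (V : Subspace σ α ι) (l : Line α σ) (a : α) : lineComp V l a = V (l a) := by
  ext i
  cases h : V.idxFun i <;> simp [Subspace.coe_apply, lineComp, h]

theorem appendRight_apply (V : Subspace σ α ι) (y : κ → α) (x : σ → α) :
    appendRight V y x = Sum.elim (V x) y := by
  ext (i | i) <;> simp [Subspace.coe_apply, appendRight]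

theorem appendLeft_apply (y : κ → α) (V : Subspace σ α ι) (x : σ → α) :
    appendLeft y V x = Sum.elim y (V x) := by
  ext (i | i) <;> simp [Subspace.coe_apply, appendLeft]

theorem lineProd_apply (l : Line α ι) (V : Subspace σ α κ) (x : Option σ → α) :
    lineProd l V x = Sum.elim (l (x none)) (V (x ∘ some)) := by
  ext (i | i)
  · cases h : l.idxFun i <;> simp [Subspace.coe_apply, lineProd, h]
  · cases h : V.idxFun i <;> simp [Subspace.coe_apply, lineProd, h]

theorem liftOption_some (V : Subspace σ β ι) (x : σ → β) :
    liftOption V (some ∘ x) = some ∘ V x := by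
  ext1 i
  cases h : V.idxFun i <;> simp [Subspace.coe_apply, liftOption, h]

theorem liftOption_comp (V : Subspace σ β ι) (W : Subspace τ β σ) (x : τ → Option β) :
    liftOption (subspaceComp V W) x = liftOption V (liftOption W x) := by
  ext1 i
  cases h : V.idxFun i <;> simp [Subspace.coe_apply, liftOption, subspaceComp, h]

theorem liftOption_lineProd (l : Line β ι) (V : Subspace σ β κ) (x : Option σ → Option β) :
    liftOption (lineProd l V) x =
      Sum.elim (l.map some (x none)) (liftOption V (x ∘ some)) := by
  ext1 (i | i)
  · cases h : l.idxFun i <;> simp [Subspace.coe_apply, liftOption, lineProd, Line.map, h]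
  · cases h : V.idxFun i <;> simp [Subspace.coe_apply, liftOption, lineProd, h]

theorem liftOption_reindex (V : Subspace σ β ι) (e : σ ≃ τ) (x : τ → Option β) :
    liftOption (V.reindex e (Equiv.refl β) (Equiv.refl ι)) x = liftOption V (x ∘ e) := by
  ext1 i
  cases h : V.idxFun i <;> simp [Subspace.coe_apply, Subspace.reindex, liftOption, h]

theorem substitute_liftOption (V : Subspace σ β ι) (x : σ → Option β) (b : β) :
    substitute (liftOption V x) b = V (substitute x b) := by
  ext i
  cases h : V.idxFun i <;> simp [Subspace.coe_apply, liftOption, substitute, h]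

theorem wordLine_none (x : ι → Option β) (hx : ∃ i, x i = none) : wordLine x hx none = x := by
  ext1 i
  cases h : x i <;> simp [wordLine, h]

theorem wordLine_some (x : ι → Option β) (hx : ∃ i, x i = none) (b : β) :
    wordLine x hx (some b) = some ∘ substitute x b := by
  ext1 i
  cases h : x i <;> simp [wordLine, substitute, h]

theorem coe_subspace_injective (V : Subspace σ α ι) : Injective (V : (σ → α) → ι → α) := by
  intro x y h
  ext e
  obtain ⟨i, hi⟩ := V.proper e
  simpa [Subspace.coe_apply, hi] using congrFun h i

instance finite_line [Finite α] [Finite ι] : Finite (Line α ι) :=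
  Finite.of_injective Line.idxFun fun _ _ ↦ Line.ext

end Subspace

section MultidimensionalDHJ

open Combinatorics

/-- Every subset of `α^ι` of density at least `δ` contains a combinatorial line. -/
def ForcesLine (α ι : Type*) (δ : ℝ) : Prop :=
  ∀ A : Set (ι → α), δ ≤ density A → ∃ l : Line α ι, ∀ a, l a ∈ A

/-- The density Hales–Jewett property of an alphabet. -/
def DensityHalesJewett (α : Type*) : Prop :=
  ∀ δ : ℝ, 0 < δ → ∃ ι : Type, Finite ι ∧ ForcesLine α ι δ

theorem ForcesLine.mono {α ι : Type*} {δ δ' : ℝ} (h : ForcesLine α ι δ) (hδ : δ ≤ δ') :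
    ForcesLine α ι δ' :=
  fun A hA ↦ h A (hδ.trans hA)

theorem ForcesLine.exists_line_le_density {β ι Y : Type*} [Finite β] [Finite ι] [Finite Y]
    [Nonempty Y] {δ : ℝ} (h : ForcesLine β ι δ) (hδ : 0 < δ) (G : (ι → β) → Set Y)
    (hG : 2 * δ ≤ mean fun u ↦ density (G u)) :
    ∃ l : Line β ι, δ / (Nat.card (Line β ι) + 1) ≤ density {y | ∀ b, y ∈ G (l b)} := by
  have : Nonempty (ι → β) := (exists_pos_of_mean_pos (hG.trans_lt' (by positivity))).nonempty
  cases nonempty_fintype (Line β ι)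
  set good : Set Y := {y | δ ≤ density {u | y ∈ G u}}
  have hgood : δ ≤ density good :=
    le_density_setOf_le (fun _ ↦ density_le_one _) hδ.le (by
      rw [← two_mul]
      exact hG.trans_eq (mean_density_comm G))
  have hcover : δ ≤ ∑ l : Line β ι, density {y | ∀ b, y ∈ G (l b)} := by
    refine hgood.trans (density_le_sum_of_subset_biUnion fun y hy ↦ ?_)
    simpa using h _ hy
  by_contra! hsmall
  have hsum := hcover.trans (Finset.sum_le_sum fun l _ ↦ (hsmall l).le)
  rw [Finset.sum_const, Finset.card_univ, nsmul_eq_mul, ← Nat.card_eq_fintype_card,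
    mul_div_assoc', le_div_iff₀ (by positivity)] at hsum
  linarith

theorem DensityHalesJewett.exists_subspace {β : Type*} [Finite β] (hβ : DensityHalesJewett β)
    (σ : Type) [Finite σ] {δ : ℝ} (hδ : 0 < δ) :
    ∃ ι : Type, Finite ι ∧
      ∀ A : Set (ι → β), δ ≤ density A → ∃ V : Subspace σ β ι, ∀ x, V x ∈ A := by
  induction σ using Finite.induction_empty_option generalizing δ with
  | of_equiv e ih =>
    obtain ⟨ι, hι, h⟩ := ih hδ
    refine ⟨ι, hι, fun A hA ↦ ?_⟩
    obtain ⟨V, hV⟩ := h A hA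
    exact ⟨V.reindex e (Equiv.refl _) (Equiv.refl _), fun x ↦ by
      convert hV (x ∘ e) using 1; ext i; simp⟩
  | h_empty =>
    refine ⟨PEmpty, inferInstance, fun A hA ↦ ⟨emptySubspace β, fun x ↦ ?_⟩⟩
    obtain ⟨y, hy⟩ := nonempty_of_density_pos (hδ.trans_le hA)
    rwa [Subsingleton.elim y (emptySubspace β x)] at hy
  | h_option ih =>
    obtain ⟨ι₁, hι₁, h₁⟩ := hβ (δ / 2) (by positivity)
    obtain ⟨ι₂, hι₂, h₂⟩ := ih (δ := δ / 2 / (Nat.card (Line β ι₁) + 1)) (by positivity)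
    refine ⟨ι₁ ⊕ ι₂, inferInstance, fun A hA ↦ ?_⟩
    obtain ⟨z, -⟩ := nonempty_of_density_pos (hδ.trans_le hA)
    have : Nonempty (ι₂ → β) := ⟨z ∘ Sum.inr⟩
    rw [density, mean_sumElim] at hA
    obtain ⟨l, hl⟩ := h₁.exists_line_le_density (by positivity) (fun u ↦ {y | Sum.elim u y ∈ A})
      (by rw [mul_div_cancel₀ _ two_ne_zero]; exact hA)
    obtain ⟨V, hV⟩ := h₂ _ hl
    exact ⟨lineProd l V, fun x ↦ by rw [lineProd_apply]; exact hV _ _⟩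

end MultidimensionalDHJ

section GrahamRothschild

open Combinatorics

/-- The union of the blocks `{s | T s = some j}`, `j ∈ I`, of a partial labelling `T`. -/
def blockUnion {σ ι : Type*} (T : σ → Option ι) (I : Set ι) : Set σ :=
  {s | ∃ j ∈ I, T s = some j}

theorem exists_subspace_color_eq_of_wildcards {β : Type*} [Finite β] (σ : Type) [Finite σ]
    (r : Type*) [Finite r] :
    ∃ ι : Type, Finite ι ∧ ∀ c : (ι → Option β) → r, ∃ (V : Subspace σ β ι) (χ : Set σ → r),
      ∀ x, c (liftOption V x) = χ {j | x j = none} := by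
  classical
  induction σ using Finite.induction_empty_option generalizing r with
  | of_equiv e ih =>
    obtain ⟨ι, hι, h⟩ := ih r
    refine ⟨ι, hι, fun c ↦ ?_⟩
    obtain ⟨V, χ, hV⟩ := h c
    exact ⟨V.reindex e (Equiv.refl _) (Equiv.refl _), fun S ↦ χ (e ⁻¹' S), fun x ↦ by
      rw [liftOption_reindex, hV]; rfl⟩
  | h_empty =>
    exact ⟨PEmpty, inferInstance, fun c ↦ ⟨emptySubspace β, fun _ ↦ c default, fun x ↦
      congrArg c (Subsingleton.elim _ _)⟩⟩
  | h_option ih =>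
    obtain ⟨ι₂, hι₂, h₂⟩ := ih (r × r)
    obtain ⟨ι₁, hι₁, h₁⟩ := Line.exists_mono_in_high_dimension β ((ι₂ → Option β) → r)
    refine ⟨ι₁ ⊕ ι₂, inferInstance, fun c ↦ ?_⟩
    obtain ⟨l, C, hl⟩ := h₁ fun v y ↦ c (Sum.elim (some ∘ v) y)
    obtain ⟨V, χ, hV⟩ := h₂ fun y ↦ (C y, c (Sum.elim (l.map some none) y))
    refine ⟨lineProd l V, fun S ↦ if none ∈ S then (χ (some ⁻¹' S)).2 else (χ (some ⁻¹' S)).1,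
      fun x ↦ ?_⟩
    have hχ : (C (liftOption V (x ∘ some)), c (Sum.elim (l.map some none) (liftOption V
        (x ∘ some)))) = χ (some ⁻¹' {j | x j = none}) := hV _
    rw [liftOption_lineProd]
    beta_reduce
    rw [← hχ]
    cases hx : x none with
    | none => rw [if_pos (Set.mem_ofPred_eq ▸ hx)]
    | some b =>
      rw [if_neg (by simp [Set.mem_ofPred_eq, hx]), Line.map_apply]
      exact congrFun (hl b) _

/-- A weak form of the finite unions theorem, in which the colour of a union may still depend on
its last block. -/
theorem exists_blocks_color_eq_of_isGreatest (r : Type*) [Finite r] (n : ℕ) :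
    ∃ σ : Type, Finite σ ∧ ∀ c : Set σ → r, ∃ T : σ → Option (Fin n), Set.range some ⊆ Set.range T ∧
      ∃ g : Fin n → r, ∀ I j, IsGreatest I j → c (blockUnion T I) = g j := by
  classical
  induction n with
  | zero =>
    exact ⟨PEmpty, inferInstance, fun c ↦ ⟨PEmpty.elim, by simp, Fin.elim0, fun _ j ↦ j.elim0⟩⟩
  | succ n ih =>
    obtain ⟨σ, hσ, h⟩ := ih
    obtain ⟨ι, hι, h'⟩ := Subspace.exists_mono_in_high_dimension Prop r σ
    refine ⟨Option ι, inferInstance, fun c ↦ ?_⟩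
    obtain ⟨U, c₁, hU⟩ := h' fun w ↦ c {o | o.elim True w}
    obtain ⟨T, hT, g, hg⟩ := h fun J ↦
      c {o | o.elim False fun i ↦ (U.idxFun i).elim (fun _ ↦ False) (· ∈ J)}
    refine ⟨fun o ↦ o.elim (some (Fin.last n)) fun i ↦ (U.idxFun i).elim
      (fun b ↦ if b then some (Fin.last n) else none) (fun s ↦ (T s).map Fin.castSucc), ?_,
      Fin.snoc g c₁, fun I j ↦ ?_⟩
    · rintro _ ⟨j, rfl⟩
      induction j using Fin.lastCases with
      | last => exact ⟨none, rfl⟩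
      | cast j =>
        obtain ⟨s, hs⟩ := hT ⟨j, rfl⟩
        obtain ⟨i, hi⟩ := U.proper s
        exact ⟨some i, by simp [hi, hs]⟩
    induction j using Fin.lastCases with
    | last =>
      rintro ⟨hmem, -⟩
      rw [Fin.snoc_last, ← hU (· ∈ blockUnion T (Fin.castSucc ⁻¹' I))]
      congr 1
      ext (_ | i)
      · simpa [blockUnion] using hmem
      cases hi : U.idxFun i with
      | inl b => by_cases hb : b <;> simp [blockUnion, Subspace.coe_apply, hi, hb, hmem]
      | inr s => cases hs : T s <;> simp [blockUnion, Subspace.coe_apply, hi, hs]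
    | cast j =>
      rintro ⟨hmem, hub⟩
      have hlast : Fin.last n ∉ I := fun hl ↦ (hub hl).not_gt (Fin.castSucc_lt_last j)
      rw [Fin.snoc_castSucc, ← hg (Fin.castSucc ⁻¹' I) j
        ⟨hmem, fun i hi ↦ Fin.castSucc_le_castSucc_iff.1 (hub hi)⟩]
      congr 1
      ext (_ | i)
      · simpa [blockUnion] using hlast
      cases hi : U.idxFun i with
      | inl b => by_cases hb : b <;> simp [blockUnion, hi, hb, hlast]
      | inr s => cases hs : T s <;> simp [blockUnion, hi, hs]

/-- The finite unions theorem. -/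
theorem exists_blocks_color_eq (r ι : Type*) [Finite r] [Finite ι] :
    ∃ σ : Type, Finite σ ∧ ∀ c : Set σ → r, ∃ T : σ → Option ι, Set.range some ⊆ Set.range T ∧
      ∃ col, ∀ I, I.Nonempty → c (blockUnion T I) = col := by
  classical
  cases nonempty_fintype r
  cases nonempty_fintype ι
  obtain ⟨σ, hσ, h⟩ := exists_blocks_color_eq_of_isGreatest r (Fintype.card r * Fintype.card ι)
  refine ⟨σ, hσ, fun c ↦ ?_⟩
  have : Nonempty r := ⟨c ∅⟩
  obtain ⟨T, hT, g, hg⟩ := h c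
  obtain ⟨col, hcol⟩ := Fintype.exists_le_card_fiber_of_mul_le_card g
    (n := Fintype.card ι) (by simp)
  rw [← Fintype.card_subtype] at hcol
  obtain ⟨e⟩ := Embedding.nonempty_of_card_le hcol
  set d : ι → Fin (Fintype.card r * Fintype.card ι) := fun j ↦ (e j).1
  have hd : Injective d := Subtype.val_injective.comp e.injective
  have hpartial : ∀ j i, partialInv d i = some j ↔ d j = i := hd.isPartialInv
  refine ⟨fun s ↦ (T s).bind (partialInv d), ?_, col, fun I hI ↦ ?_⟩
  · rintro _ ⟨j, rfl⟩
    obtain ⟨s, hs⟩ := hT ⟨d j, rfl⟩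
    exact ⟨s, by simp [hs, hpartial]⟩
  · have hunion : blockUnion (fun s ↦ (T s).bind (partialInv d)) I = blockUnion T (d '' I) := by
      ext s
      simp only [blockUnion, Option.bind_eq_some_iff, hpartial, Set.mem_ofPred_eq,
        Set.exists_mem_image]
      grind
    obtain ⟨j, hj, hmax⟩ := I.exists_max_image d I.toFinite hI
    rw [hunion, hg (d '' I) (d j) ⟨⟨j, hj, rfl⟩, Set.forall_mem_image.2 hmax⟩]
    exact (e j).2

theorem exists_subspace_color_eq_of_wildcard (β : Type*) [Finite β] [Nonempty β] (r : Type*)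
    [Finite r] (ι : Type) [Finite ι] :
    ∃ μ : Type, Finite μ ∧ ∀ c : (μ → Option β) → r, ∃ (V : Subspace ι β μ) (col : r),
      ∀ x : ι → Option β, (∃ j, x j = none) → c (liftOption V x) = col := by
  obtain ⟨σ, hσ, hunion⟩ := exists_blocks_color_eq r ι
  obtain ⟨μ, hμ, hfactor⟩ := exists_subspace_color_eq_of_wildcards (β := β) σ r
  refine ⟨μ, hμ, fun c ↦ ?_⟩
  obtain ⟨V, χ, hV⟩ := hfactor c
  obtain ⟨T, hT, col, hcol⟩ := hunion χ
  let W : Subspace ι β σ :=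
    ⟨fun s ↦ (T s).elim (Sum.inl (Classical.arbitrary β)) Sum.inr, fun e ↦
      (hT ⟨e, rfl⟩).imp fun s hs ↦ by simp [hs]⟩
  refine ⟨subspaceComp V W, col, fun x hx ↦ ?_⟩
  rw [liftOption_comp, hV, ← hcol {j | x j = none} hx]
  congr 1
  ext s
  cases hs : T s <;> simp [Subspace.coe_apply, liftOption, blockUnion, W, hs]

end GrahamRothschild

section Insensitive

open Combinatorics

variable {β ι κ : Type*} {b : β}

/-- Membership in `D` is not affected by exchanging letters `none` and `some b`. -/
def Insensitive (b : β) (D : Set (ι → Option β)) : Prop :=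
  ∀ x y, substitute x b = substitute y b → x ∈ D → y ∈ D

theorem Insensitive.mem_iff {D : Set (ι → Option β)} (h : Insensitive b D) {x y : ι → Option β}
    (hxy : substitute x b = substitute y b) : x ∈ D ↔ y ∈ D :=
  ⟨h x y hxy, h y x hxy.symm⟩

theorem insensitive_univ : Insensitive b (Set.univ : Set (ι → Option β)) :=
  fun _ _ _ ↦ id

theorem Insensitive.compl {D : Set (ι → Option β)} (h : Insensitive b D) : Insensitive b Dᶜ :=
  fun _ _ hxy ↦ (h.mem_iff hxy).not.1

theorem substitute_sumElim (x : ι → Option β) (y : κ → Option β) (b : β) :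
    substitute (Sum.elim x y) b = Sum.elim (substitute x b) (substitute y b) := by
  ext (i | i) <;> rfl

theorem substitute_subspace_congr (W : Subspace κ (Option β) ι) {x y : κ → Option β}
    (h : substitute x b = substitute y b) : substitute (W x) b = substitute (W y) b := by
  ext i
  cases hi : W.idxFun i with
  | inl a => simp [substitute, Subspace.coe_apply, hi]
  | inr j => simpa [substitute, Subspace.coe_apply, hi] using congrFun h j

theorem Insensitive.comap {D : Set (ι → Option β)} (h : Insensitive b D)
    (W : Subspace κ (Option β) ι) : Insensitive b {x | W x ∈ D} :=
  fun _ _ hxy ↦ h _ _ (substitute_subspace_congr W hxy)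

theorem density_exists_forall_eq_none_le [Finite β] [Nonempty β] [Finite ι] (t : ℕ) :
    density {u : ι × Fin t → Option β | ∃ i, ∀ k, u (i, k) = none} ≤
      Nat.card ι * (1 / 2) ^ t := by
  classical
  cases nonempty_fintype ι
  have hnone : density ({none} : Set (Option β)) ≤ 1 / 2 := by
    rw [density_singleton, Finite.card_option]
    have : (1 : ℝ) ≤ Nat.card β := Nat.one_le_cast.2 Nat.card_pos
    push_cast
    exact one_div_le_one_div_of_le two_pos (by linarith)
  have hblock (i : ι) : density {u : ι × Fin t → Option β | ∀ k, u (i, k) = none} ≤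
      (1 / 2) ^ t := by
    have heq : {u : ι × Fin t → Option β | ∀ k, u (i, k) = none} =
        {u | ∀ j ∈ ({i} : Finset ι) ×ˢ (Finset.univ : Finset (Fin t)),
          u j ∈ ({none} : Set (Option β))} := by
      ext u
      simp
    rw [heq, density_setOf_forall_mem, Finset.prod_const, Finset.card_product,
      Finset.card_singleton, one_mul, Finset.card_univ, Fintype.card_fin]
    exact pow_le_pow_left₀ (density_nonneg _) hnone t
  rw [Set.ofPred_exists]
  refine (density_le_sum_of_subset_biUnion (s := Finset.univ) (by simp)).trans
    ((Finset.sum_le_sum fun i _ ↦ hblock i).trans_eq ?_)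
  rw [Finset.sum_const, Finset.card_univ, nsmul_eq_mul, Nat.card_eq_fintype_card]

/-- The word obtained from `u` by overwriting, in each block `j`, the letter at position `s j` by
`v j`, unless that letter is `none`. -/
def overwrite {t : ℕ} (s : ι → Fin t) (u : ι × Fin t → Option β) (v : ι → β) :
    ι × Fin t → Option β :=
  fun i ↦ if i.2 = s i.1 then (u i).map fun _ ↦ v i.1 else u i

theorem overwrite_eq_none_iff {t : ℕ} (s : ι → Fin t) (u : ι × Fin t → Option β) (v : ι → β)
    (i : ι × Fin t) : overwrite s u v i = none ↔ u i = none := by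
  unfold overwrite
  split_ifs <;> simp

/-- The positions `s` to be overwritten may depend on the set of letters `none` of the word: it is
unchanged by the overwriting, so that exchanging the overwritten letters with `v` is an
involution. -/
theorem mean_overwrite [Finite β] [Nonempty β] [Finite ι] {t : ℕ}
    (s : Set (ι × Fin t) → ι → Fin t) (f : (ι × Fin t → Option β) → ℝ) :
    mean f = mean fun u ↦ mean fun v ↦ f (overwrite (s {i | u i = none}) u v) := by
  set e : (ι × Fin t → Option β) × (ι → β) → (ι × Fin t → Option β) × (ι → β) := fun z ↦
    (overwrite (s {i | z.1 i = none}) z.1 z.2,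
      fun j ↦ (z.1 (j, s {i | z.1 i = none} j)).getD (z.2 j)) with he
  refine mean_fst_of_involutive (e := e) (fun z ↦ ?_) f
  simp only [he, overwrite_eq_none_iff]
  refine Prod.ext (funext fun ⟨j, k⟩ ↦ ?_) (funext fun j ↦ ?_)
  · by_cases hk : k = s {i | z.1 i = none} j
    · subst hk
      cases hz : z.1 (j, s {i | z.1 i = none} j) <;> simp [overwrite, hz]
    · simp [overwrite, hk]
  · cases hz : z.1 (j, s {i | z.1 i = none} j) <;> simp [overwrite, hz]

/-- The subspace of words `overwrite s u v`, where `v` runs through a subspace `V`. -/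
def overwriteSubspace {t : ℕ} (s : ι → Fin t) (u : ι × Fin t → Option β) (V : Subspace κ β ι) :
    Subspace κ (Option β) (ι × Fin t) where
  idxFun i := if i.2 = s i.1 then (liftOption V).idxFun i.1 else Sum.inl (u i)
  proper e := by
    obtain ⟨j, hj⟩ := (liftOption V).proper e
    exact ⟨(j, s j), by simp [hj]⟩

theorem substitute_overwriteSubspace {t : ℕ} (s : ι → Fin t) {u : ι × Fin t → Option β}
    (hu : ∀ j, u (j, s j) ≠ none) (V : Subspace κ β ι) (x : κ → Option β) :
    substitute (overwriteSubspace s u V x) b =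
      substitute (overwrite s u (V (substitute x b))) b := by
  ext ⟨j, k⟩
  by_cases hk : k = s j
  · obtain ⟨a, ha⟩ := Option.ne_none_iff_exists'.1 (hu j)
    rw [← substitute_liftOption]
    simp [overwrite, overwriteSubspace, substitute, Subspace.coe_apply, hk, ha]
  · simp [overwrite, overwriteSubspace, substitute, Subspace.coe_apply, hk]

theorem DensityHalesJewett.exists_subspace_of_insensitive {β : Type*} [Finite β]
    (hβ : DensityHalesJewett β) (κ : Type) [Finite κ] (b : β) {η : ℝ} (hη : 0 < η) :
    ∃ μ : Type, Finite μ ∧ ∀ E : Set (μ → Option β), Insensitive b E → η ≤ density E →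
      ∃ W : Subspace κ (Option β) μ, ∀ x, W x ∈ E := by
  have : Nonempty β := ⟨b⟩
  obtain ⟨N, hN, hN_subspace⟩ := hβ.exists_subspace κ (half_pos hη)
  obtain ⟨t, ht⟩ : ∃ t : ℕ, Nat.card N * (1 / 2 : ℝ) ^ (t + 1) < η / 2 := by
    obtain ⟨t, ht⟩ := exists_pow_lt_of_lt_one (x := η / (Nat.card N + 1)) (by positivity)
      (by norm_num : (1 / 2 : ℝ) < 1)
    refine ⟨t, ?_⟩
    rw [lt_div_iff₀ (by positivity)] at ht
    rw [pow_succ]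
    have : (0 : ℝ) < (1 / 2) ^ t := by positivity
    linarith
  refine ⟨N × Fin (t + 1), inferInstance, fun E hE hdense ↦ ?_⟩
  have hsel (S : Set (N × Fin (t + 1))) (j : N) : ∃ k, (∃ k', (j, k') ∉ S) → (j, k) ∉ S := by
    by_cases h : ∃ k', (j, k') ∉ S
    exacts [h.imp fun _ hk _ ↦ hk, ⟨0, fun h' ↦ (h h').elim⟩]
  choose s hs using hsel
  set bad : Set (N × Fin (t + 1) → Option β) := {u | ∃ j, ∀ k, u (j, k) = none}
  have hbad : density bad < η / 2 := (density_exists_forall_eq_none_le _).trans_lt ht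
  rw [density, mean_overwrite s] at hdense
  set F : (N × Fin (t + 1) → Option β) → Set (N → β) :=
    fun u ↦ {v | overwrite (s {i | u i = none}) u v ∈ E}
  have hmean : η ≤ mean fun u ↦ density (F u) := hdense
  obtain ⟨u, hu⟩ := exists_le_of_le_mean (c := η / 2)
    (f := fun u ↦ density (F u) - bad.indicator 1 u) (by
      rw [mean_sub]
      exact le_sub_iff_add_le.2 (by linarith [show mean (bad.indicator 1) < η / 2 from hbad]))
  have hgood : u ∉ bad := fun hmem ↦ by
    rw [Set.indicator_of_mem hmem, Pi.one_apply] at hu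
    linarith [density_le_one (F u)]
  rw [Set.indicator_of_notMem hgood, sub_zero] at hu
  obtain ⟨V, hV⟩ := hN_subspace _ hu
  refine ⟨overwriteSubspace (s {i | u i = none}) u V, fun x ↦
    (hE.mem_iff (substitute_overwriteSubspace _ (fun j ↦ ?_) V x)).2 (hV _)⟩
  exact hs {i | u i = none} j (not_forall.1 (not_exists.1 hgood j))

end Insensitive

section SubspaceMixture

open Combinatorics

variable {α β ι μ κ : Type*} {b : β}

/-- The uniform measure on `R` is a nonnegative combination of the uniform measures on
`κ`-dimensional subspaces. The condition is stated in dual form, so that no weights have to be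
carried along. -/
def IsSubspaceMixture (κ : Type*) (R : Set (ι → α)) : Prop :=
  ∀ f : (ι → α) → ℝ, (∀ W : Subspace κ α ι, mean (fun x ↦ f (W x)) ≤ 0) → mean (R.indicator f) ≤ 0

theorem isSubspaceMixture_empty : IsSubspaceMixture κ (∅ : Set (ι → α)) :=
  fun f _ ↦ by simp [mean]

theorem isSubspaceMixture_range [Nonempty α] [Finite α] [Finite κ] (W : Subspace κ α ι) :
    IsSubspaceMixture κ (Set.range W) := fun f hf ↦ by
  rw [mean_indicator_range (coe_subspace_injective W)]
  exact mul_nonpos_of_nonneg_of_nonpos (by positivity) (hf W)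

section Finite

variable [Finite α] [Finite ι] [Finite μ]

theorem IsSubspaceMixture.union {R S : Set (ι → α)} (hR : IsSubspaceMixture κ R)
    (hS : IsSubspaceMixture κ S) (h : Disjoint R S) : IsSubspaceMixture κ (R ∪ S) := fun f hf ↦ by
  rw [Set.indicator_union_of_disjoint h, mean_add]
  exact add_nonpos (hR f hf) (hS f hf)

theorem IsSubspaceMixture.of_slices_left [Nonempty α] {R : Set (μ ⊕ ι → α)}
    (hR : ∀ y : ι → α, IsSubspaceMixture κ {z | Sum.elim z y ∈ R}) : IsSubspaceMixture κ R :=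
  fun f hf ↦ by
    rw [mean_sumElim, mean_comm]
    refine mean_le fun y ↦ hR y (fun z ↦ f (Sum.elim z y)) fun W ↦ ?_
    simpa only [appendRight_apply] using hf (appendRight W y)

theorem IsSubspaceMixture.of_slices_right [Nonempty α] {R : Set (μ ⊕ ι → α)}
    (hR : ∀ z : μ → α, IsSubspaceMixture κ {y | Sum.elim z y ∈ R}) : IsSubspaceMixture κ R :=
  fun f hf ↦ by
    rw [mean_sumElim]
    refine mean_le fun z ↦ hR z (fun y ↦ f (Sum.elim z y)) fun W ↦ ?_
    simpa only [appendLeft_apply] using hf (appendLeft z W)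

theorem density_eq_mean_slice_right (A : Set (μ ⊕ ι → α)) :
    density A = mean fun z ↦ density {y | Sum.elim z y ∈ A} :=
  mean_sumElim _

theorem density_eq_mean_slice_left (A : Set (μ ⊕ ι → α)) :
    density A = mean fun y ↦ density {z | Sum.elim z y ∈ A} :=
  (density_eq_mean_slice_right A).trans (mean_comm _)

end Finite

theorem Insensitive.slice_right {E : Set (μ ⊕ ι → Option β)} (hE : Insensitive b E)
    (z : μ → Option β) : Insensitive b {y | Sum.elim z y ∈ E} := fun x y hxy ↦
  hE _ _ (by rw [substitute_sumElim, substitute_sumElim, hxy])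

theorem Insensitive.slice_left {E : Set (μ ⊕ ι → Option β)} (hE : Insensitive b E)
    (y : ι → Option β) : Insensitive b {z | Sum.elim z y ∈ E} := fun z z' hz ↦
  hE _ _ (by rw [substitute_sumElim, substitute_sumElim, hz])

theorem Insensitive.slice_left_congr {E : Set (μ ⊕ ι → Option β)} (hE : Insensitive b E)
    {y y' : ι → Option β} (h : substitute y b = substitute y' b) :
    {z | Sum.elim z y ∈ E} = {z | Sum.elim z y' ∈ E} :=
  Set.ext fun z ↦ hE.mem_iff (by rw [substitute_sumElim, substitute_sumElim, h])

theorem DensityHalesJewett.exists_isSubspaceMixture [Finite β] (hβ : DensityHalesJewett β)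
    (κ : Type) [Finite κ] (b : β) {η : ℝ} (hη : 0 < η) :
    ∃ μ : Type, Finite μ ∧ ∀ E : Set (μ → Option β), ∃ R ⊆ E, IsSubspaceMixture κ R ∧
      (Insensitive b E → η ≤ density E → R.Nonempty) := by
  obtain ⟨μ, hμ, h⟩ := hβ.exists_subspace_of_insensitive κ b hη
  refine ⟨μ, hμ, fun E ↦ ?_⟩
  by_cases hE : Insensitive b E ∧ η ≤ density E
  · obtain ⟨W, hW⟩ := h E hE.1 hE.2
    exact ⟨Set.range W, Set.range_subset_iff.2 hW, isSubspaceMixture_range W,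
      fun _ _ ↦ Set.range_nonempty _⟩
  · exact ⟨∅, Set.empty_subset E, isSubspaceMixture_empty, fun h₁ h₂ ↦ (hE ⟨h₁, h₂⟩).elim⟩

theorem density_le_of_slices_nonempty [Finite α] [Nonempty α] [Finite ι] [Finite μ]
    {E S : Set (μ ⊕ ι → α)} {η : ℝ} (hη : 0 ≤ η) (hE : 2 * η ≤ density E)
    (hS : ∀ y, η ≤ density {z | Sum.elim z y ∈ E} → ∃ z, Sum.elim z y ∈ S) :
    η / Nat.card (μ → α) ≤ density S := by
  have hpopular : η ≤ density {y : ι → α | η ≤ density {z | Sum.elim z y ∈ E}} :=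
    le_density_setOf_le (fun _ ↦ density_le_one _) hη
      (by rwa [← two_mul, ← density_eq_mean_slice_left])
  rw [div_eq_inv_mul, density_eq_mean_slice_left S]
  refine (mul_le_mul_of_nonneg_left hpopular (by positivity)).trans ?_
  rw [density, ← mean_mul_left]
  refine mean_mono fun y ↦ ?_
  by_cases hy : η ≤ density {z | Sum.elim z y ∈ E}
  · have hcard : (1 : ℝ) ≤ ({z | Sum.elim z y ∈ S}.ncard : ℝ) :=
      Nat.one_le_cast.2 ((Set.ncard_pos).2 (hS y hy))
    rw [Set.indicator_of_mem (Set.mem_ofPred_eq ▸ hy), Pi.one_apply, mul_one,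
      density_eq_ncard_div, inv_eq_one_div]
    gcongr
  · rw [Set.indicator_of_notMem (Set.mem_ofPred_eq ▸ hy), mul_zero]
    exact density_nonneg _

theorem density_sdiff_le_one_sub_mul [Finite α] [Nonempty α] {E S : Set α} {q : ℝ} (hSE : S ⊆ E)
    (hq : 0 ≤ q) (hS : q ≤ density S) : density (E \ S) ≤ (1 - q) * density E := by
  have hsum := density_sdiff_add_density_inter E S
  rw [Set.inter_eq_self_of_subset_right hSE] at hsum
  linarith [mul_le_of_le_one_right hq (density_le_one E)]

/-- One round of the exhaustion: mixtures are removed from the slices of `E` in the first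
coordinates, and the remainder `E₁` is treated in the other coordinates. The slices of `E₁` there
are still insensitive because the removed mixtures only depend on the slices of `E`, which do not
notice the exchange of letters. -/
theorem exists_isSubspaceMixture_sum [Finite β] [Finite ι] [Finite μ] {η c : ℝ} (hη : 0 ≤ η)
    (hc : 0 ≤ c)
    (hμ : ∀ E : Set (μ → Option β), ∃ R ⊆ E, IsSubspaceMixture κ R ∧
      (Insensitive b E → η ≤ density E → R.Nonempty))
    (hι : ∀ E : Set (ι → Option β), Insensitive b E →
      ∃ R ⊆ E, IsSubspaceMixture κ R ∧ density (E \ R) ≤ c * density E + 2 * η)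
    {E : Set (μ ⊕ ι → Option β)} (hE : Insensitive b E) (hlarge : 2 * η ≤ density E) :
    ∃ R ⊆ E, IsSubspaceMixture κ R ∧
      density (E \ R) ≤ c * ((1 - η / Nat.card (μ → Option β)) * density E) + 2 * η := by
  choose R hRE hRmix hRne using hμ
  set R₁ : Set (μ ⊕ ι → Option β) := {x | x ∘ Sum.inl ∈ R {z | Sum.elim z (x ∘ Sum.inr) ∈ E}}
  have hR₁E : R₁ ⊆ E := fun x hx ↦ Sum.elim_comp_inl_inr x ▸ hRE _ hx
  have hE₁ (z : μ → Option β) : Insensitive b {y | Sum.elim z y ∈ E \ R₁} :=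
    fun y y' hy ⟨hyE, hyR⟩ ↦ ⟨hE.slice_right z _ _ hy hyE, fun hz ↦ hyR <| by
      change z ∈ R {z | Sum.elim z y ∈ E}
      rwa [hE.slice_left_congr hy]⟩
  have hdensity : density (E \ R₁) ≤ (1 - η / Nat.card (μ → Option β)) * density E :=
    density_sdiff_le_one_sub_mul hR₁E (by positivity) <| density_le_of_slices_nonempty hη hlarge
      fun y hy ↦ hRne _ (hE.slice_left y) hy
  choose R' hRE' hRmix' hdensity' using fun z ↦ hι _ (hE₁ z)
  set R₂ : Set (μ ⊕ ι → Option β) := {x | x ∘ Sum.inr ∈ R' (x ∘ Sum.inl)}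
  have hR₂E : R₂ ⊆ E \ R₁ := fun x hx ↦ Sum.elim_comp_inl_inr x ▸ hRE' _ hx
  refine ⟨R₁ ∪ R₂, Set.union_subset hR₁E (hR₂E.trans Set.sdiff_subset),
    IsSubspaceMixture.union (.of_slices_left fun y ↦ hRmix {z | Sum.elim z y ∈ E})
      (.of_slices_right hRmix') (Set.disjoint_left.2 fun x hx₁ hx₂ ↦ (hR₂E hx₂).2 hx₁), ?_⟩
  calc density (E \ (R₁ ∪ R₂)) = mean fun z ↦ density ({y | Sum.elim z y ∈ E \ R₁} \ R' z) := by
        rw [← Set.sdiff_sdiff]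
        exact density_eq_mean_slice_right _
    _ ≤ mean fun z ↦ c * density {y | Sum.elim z y ∈ E \ R₁} + 2 * η := mean_mono hdensity'
    _ = c * density (E \ R₁) + 2 * η := by
        rw [mean_add, mean_mul_left, mean_const, ← density_eq_mean_slice_right]
    _ ≤ _ := by gcongr

theorem DensityHalesJewett.exists_isSubspaceMixture_pow [Finite β] (hβ : DensityHalesJewett β)
    (κ : Type) [Finite κ] (b : β) {η : ℝ} (hη : 0 < η) (hη₁ : η ≤ 1) :
    ∃ r : ℝ, 0 ≤ r ∧ r < 1 ∧ ∀ t : ℕ, ∃ ι : Type, Finite ι ∧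
      ∀ E : Set (ι → Option β), Insensitive b E → ∃ R ⊆ E, IsSubspaceMixture κ R ∧
        density (E \ R) ≤ r ^ t * density E + 2 * η := by
  obtain ⟨μ, hμ, hR⟩ := hβ.exists_isSubspaceMixture κ b hη
  have hcard : (1 : ℝ) ≤ Nat.card (μ → Option β) := Nat.one_le_cast.2 Nat.card_pos
  have hr : 0 ≤ 1 - η / Nat.card (μ → Option β) :=
    sub_nonneg.2 (div_le_one_of_le₀ (hη₁.trans hcard) (by positivity))
  refine ⟨1 - η / Nat.card (μ → Option β), hr, sub_lt_self 1 (by positivity), fun t ↦ ?_⟩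
  induction t with
  | zero =>
    refine ⟨PEmpty, inferInstance, fun E _ ↦ ⟨∅, E.empty_subset, isSubspaceMixture_empty, ?_⟩⟩
    rw [Set.sdiff_empty]
    linarith
  | succ t ih =>
    obtain ⟨ι, hι, h⟩ := ih
    refine ⟨μ ⊕ ι, inferInstance, fun E hE ↦ ?_⟩
    rcases le_total (2 * η) (density E) with hlarge | hsmall
    · simp only [pow_succ, mul_assoc]
      exact exists_isSubspaceMixture_sum hη.le (pow_nonneg hr t) hR h hE hlarge
    · refine ⟨∅, E.empty_subset, isSubspaceMixture_empty, ?_⟩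
      rw [Set.sdiff_empty]
      exact hsmall.trans (le_add_of_nonneg_left (mul_nonneg (pow_nonneg hr _) (density_nonneg E)))

theorem DensityHalesJewett.exists_isSubspaceMixture_sdiff_le [Finite β]
    (hβ : DensityHalesJewett β) (κ : Type) [Finite κ] (b : β) {η : ℝ} (hη : 0 < η) :
    ∃ ι : Type, Finite ι ∧ ∀ E : Set (ι → Option β), Insensitive b E →
      ∃ R ⊆ E, IsSubspaceMixture κ R ∧ density (E \ R) ≤ η := by
  have hmin : 0 < min (η / 3) 1 := by positivity
  obtain ⟨r, hr₀, hr₁, h⟩ := hβ.exists_isSubspaceMixture_pow κ b hmin (min_le_right _ _)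
  obtain ⟨t, ht⟩ := exists_pow_lt_of_lt_one (x := η / 3) (by positivity) hr₁
  obtain ⟨ι, hι, h⟩ := h t
  refine ⟨ι, hι, fun E hE ↦ ?_⟩
  obtain ⟨R, hRE, hmix, hR⟩ := h E hE
  refine ⟨R, hRE, hmix, hR.trans ?_⟩
  linarith [mul_le_of_le_one_right (pow_nonneg hr₀ t) (density_le_one E), min_le_left (η / 3) 1]

theorem IsSubspaceMixture.mean_indicator_le [Finite α] [Nonempty α] [Finite ι] [Finite κ]
    {R : Set (ι → α)} (hR : IsSubspaceMixture κ R) {f : (ι → α) → ℝ} {τ : ℝ} (hτ : 0 ≤ τ)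
    (hf : ∀ W : Subspace κ α ι, mean (fun x ↦ f (W x)) ≤ τ) : mean (R.indicator f) ≤ τ := by
  have hcentered := hR (fun x ↦ f x - τ) fun W ↦ by
    rw [mean_sub, mean_const]
    exact sub_nonpos.2 (hf W)
  have hsplit : R.indicator (fun x ↦ f x - τ) = fun x ↦ R.indicator f x - τ * R.indicator 1 x := by
    ext x
    by_cases hx : x ∈ R <;> simp [hx]
  rw [hsplit, mean_sub, mean_mul_left] at hcentered
  have hle : τ * mean (R.indicator 1) ≤ τ := mul_le_of_le_one_right hτ (density_le_one R)
  linarith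

theorem DensityHalesJewett.exists_mean_indicator_le [Finite β] (hβ : DensityHalesJewett β)
    (κ : Type) [Finite κ] (b : β) {η : ℝ} (hη : 0 < η) :
    ∃ ι : Type, Finite ι ∧ ∀ (f : (ι → Option β) → ℝ) (τ : ℝ), 0 ≤ τ → (∀ x, f x ≤ 1) →
      (∀ W : Subspace κ (Option β) ι, mean (fun x ↦ f (W x)) ≤ τ) →
      ∀ E, Insensitive b E → mean (E.indicator f) ≤ τ + η := by
  obtain ⟨ι, hι, h⟩ := hβ.exists_isSubspaceMixture_sdiff_le κ b hη
  refine ⟨ι, hι, fun f τ hτ hf hW E hE ↦ ?_⟩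
  obtain ⟨R, hRE, hmix, hR⟩ := h E hE
  calc mean (E.indicator f) ≤ mean fun x ↦ R.indicator f x + (E \ R).indicator 1 x :=
        mean_mono fun x ↦ by
          by_cases hx : x ∈ R
          · simp [hx, hRE hx]
          · by_cases hxE : x ∈ E <;> simp [hx, hxE, hf x]
    _ = mean (R.indicator f) + density (E \ R) := mean_add _ _
    _ ≤ τ + η := add_le_add (hmix.mean_indicator_le hτ hW) hR

theorem DensityHalesJewett.exists_mean_indicator_compl_le [Finite β] (hβ : DensityHalesJewett β)
    (κ : Type) [Finite κ] (s : Finset β) {η : ℝ} (hη : 0 < η) :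
    ∃ ι : Type, Finite ι ∧ ∀ f : (ι → Option β) → ℝ, (∀ x, f x ≤ 1) →
      (∀ W : Subspace κ (Option β) ι, mean (fun x ↦ f (W x)) ≤ 0) →
      ∀ D : β → Set (ι → Option β), (∀ b, Insensitive b (D b)) →
        mean f ≤ η ∧ mean ({x | ∀ b ∈ s, x ∈ D b}ᶜ.indicator f) ≤ η := by
  classical
  induction s using Finset.induction_on generalizing η with
  | empty =>
    refine ⟨κ, inferInstance, fun f _ hW D _ ↦ ⟨?_, ?_⟩⟩
    · have hid : mean f ≤ 0 := hW default
      exact hid.trans hη.le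
    · simpa [mean] using hη.le
  | insert b s _ ih =>
    obtain ⟨ι₁, hι₁, h₁⟩ := ih (η := η / 4) (by positivity)
    obtain ⟨ι, hι, h⟩ := hβ.exists_mean_indicator_le ι₁ b (η := η / 4) (by positivity)
    refine ⟨ι, hι, fun f hf hW D hD ↦ ?_⟩
    have hsub (W : Subspace ι₁ (Option β) ι) := h₁ (fun x ↦ f (W x)) (fun x ↦ hf _)
      (fun W' ↦ by simpa only [subspaceComp_apply] using hW (subspaceComp W W'))
      (fun b ↦ {x | W x ∈ D b}) (fun b ↦ (hD b).comap W)
    have hglobal := h f (η / 4) (by positivity) hf fun W ↦ (hsub W).1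
    have hlocal := h ({x | ∀ b ∈ s, x ∈ D b}ᶜ.indicator f) (η / 4) (by positivity)
      (fun x ↦ Set.indicator_apply_le' (fun _ ↦ hf x) fun _ ↦ zero_le_one)
      (fun W ↦ (hsub W).2) (D b) (hD b)
    have huniv := hglobal Set.univ insensitive_univ
    rw [Set.indicator_univ] at huniv
    have hsplit (x : ι → Option β) : {x | ∀ b' ∈ insert b s, x ∈ D b'}ᶜ.indicator f x =
        (D b)ᶜ.indicator f x + (D b).indicator ({x | ∀ b ∈ s, x ∈ D b}ᶜ.indicator f) x := by
      by_cases hx : x ∈ D b <;> simp [hx, Set.indicator_apply]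
    refine ⟨by linarith, ?_⟩
    rw [funext hsplit, mean_add]
    linarith [hglobal (D b)ᶜ (hD b).compl]

end SubspaceMixture

section DensityHalesJewett

open Combinatorics

universe u v

variable {β : Type v}

/-- `δ` is the infimum of the densities that force a combinatorial line in some finite dimension. -/
structure IsCriticalDensity (α : Type*) (δ : ℝ) : Prop where
  exists_forcesLine : ∀ d, δ < d → ∃ ι : Type, Finite ι ∧ ForcesLine α ι d
  not_forcesLine : ∀ d, d < δ → ∀ ι : Type, Finite ι → ¬ ForcesLine α ι d

theorem exists_isCriticalDensity {α : Type*} [Finite α] [Nonempty α]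
    (hα : ¬ DensityHalesJewett α) : ∃ δ : ℝ, 0 < δ ∧ IsCriticalDensity α δ := by
  set S : Set ℝ := {d | ∀ ι : Type, Finite ι → ¬ ForcesLine α ι d}
  obtain ⟨δ₀, hδ₀, hS⟩ : ∃ δ₀ : ℝ, 0 < δ₀ ∧ δ₀ ∈ S := by
    simpa [DensityHalesJewett, S] using hα
  have hbdd : BddAbove S := by
    refine ⟨1, fun d hd ↦ ?_⟩
    by_contra! hd₁
    exact hd PEmpty inferInstance fun A hA ↦ (hd₁.not_ge (hA.trans (density_le_one A))).elim
  refine ⟨sSup S, hδ₀.trans_le (le_csSup hbdd hS), fun d hd ↦ ?_, fun d hd ι hι hforces ↦ ?_⟩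
  · have hdS : d ∉ S := fun h ↦ hd.not_ge (le_csSup hbdd h)
    simpa [S] using hdS
  · obtain ⟨s, hs, hds⟩ := exists_lt_of_lt_csSup ⟨δ₀, hS⟩ hd
    exact hs ι hι (hforces.mono hds.le)

theorem DensityHalesJewett.exists_subspace_le_density_substitute [Finite β] [Nonempty β]
    (hβ : DensityHalesJewett β) {δ : ℝ} (hδ : 0 < δ) :
    ∃ θ : ℝ, 0 < θ ∧ ∀ ι : Type, Finite ι → ∃ μ : Type, Finite μ ∧
      ∀ {Y : Type u} [Finite Y] [Nonempty Y] (G : (μ → Option β) → Set Y),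
        (∀ w, δ ≤ density (G w)) → ∃ V : Subspace ι β μ, ∀ x : ι → Option β, (∃ i, x i = none) →
          θ ≤ density {y | ∀ b, y ∈ G (some ∘ V (substitute x b))} := by
  obtain ⟨b₀⟩ := ‹Nonempty β›
  obtain ⟨ι₀, hι₀, hline⟩ := hβ (δ / 2) (half_pos hδ)
  refine ⟨δ / 2 / (Nat.card (Line β ι₀) + 1), by positivity, fun ι hι ↦ ?_⟩
  obtain ⟨μ, hμ, hcolor⟩ := exists_subspace_color_eq_of_wildcard β Prop (ι ⊕ ι₀)
  refine ⟨μ, hμ, fun {Y} _ _ G hG ↦ ?_⟩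
  obtain ⟨V, col, hV⟩ := hcolor fun w ↦ δ / 2 / (Nat.card (Line β ι₀) + 1) ≤
    density {y | ∀ b, y ∈ G (some ∘ substitute w b)}
  simp only [substitute_liftOption] at hV
  have hcol : col := by
    obtain ⟨l, hl⟩ := hline.exists_line_le_density (half_pos hδ)
      (fun u ↦ G (some ∘ V (Sum.elim (fun _ ↦ b₀) u)))
      (by rw [mul_div_cancel₀ _ two_ne_zero]; exact le_mean fun u ↦ hG _)
    rw [← hV (Sum.elim (fun _ ↦ some b₀) l.idxFun) (l.proper.imp' Sum.inr fun _ ↦ id)]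
    simp only [substitute_sumElim]
    exact hl
  refine ⟨subspaceComp V (appendRight default fun _ ↦ b₀), fun x hx ↦ ?_⟩
  have hgood := (hV (Sum.elim x fun _ ↦ some b₀) (hx.imp' Sum.inl fun _ ↦ id)).mpr hcol
  simp only [substitute_sumElim] at hgood
  simp only [subspaceComp_apply, appendRight_apply]
  exact hgood

theorem density_forall_ne_none_le [Finite β] {ι : Type*} [Finite ι] (t : ℕ) :
    density {x : ι ⊕ Fin t → Option β | ∀ i, x i ≠ none} ≤
      (1 - 1 / Nat.card (Option β)) ^ t := by
  rw [density_eq_mean_slice_right]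
  refine mean_le fun z ↦ ?_
  calc density {y : Fin t → Option β | ∀ i, (Sum.elim z y : ι ⊕ Fin t → Option β) i ≠ none}
    _ ≤ density {y | ∀ i ∈ (Finset.univ : Finset (Fin t)), y i ∈ ({none}ᶜ : Set (Option β))} :=
        density_mono fun y hy i _ ↦ hy (Sum.inr i)
    _ = (1 - 1 / Nat.card (Option β)) ^ t := by
        rw [density_setOf_forall_mem, Finset.prod_const, Finset.card_univ, Fintype.card_fin,
          density_compl, density_singleton]

theorem Insensitive.setOf_substitute {ι : Type*} (b : β) (A : Set (ι → Option β)) :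
    Insensitive b {x | some ∘ substitute x b ∈ A} := fun x y hxy hx ↦ by
  rwa [Set.mem_ofPred_eq, ← hxy]

theorem ForcesLine.exists_mean_indicator_compl_le [Finite β] (hβ : DensityHalesJewett β)
    {κ : Type} [Finite κ] {d m : ℝ} (hκ : ForcesLine (Option β) κ d) (hd : 0 ≤ d) (hm : 0 < m) :
    ∃ ι : Type, Finite ι ∧ ∀ A : Set (ι → Option β), (∀ l : Line (Option β) ι, ¬ ∀ a, l a ∈ A) →
      ∀ D : β → Set (ι → Option β), (∀ b, Insensitive b (D b)) →
        mean ({x | ∀ b, x ∈ D b}ᶜ.indicator fun x ↦ A.indicator 1 x - d) ≤ m := by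
  cases nonempty_fintype β
  obtain ⟨ι, hι, h⟩ := hβ.exists_mean_indicator_compl_le κ Finset.univ hm
  refine ⟨ι, hι, fun A hA D hD ↦ ?_⟩
  have hle (x : ι → Option β) : A.indicator 1 x - d ≤ 1 :=
    (sub_le_self _ hd).trans (Set.indicator_le_self' (fun _ _ ↦ zero_le_one) x)
  have hW (W : Subspace κ (Option β) ι) : mean (fun x ↦ A.indicator 1 (W x) - d) ≤ 0 := by
    rw [mean_sub, mean_const, sub_nonpos]
    by_contra! hdense
    obtain ⟨l, hl⟩ := hκ {x | W x ∈ A} hdense.le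
    exact hA (lineComp W l) fun a ↦ lineComp_apply W l a ▸ hl a
  simpa only [Finset.mem_univ, true_imp_iff] using (h _ hle hW D hD).2

/-- By line-freeness, a word of `A` with a letter `none` lies outside some set
`{x | some ∘ substitute x b ∈ A}`. Since these sets are insensitive, `A` cannot have a noticeable
density increment on the complement of their intersection. -/
theorem ForcesLine.exists_density_le_of_lineFree [Finite β] [Nonempty β]
    (hβ : DensityHalesJewett β) {κ : Type} [Finite κ] {d m : ℝ}
    (hκ : ForcesLine (Option β) κ d) (hd : 0 ≤ d) (hm : 0 < m) :
    ∃ ι : Type, Finite ι ∧ density {x : ι → Option β | ∀ i, x i ≠ none} ≤ m ∧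
      ∀ A : Set (ι → Option β), (∀ l : Line (Option β) ι, ¬ ∀ a, l a ∈ A) →
        density A ≤ d * (1 - density {x | ∀ b, some ∘ substitute x b ∈ A}) + 2 * m := by
  obtain ⟨ι, hι, h⟩ := hκ.exists_mean_indicator_compl_le hβ hd hm
  obtain ⟨t, ht⟩ := exists_pow_lt_of_lt_one hm
    (sub_lt_self 1 (one_div_pos.2 (Nat.cast_pos.2 (Nat.card_pos (α := Option β)))))
  have hsome := (density_forall_ne_none_le (β := β) (ι := ι) t).trans ht.le
  refine ⟨ι ⊕ Fin t, inferInstance, hsome, fun A hA ↦ ?_⟩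
  set P : Set (ι ⊕ Fin t → Option β) := {x | ∀ b, some ∘ substitute x b ∈ A}
  have hin : density (A ∩ P) ≤ m := by
    refine (density_mono fun x hx ↦ ?_).trans hsome
    by_contra hnone
    simp only [Set.mem_ofPred_eq, not_forall, not_not] at hnone
    refine hA (wordLine x hnone) (Option.rec ?_ fun b ↦ ?_)
    exacts [(wordLine_none x hnone).symm ▸ hx.1, (wordLine_some x hnone b).symm ▸ hx.2 b]
  have hout : mean (Pᶜ.indicator fun x ↦ A.indicator 1 x - d) ≤ m := by
    rw [mean_sumElim, mean_comm]
    refine mean_le fun z ↦ h {x | Sum.elim x z ∈ A} (fun l hl ↦ hA (l.horizontal z) fun a ↦ ?_)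
      _ fun b ↦ (Insensitive.setOf_substitute b A).slice_left z
    exact Line.horizontal_apply l z a ▸ hl a
  have hsplit : mean (Pᶜ.indicator fun x ↦ A.indicator 1 x - d) =
      density (A \ P) - d * density Pᶜ := by
    rw [density, density, ← mean_mul_left, ← mean_sub]
    exact congrArg mean <| funext fun x ↦ by
      by_cases hx : x ∈ P <;> by_cases hxA : x ∈ A <;> simp [hx, hxA]
  have hsum := density_sdiff_add_density_inter A P
  rw [← density_compl]
  linarith

theorem ForcesLine.exists_lineFree_fiber {α μ ν : Type*} [Finite α] [Nonempty α] [Finite μ]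
    [Finite ν] {c d : ℝ} (hν : ForcesLine α ν c) (hμν : ¬ ForcesLine α (μ ⊕ ν) d) :
    ∃ G : (μ → α) → Set (ν → α), (∀ y, ∀ l : Line α μ, ¬ ∀ a, y ∈ G (l a)) ∧
      ∀ w, c - Nat.card (μ → α) * (c - d) ≤ density (G w) := by
  simp only [ForcesLine, not_forall] at hμν
  obtain ⟨A, hA, hline⟩ := hμν
  refine ⟨fun w ↦ {y | Sum.elim w y ∈ A}, fun y l hl ↦ hline ⟨l.horizontal y, fun a ↦ ?_⟩,
    sub_card_mul_le_of_le_mean (fun w ↦ ?_) (hA.trans_eq (density_eq_mean_slice_right A))⟩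
  · rw [Line.horizontal_apply]
    exact hl a
  · by_contra! hdense
    obtain ⟨l, hl⟩ := hν {y | Sum.elim w y ∈ A} hdense.le
    exact hline ⟨l.vertical w, fun a ↦ Line.vertical_apply w l a ▸ hl a⟩

theorem IsCriticalDensity.exists_lineFree_family {α : Type*} [Finite α] [Nonempty α] {δ m : ℝ}
    (hδ : IsCriticalDensity α δ) (hm : 0 < m) (μ : Type) [Finite μ] :
    ∃ ν : Type, Finite ν ∧ ∃ G : (μ → α) → Set (ν → α),
      (∀ y, ∀ l : Line α μ, ¬ ∀ a, y ∈ G (l a)) ∧ ∀ w, δ - m ≤ density (G w) := by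
  have hcard : (0 : ℝ) < Nat.card (μ → α) := Nat.cast_pos.2 Nat.card_pos
  set ξ : ℝ := m / (2 * Nat.card (μ → α)) with hξ
  have hξ_pos : 0 < ξ := by positivity
  obtain ⟨ν, hν, hν_line⟩ := hδ.exists_forcesLine (δ + ξ) (by linarith)
  obtain ⟨G, hG, hfiber⟩ := hν_line.exists_lineFree_fiber
    (hδ.not_forcesLine (δ - ξ) (by linarith) (μ ⊕ ν) inferInstance)
  refine ⟨ν, hν, G, hG, fun w ↦ le_trans ?_ (hfiber w)⟩
  have hcancel : Nat.card (μ → α) * (δ + ξ - (δ - ξ)) = m := by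
    rw [hξ]
    field_simp
    ring
  linarith

theorem mean_density_liftOption_le_of_lineFree [Finite β] {ι μ Y : Type*} [Finite ι] [Finite Y]
    [Nonempty Y] {d e : ℝ}
    (h : ∀ A : Set (ι → Option β), (∀ l : Line (Option β) ι, ¬ ∀ a, l a ∈ A) →
      density A ≤ d * (1 - density {x | ∀ b, some ∘ substitute x b ∈ A}) + e)
    {G : (μ → Option β) → Set Y} (hG : ∀ y, ∀ l : Line (Option β) μ, ¬ ∀ a, y ∈ G (l a))
    (V : Subspace ι β μ) :
    (mean fun x ↦ density (G (liftOption V x))) ≤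
      d * (1 - mean fun x ↦ density {y | ∀ b, y ∈ G (some ∘ V (substitute x b))}) + e := by
  have hslice (y : Y) : density {x | y ∈ G (liftOption V x)} ≤
      d * (1 - density {x | y ∈ {y | ∀ b, y ∈ G (some ∘ V (substitute x b))}}) + e := by
    simp only [← liftOption_some]
    exact h {x | y ∈ G (liftOption V x)} fun l hl ↦
      hG y (lineComp (liftOption V) l) fun a ↦ lineComp_apply (liftOption V) l a ▸ hl a
  have hmean := mean_mono hslice
  rwa [mean_add, mean_mul_left, mean_sub, mean_const, mean_const, ← mean_density_comm,
    ← mean_density_comm] at hmean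

theorem DensityHalesJewett.option [Finite β] [Nonempty β] (hβ : DensityHalesJewett β) :
    DensityHalesJewett (Option β) := by
  by_contra hcon
  obtain ⟨δ, hδ, hcrit⟩ := exists_isCriticalDensity hcon
  obtain ⟨θ, hθ, hsubspace⟩ := hβ.exists_subspace_le_density_substitute (half_pos hδ)
  obtain ⟨m, hm, hm₂, hmδ, hmθ⟩ : ∃ m : ℝ, 0 < m ∧ m ≤ 1 / 2 ∧ m ≤ δ / 2 ∧ m ≤ δ * θ / 9 :=
    ⟨min (1 / 2) (min (δ / 2) (δ * θ / 9)), by positivity, by simp, by simp, by simp⟩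
  obtain ⟨κ, hκ, hκ_line⟩ := hcrit.exists_forcesLine (δ + m) (by linarith)
  obtain ⟨ι, hι, hsome, hlineFree⟩ := hκ_line.exists_density_le_of_lineFree hβ (by positivity) hm
  obtain ⟨μ, hμ, hV⟩ := hsubspace ι hι
  obtain ⟨ν, hν, G, hG, hdense⟩ := hcrit.exists_lineFree_family hm μ
  obtain ⟨V, hV⟩ := hV G fun w ↦ by linarith [hdense w]
  set P : ℝ := mean fun x ↦ density {y | ∀ b, y ∈ G (some ∘ V (substitute x b))}
  have hupper : δ - m ≤ (δ + m) * (1 - P) + 2 * m :=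
    (le_mean fun x ↦ hdense _).trans (mean_density_liftOption_le_of_lineFree hlineFree hG V)
  have hP : θ * (1 - m) ≤ P := by
    refine le_trans ?_ (mul_density_le_mean (A := {x | ∀ i, x i ≠ none}ᶜ) (c := θ)
      (fun x ↦ density_nonneg _) fun x hx ↦ hV x (by simpa using hx))
    rw [density_compl]
    gcongr
  have hincrement : δ * θ / 2 ≤ (δ + m) * P := calc
    δ * θ / 2 = δ * (θ * (1 / 2)) := by ring
    _ ≤ (δ + m) * (θ * (1 - m)) := by gcongr <;> linarith
    _ ≤ (δ + m) * P := by gcongr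
  linarith

theorem DensityHalesJewett.of_subsingleton {α : Type*} [Subsingleton α] : DensityHalesJewett α := by
  refine fun δ hδ ↦ ⟨Unit, inferInstance, fun A hA ↦ ⟨Line.diagonal α Unit, fun a ↦ ?_⟩⟩
  obtain ⟨x, hx⟩ := nonempty_of_density_pos (hδ.trans_le hA)
  rwa [Subsingleton.elim (Line.diagonal α Unit a) x]

theorem DensityHalesJewett.of_equiv {α α' : Type*} (e : α ≃ α') (hα : DensityHalesJewett α) :
    DensityHalesJewett α' := by
  intro δ hδ
  obtain ⟨ι, hι, h⟩ := hα δ hδ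
  refine ⟨ι, hι, fun A hA ↦ ?_⟩
  obtain ⟨l, hl⟩ := h {x | e ∘ x ∈ A}
    (hA.trans_eq (mean_equiv (Equiv.arrowCongr (Equiv.refl ι) e) (A.indicator 1)).symm)
  exact ⟨l.map e, e.forall_congr_right.1 fun b ↦ Line.map_apply e l b ▸ hl b⟩

theorem densityHalesJewett (α : Type*) [Finite α] : DensityHalesJewett α := by
  induction α using Finite.induction_empty_option with
  | of_equiv e ih => exact ih.of_equiv e
  | h_empty => exact .of_subsingleton
  | @h_option α _ ih =>
    cases isEmpty_or_nonempty α
    exacts [.of_subsingleton, ih.option]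

end DensityHalesJewett

section LineDensity

open Combinatorics

theorem mean_comp_of_surjective {G H : Type*} [AddGroup G] [AddGroup H] [Finite G] {φ : G →+ H}
    (hφ : Surjective φ) (f : H → ℝ) : mean (fun x ↦ f (φ x)) = mean f := by
  have : Finite H := Finite.of_surjective φ hφ
  have hshift (h : H) : mean (fun x ↦ f (φ x)) = mean fun x ↦ f (φ x + h) := by
    obtain ⟨g, rfl⟩ := hφ h
    simpa only [Equiv.coe_addRight, map_add] using
      (mean_equiv (Equiv.addRight g) fun x ↦ f (φ x)).symm
  calc mean (fun x ↦ f (φ x)) = mean fun h ↦ mean fun x ↦ f (φ x + h) := by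
        rw [← funext hshift, mean_const]
    _ = mean fun x ↦ mean fun h ↦ f (φ x + h) := mean_comm _
    _ = mean fun _ : G ↦ mean f :=
        congrArg mean <| funext fun x ↦ mean_equiv (Equiv.addLeft (φ x)) f
    _ = mean f := mean_const _

theorem density_preimage_of_surjective {G H : Type*} [AddGroup G] [AddGroup H] [Finite G]
    {φ : G →+ H} (hφ : Surjective φ) (B : Set H) : density {x | φ x ∈ B} = density B :=
  mean_comp_of_surjective hφ (B.indicator 1)

theorem mean_le_mean_ne_add {X : Type*} [Finite X] {f : X → ℝ} (hf : ∀ x, 0 ≤ f x)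
    (hf₁ : ∀ x, f x ≤ 1) (a : X) :
    mean f ≤ (mean fun x : {x // x ≠ a} ↦ f x) + 1 / Nat.card X := by
  have hpoint (x : X) : f x ≤ (Set.range ((↑) : {x // x ≠ a} → X)).indicator f x +
      ({a} : Set X).indicator 1 x := by
    rw [Subtype.range_coe_subtype]
    by_cases hx : x = a <;> simp [hx, hf₁]
  have hcard : (Nat.card {x // x ≠ a} / Nat.card X : ℝ) ≤ 1 :=
    div_le_one_of_le₀ (Nat.cast_le.2 (Finite.card_subtype_le _)) (Nat.cast_nonneg _)
  refine (mean_mono hpoint).trans ?_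
  rw [mean_add, mean_indicator_range Subtype.val_injective, ← density_singleton a, density]
  gcongr
  exact mul_le_of_le_one_left (mean_nonneg fun x ↦ hf x) hcard

variable {R V ι : Type*} [Semiring R] [AddCommGroup V] [Module R V]

variable (R) in
/-- The proportion of the points `x` for which the line with origin `x` and direction `z` is
contained in `B`. -/
noncomputable def lineDensity (z : V) (B : Set V) : ℝ :=
  density {x | ∀ a : R, x + a • z ∈ B}

/-- The map `(x, v) ↦ x + ∑ i, u i • v i`, which turns combinatorial lines in the parameter `u`
into lines of `V`. -/
def affineCombination [Fintype ι] (u : ι → R) : V × (ι → V) →+ V :=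
  .mk' (fun y ↦ y.1 + ∑ i, u i • y.2 i) fun y y' ↦ by
    simp only [Prod.fst_add, Prod.snd_add, Pi.add_apply, smul_add, Finset.sum_add_distrib]
    abel

/-- The indicator of the active coordinates of a combinatorial line. -/
def wildcardIndicator (l : Line R ι) (i : ι) : R :=
  (l.idxFun i).elim 1 fun _ ↦ 0

theorem line_eq_add_smul_wildcardIndicator (l : Line R ι) (a : R) :
    l a = l 0 + a • wildcardIndicator l := by
  ext i
  cases h : l.idxFun i <;> simp [Line.coe_apply, wildcardIndicator, h]

theorem affineCombination_apply [Fintype ι] (u : ι → R) (y : V × (ι → V)) :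
    affineCombination u y = y.1 + ∑ i, u i • y.2 i :=
  rfl

theorem surjective_affineCombination [Fintype ι] (u : ι → R) :
    Surjective (affineCombination (V := V) u) :=
  fun x ↦ ⟨(x, 0), by simp [affineCombination_apply]⟩

/-- The origin and the direction of the line of `V` induced by a combinatorial line. -/
def originDirection [Fintype ι] (l : Line R ι) : V × (ι → V) →+ V × V :=
  (affineCombination (l 0)).prod
    (affineCombination (wildcardIndicator l) - AddMonoidHom.fst V (ι → V))

theorem affineCombination_line [Fintype ι] (l : Line R ι) (a : R) (y : V × (ι → V)) :
    affineCombination (l a) y = (originDirection l y).1 + a • (originDirection l y).2 := by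
  rw [line_eq_add_smul_wildcardIndicator]
  simp [affineCombination_apply, originDirection, add_smul, mul_smul, Finset.sum_add_distrib,
    Finset.smul_sum, add_assoc]

theorem surjective_originDirection [Fintype ι] (l : Line R ι) :
    Surjective (originDirection (V := V) l) := by
  classical
  rintro ⟨x, z⟩
  obtain ⟨i, hi⟩ := l.proper
  have hdirection : ∑ j, wildcardIndicator l j • (Pi.single i z : ι → V) j = z := by
    rw [Fintype.sum_eq_single i fun j hj ↦ by simp [hj]]
    simp [wildcardIndicator, hi]
  refine ⟨(x - ∑ j, l 0 j • (Pi.single i z : ι → V) j, Pi.single i z), ?_⟩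
  simp [affineCombination_apply, originDirection, hdirection]

theorem density_forall_affineCombination [Fintype ι] [Finite V] (l : Line R ι) (B : Set V) :
    density {y | ∀ a, affineCombination (l a) y ∈ B} = mean fun z ↦ lineDensity R z B := by
  simp only [affineCombination_line]
  refine (density_preimage_of_surjective (surjective_originDirection l)
    {y : V × V | ∀ a : R, y.1 + a • y.2 ∈ B}).trans ?_
  rw [density, mean_prod, mean_comm]
  rfl

variable (R) in
theorem exists_le_mean_lineDensity [Finite R] {ε : ℝ} (hε : 0 < ε) : ∃ κ : ℝ, 0 < κ ∧
    ∀ {V : Type*} [AddCommGroup V] [Module R V] [Finite V] (B : Set V), ε ≤ density B →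
      κ ≤ mean fun z ↦ lineDensity R z B := by
  obtain ⟨ι, hι, hline⟩ := densityHalesJewett R (ε / 2) (half_pos hε)
  cases nonempty_fintype ι
  refine ⟨ε / 2 / (Nat.card (Line R ι) + 1), by positivity, fun {V} _ _ _ B hB ↦ ?_⟩
  obtain ⟨l, hl⟩ := hline.exists_line_le_density (half_pos hε)
    (fun u ↦ {y : V × (ι → V) | affineCombination u y ∈ B}) (by
      rw [mul_div_cancel₀ _ two_ne_zero]
      exact le_mean fun u ↦
        hB.trans_eq (density_preimage_of_surjective (surjective_affineCombination u) B).symm)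
  exact hl.trans_eq (density_forall_affineCombination l B)

theorem lineDensity_nonneg [Finite V] (z : V) (B : Set V) : 0 ≤ lineDensity R z B :=
  density_nonneg _

theorem lineDensity_le_one [Finite V] (z : V) (B : Set V) : lineDensity R z B ≤ 1 :=
  density_le_one _

theorem lineDensity_eq_zero {z : V} {B : Set V} (h : ∀ x, ¬∀ a : R, x + a • z ∈ B) :
    lineDensity R z B = 0 := by
  simp [lineDensity, h, density_empty]

theorem lineDensity_sub_le [Finite R] [Finite V] (z : V) (A B : Set V) :
    lineDensity R z A - lineDensity R z B ≤ Nat.card R * density (A \ B) := by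
  cases nonempty_fintype R
  refine (density_sub_density_le _ _).trans ?_
  have hcover : {x | ∀ a : R, x + a • z ∈ A} \ {x | ∀ a : R, x + a • z ∈ B} ⊆
      ⋃ a ∈ (Finset.univ : Finset R), {x | x + a • z ∈ A \ B} := by
    rintro x ⟨hA, hB⟩
    obtain ⟨a, ha⟩ := not_forall.1 hB
    exact Set.mem_biUnion (Finset.mem_univ a) ⟨hA a, ha⟩
  refine (density_le_sum_of_subset_biUnion hcover).trans_eq ?_
  have htranslate (a : R) : density {x | x + a • z ∈ A \ B} = density (A \ B) :=
    density_preimage_equiv (Equiv.addRight (a • z)) (A \ B)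
  simp only [htranslate, Finset.sum_const, Finset.card_univ, nsmul_eq_mul,
    Nat.card_eq_fintype_card]

theorem abs_lineDensity_sub_le [Finite R] [Finite V] (z : V) (A B : Set V) :
    |lineDensity R z A - lineDensity R z B| ≤ Nat.card R * density (symmDiff A B) :=
  abs_sub_le_iff.2
    ⟨(lineDensity_sub_le z A B).trans <| by gcongr; exact density_mono le_sup_left,
      (lineDensity_sub_le z B A).trans <| by gcongr; exact density_mono le_sup_right⟩

variable (R) in
theorem exists_le_mean_lineDensity_ne_zero [Finite R] {ε : ℝ} (hε : 0 < ε) :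
    ∃ κ : ℝ, 0 < κ ∧ ∃ n : ℕ, ∀ {V : Type*} [AddCommGroup V] [Module R V] [Finite V],
      n ≤ Nat.card V → ∀ B : Set V, ε ≤ density B →
        κ ≤ mean fun z : {v : V // v ≠ 0} ↦ lineDensity R z.1 B := by
  obtain ⟨κ, hκ, h⟩ := exists_le_mean_lineDensity R hε
  obtain ⟨n, hn⟩ := exists_nat_gt (2 / κ)
  refine ⟨κ / 2, half_pos hκ, n, fun {V} _ _ _ hV B hB ↦ ?_⟩
  have hcard : 1 / (Nat.card V : ℝ) ≤ κ / 2 := by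
    rw [← one_div_div 2 κ]
    exact one_div_le_one_div_of_le (by positivity) (hn.le.trans (Nat.cast_le.2 hV))
  linarith [h B hB, mean_le_mean_ne_add (fun z ↦ lineDensity_nonneg (R := R) z B)
    (fun z ↦ lineDensity_le_one z B) 0]

end LineDensity

section Symmetrization

/-- The sign of a bit, `1` for `true` and `-1` for `false`. -/
def boolSign (b : Bool) : ℝ :=
  bif b then 1 else -1

theorem boolSign_not (b : Bool) : boolSign (!b) = -boolSign b := by
  cases b <;> simp [boolSign]

theorem boolSign_le_one (b : Bool) : boolSign b ≤ 1 := by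
  cases b <;> simp [boolSign]

variable {ι Z E : Type*}

theorem mean_comp_eval [Finite ι] [Finite Z] [Nonempty Z] (i : ι) (f : Z → ℝ) :
    mean (fun w : ι → Z ↦ f (w i)) = mean f := by
  classical
  rw [mean_fst_of_involutive (Y := Z) (e := fun w ↦ (update w.1 i w.2, w.1 i))
    (fun w ↦ by simp) fun w : ι → Z ↦ f (w i)]
  simp only [update_self, mean_const]

/-- Exchanges the entries of two samples at the positions `i` with `σ i = false`. -/
def exchange (σ : ι → Bool) (q : (ι → Z) × (ι → Z)) : (ι → Z) × (ι → Z) :=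
  (fun i ↦ bif σ i then q.1 i else q.2 i, fun i ↦ bif σ i then q.2 i else q.1 i)

theorem involutive_exchange (σ : ι → Bool) : Involutive (exchange (Z := Z) σ) := by
  refine fun q ↦ Prod.ext (funext fun i ↦ ?_) (funext fun i ↦ ?_) <;>
    cases h : σ i <;> simp [exchange, h]

theorem boolSign_mul_exchange (f : Z → ℝ) (σ : ι → Bool) (q : (ι → Z) × (ι → Z)) (i : ι) :
    f ((exchange σ q).2 i) - f ((exchange σ q).1 i) = boolSign (σ i) * (f (q.2 i) - f (q.1 i)) := by
  cases h : σ i <;> simp [exchange, boolSign, h]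

theorem mean_sum_boolSign_mul_not [Fintype ι] (f : ι → (ι → Bool) → ℝ) :
    (mean fun σ : ι → Bool ↦ ∑ i, boolSign (σ i) * f i fun j ↦ !σ j) =
      -mean fun σ ↦ ∑ i, boolSign (σ i) * f i σ := by
  rw [← neg_one_mul, ← mean_mul_left,
    ← mean_equiv ((Equiv.refl ι).arrowCongr Equiv.boolNot) fun σ ↦ -1 * ∑ i, boolSign (σ i) * f i σ]
  refine congrArg mean <| funext fun σ ↦ ?_
  rw [neg_one_mul, ← Finset.sum_neg_distrib]
  refine Finset.sum_congr rfl fun i _ ↦ ?_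
  change boolSign (σ i) * (f i fun j ↦ !σ j) = -(boolSign (!σ i) * f i fun j ↦ !σ j)
  rw [boolSign_not, neg_mul, neg_neg]

variable [Fintype ι] [Finite Z] [Nonempty Z] {c : ℝ}

theorem exists_le_mean_sum_boolSign_mul_sub {Φ : Z → E → ℝ} {B : (ι → Z) → E}
    (h : c ≤ mean fun z ↦ ∑ i, ((mean fun w ↦ Φ w (B z)) - Φ (z i) (B z))) :
    ∃ q : (ι → Z) × (ι → Z), c ≤ mean fun σ ↦ ∑ i, boolSign (σ i) *
      (Φ (q.2 i) (B (exchange σ q).1) - Φ (q.1 i) (B (exchange σ q).1)) := by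
  have hghost : c ≤ mean fun q : (ι → Z) × (ι → Z) ↦
      ∑ i, (Φ (q.2 i) (B q.1) - Φ (q.1 i) (B q.1)) := by
    refine h.trans_eq ?_
    rw [mean_prod]
    refine congrArg mean <| funext fun z ↦ ?_
    rw [mean_sum]
    refine Finset.sum_congr rfl fun i _ ↦ ?_
    rw [mean_sub, mean_comp_eval i fun w ↦ Φ w (B z)]
    exact congrArg _ (mean_const _).symm
  have hexchange (σ : ι → Bool) (q : (ι → Z) × (ι → Z)) (i : ι) :=
    boolSign_mul_exchange (fun w ↦ Φ w (B (exchange σ q).1)) σ q i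
  simp only [← hexchange]
  refine exists_le_of_le_mean ?_
  rw [mean_comm]
  exact le_mean fun σ ↦ hghost.trans_eq (mean_equiv (involutive_exchange σ).toPerm _).symm

theorem exists_le_mean_sum_boolSign_mul {Φ : Z → E → ℝ} {B : (ι → Z) → E}
    (h : c ≤ mean fun z ↦ ∑ i, ((mean fun w ↦ Φ w (B z)) - Φ (z i) (B z))) :
    ∃ (z : ι → Z) (S : (ι → Bool) → E),
      c / 2 ≤ mean fun σ ↦ ∑ i, boolSign (σ i) * Φ (z i) (S σ) := by
  obtain ⟨q, hq⟩ := exists_le_mean_sum_boolSign_mul_sub h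
  simp only [mul_sub, Finset.sum_sub_distrib] at hq
  rw [mean_sub] at hq
  by_contra! hsmall
  have hsecond := hsmall q.2 fun σ ↦ B (exchange σ q).1
  have hfirst := hsmall q.1 fun σ ↦ B (exchange (fun j ↦ !σ j) q).1
  rw [mean_sum_boolSign_mul_not fun i σ ↦ Φ (q.1 i) (B (exchange σ q).1)] at hfirst
  linarith

theorem exists_le_mean_sum_boolSign_mul_of_half_le_density {κ : ℝ} {Φ : Z → E → ℝ} (hκ : 0 ≤ κ)
    (hΦ : ∀ z B, 0 ≤ Φ z B) {B₀ : E} (hB₀ : ∀ z, Φ z B₀ = 0) (h : 1 / 2 ≤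
      density {z : ι → Z | ∃ B, (κ ≤ mean fun w ↦ Φ w B) ∧ ∀ i, Φ (z i) B = 0}) :
    ∃ (z : ι → Z) (S : (ι → Bool) → E),
      κ / 4 * Fintype.card ι ≤ mean fun σ ↦ ∑ i, boolSign (σ i) * Φ (z i) (S σ) := by
  let G : Set (ι → Z) := {z | ∃ B, (κ ≤ mean fun w ↦ Φ w B) ∧ ∀ i, Φ (z i) B = 0}
  have hchoice (z : ι → Z) : ∃ B, (∀ i, Φ (z i) B = 0) ∧ (z ∈ G → κ ≤ mean fun w ↦ Φ w B) := by
    by_cases hz : z ∈ G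
    · obtain ⟨B, hmean, hzero⟩ := hz
      exact ⟨B, hzero, fun _ ↦ hmean⟩
    · exact ⟨B₀, fun i ↦ hB₀ (z i), fun hG ↦ absurd hG hz⟩
  choose B hzero hmean using hchoice
  have hgap : κ / 2 * Fintype.card ι ≤
      mean fun z ↦ ∑ i : ι, ((mean fun w ↦ Φ w (B z)) - Φ (z i) (B z)) := by
    simp only [hzero, sub_zero, Finset.sum_const, Finset.card_univ, nsmul_eq_mul, mean_mul_left]
    have := mul_density_le_mean (A := G) (fun z ↦ mean_nonneg fun w ↦ hΦ w (B z)) hmean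
    have hhalf : κ / 2 ≤ mean fun z ↦ mean fun w ↦ Φ w (B z) := by
      nlinarith [mul_le_mul_of_nonneg_left h hκ]
    rw [mul_comm]
    gcongr
  obtain ⟨z, S, hzS⟩ := exists_le_mean_sum_boolSign_mul hgap
  exact ⟨z, S, le_of_eq_of_le (by ring) hzS⟩

end Symmetrization

section Shattering

open scoped Finset

theorem mean_exp_mul_boolSign_le (t : ℝ) :
    mean (fun b ↦ Real.exp (t * boolSign b)) ≤ Real.exp (t ^ 2 / 2) := by
  refine le_of_eq_of_le ?_ (Real.cosh_le_exp_half_sq t)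
  rw [mean_eq_sum_div, Real.cosh_eq]
  simp [boolSign]

/-- The subsets of a finite type having density at most `1 / M`. -/
def sparseSubsets (ι : Type*) [Fintype ι] (M : ℕ) : Finset (Finset ι) :=
  {S | M * #S ≤ Fintype.card ι}

theorem exists_card_sparseSubsets_le {ζ : ℝ} (hζ : 0 < ζ) : ∃ M : ℕ, 0 < M ∧
    ∀ {ι : Type*} [Fintype ι], (#(sparseSubsets ι M) : ℝ) ≤ Real.exp (ζ * Fintype.card ι) := by
  obtain ⟨M, hM⟩ := exists_nat_gt (2 / ζ * (2 / ζ))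
  have hMpos : (0 : ℝ) < M := (by positivity : (0 : ℝ) ≤ 2 / ζ * (2 / ζ)).trans_lt hM
  refine ⟨M, Nat.cast_pos.1 hMpos, fun {ι} _ ↦ ?_⟩
  let L : ℝ := 2 / ζ
  have hexp : Real.exp (-L) ≤ ζ / 2 := by
    rw [Real.exp_neg, ← inv_div 2 ζ]
    exact inv_anti₀ (by positivity) (by linarith [Real.add_one_le_exp L])
  have hweight (S : Finset ι) (hS : S ∈ sparseSubsets ι M) :
      1 ≤ Real.exp (ζ / 2 * Fintype.card ι) * Real.exp (-L) ^ #S := by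
    have hcard : (M : ℝ) * #S ≤ Fintype.card ι := by
      exact_mod_cast (Finset.mem_filter.1 hS).2
    rw [← Real.exp_nat_mul, ← Real.exp_add]
    refine Real.one_le_exp ?_
    have hLM : L ≤ ζ / 2 * M := by
      have := mul_le_mul_of_nonneg_left hM.le (half_pos hζ).le
      rwa [← mul_assoc, show ζ / 2 * (2 / ζ) = 1 by field_simp, one_mul] at this
    nlinarith [mul_le_mul_of_nonneg_right hLM (Nat.cast_nonneg (α := ℝ) #S)]
  calc (#(sparseSubsets ι M) : ℝ) = ∑ S ∈ sparseSubsets ι M, 1 := by simp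
    _ ≤ ∑ S ∈ sparseSubsets ι M, Real.exp (ζ / 2 * Fintype.card ι) * Real.exp (-L) ^ #S :=
      Finset.sum_le_sum hweight
    _ ≤ ∑ S : Finset ι, Real.exp (ζ / 2 * Fintype.card ι) * Real.exp (-L) ^ #S :=
      Finset.sum_le_univ_sum_of_nonneg fun S ↦ by positivity
    _ = Real.exp (ζ / 2 * Fintype.card ι) * (Real.exp (-L) + 1) ^ Fintype.card ι := by
      rw [← Finset.mul_sum, ← Fintype.sum_pow_mul_eq_add_pow]
      simp only [one_pow, mul_one]
    _ ≤ Real.exp (ζ / 2 * Fintype.card ι) * Real.exp (ζ / 2) ^ Fintype.card ι := by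
      gcongr
      linarith [Real.add_one_le_exp (ζ / 2)]
    _ = Real.exp (ζ * Fintype.card ι) := by
      rw [← Real.exp_nat_mul, ← Real.exp_add]
      ring_nf

theorem exists_card_sparseSubsets_sq_mul_exp_lt {t : ℝ} (ht : 0 < t) : ∃ M k₀ : ℕ, 0 < M ∧
    ∀ {ι : Type*} [Fintype ι], k₀ ≤ Fintype.card ι →
      #(sparseSubsets ι M) ^ 2 * Real.exp (-(t ^ 2 / 2 * Fintype.card ι)) < t := by
  obtain ⟨M, hM, hsparse⟩ := exists_card_sparseSubsets_le (ζ := t ^ 2 / 8) (by positivity)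
  obtain ⟨k₀, hk₀⟩ := exists_nat_gt (t⁻¹ / (t ^ 2 / 4))
  rw [div_lt_iff₀ (by positivity)] at hk₀
  refine ⟨M, k₀, hM, fun {ι} _ hcard ↦ ?_⟩
  have hlarge : t⁻¹ < Real.exp (t ^ 2 / 4 * Fintype.card ι) := by
    have hmono := mul_le_mul_of_nonneg_right (Nat.cast_le (α := ℝ).2 hcard)
      (by positivity : 0 ≤ t ^ 2 / 4)
    linarith [Real.add_one_le_exp (t ^ 2 / 4 * Fintype.card ι)]
  calc _ ≤ Real.exp (t ^ 2 / 8 * Fintype.card ι) ^ 2 *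
        Real.exp (-(t ^ 2 / 2 * Fintype.card ι)) := by
        gcongr
        exact hsparse
    _ = (Real.exp (t ^ 2 / 4 * Fintype.card ι))⁻¹ := by
        rw [← Real.exp_nat_mul, ← Real.exp_add, ← Real.exp_neg]
        push_cast
        ring_nf
    _ < t := inv_lt_of_inv_lt₀ ht hlarge

variable {ι : Type*} [Fintype ι] {t : ℝ} {M : ℕ}

theorem density_mul_card_le_sum_boolSign_le (P : Finset ι) (ht : 0 ≤ t) :
    density {σ : ι → Bool | t * Fintype.card ι ≤ ∑ i ∈ P, boolSign (σ i)} ≤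
      Real.exp (-(t ^ 2 / 2 * Fintype.card ι)) := by
  classical
  have hmarkov (σ : ι → Bool) :
      {σ : ι → Bool | t * Fintype.card ι ≤ ∑ i ∈ P, boolSign (σ i)}.indicator 1 σ ≤
        Real.exp (-(t ^ 2 * Fintype.card ι)) *
          ∏ i, Real.exp ((if i ∈ P then t else 0) * boolSign (σ i)) := by
    refine Set.indicator_apply_le' (fun hσ ↦ ?_) fun _ ↦ by positivity
    rw [← Real.exp_sum, ← Real.exp_add]
    simp only [ite_mul, zero_mul, Finset.sum_ite_mem, Finset.univ_inter, ← Finset.mul_sum]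
    exact Real.one_le_exp (by nlinarith [mul_le_mul_of_nonneg_left hσ ht])
  calc _ ≤ Real.exp (-(t ^ 2 * Fintype.card ι)) *
        ∏ i, mean fun b ↦ Real.exp ((if i ∈ P then t else 0) * boolSign b) := by
        rw [← mean_prod_apply, ← mean_mul_left]
        exact mean_mono hmarkov
    _ ≤ Real.exp (-(t ^ 2 * Fintype.card ι)) * ∏ _i : ι, Real.exp (t ^ 2 / 2) := by
        gcongr with i
        · exact fun i _ ↦ mean_nonneg fun b ↦ (Real.exp_pos _).le
        · refine (mean_exp_mul_boolSign_le _).trans (Real.exp_le_exp.2 ?_)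
          split_ifs <;> nlinarith [sq_nonneg t]
    _ = Real.exp (-(t ^ 2 / 2 * Fintype.card ι)) := by
        rw [Finset.prod_const, Finset.card_univ, ← Real.exp_nat_mul, ← Real.exp_add]
        ring_nf

theorem density_le_card_mul_exp {D : Set (ι → Bool)} {P : (ι → Bool) → Finset ι}
    {𝓕 : Finset (Finset ι)} (ht : 0 ≤ t) (hP : ∀ σ ∈ D, P σ ∈ 𝓕)
    (hD : ∀ σ ∈ D, t * Fintype.card ι ≤ ∑ i ∈ P σ, boolSign (σ i)) :
    density D ≤ #𝓕 * Real.exp (-(t ^ 2 / 2 * Fintype.card ι)) := by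
  refine (density_le_sum_of_subset_biUnion
    (S := fun S ↦ {σ : ι → Bool | t * Fintype.card ι ≤ ∑ i ∈ S, boolSign (σ i)})
    fun σ hσ ↦ Set.mem_biUnion (hP σ hσ) (hD σ hσ)).trans ?_
  rw [← nsmul_eq_mul]
  exact Finset.sum_le_card_nsmul _ _ _ fun S _ ↦ density_mul_card_le_sum_boolSign_le S ht

theorem card_le_card_sparseSubsets [DecidableEq ι] {𝓕 : Finset (Finset ι)}
    (h : ∀ I, 𝓕.Shatters I → M * #I ≤ Fintype.card ι) : #𝓕 ≤ #(sparseSubsets ι M) :=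
  𝓕.card_le_card_shatterer.trans <| Finset.card_le_card fun I hI ↦
    Finset.mem_filter.2 ⟨Finset.mem_univ I, h I (Finset.mem_shatterer.1 hI)⟩

theorem density_le_card_sparseSubsets_sq_mul_exp [DecidableEq ι] {G : Set (ι → Bool)}
    {P T : (ι → Bool) → Finset ι} (ht : 0 ≤ t)
    (hP : ∀ σ ∈ G, t * Fintype.card ι ≤ ∑ i ∈ P σ, boolSign (σ i))
    (hT : ∀ σ ∈ G, M * #(T σ) ≤ Fintype.card ι)
    (h : ∀ I T₀, (∀ J ⊆ I, ∃ σ, T σ = T₀ ∧ I ∩ P σ = J) → M * #I ≤ Fintype.card ι) :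
    density G ≤ #(sparseSubsets ι M) ^ 2 * Real.exp (-(t ^ 2 / 2 * Fintype.card ι)) := by
  classical
  let fiber (T₀ : Finset ι) : Finset (ι → Bool) := {σ | T σ = T₀}
  have hfiber (T₀ : Finset ι) : density (G ∩ fiber T₀) ≤
      #(sparseSubsets ι M) * Real.exp (-(t ^ 2 / 2 * Fintype.card ι)) := by
    refine (density_le_card_mul_exp (𝓕 := (fiber T₀).image P) ht
      (fun σ hσ ↦ Finset.mem_image_of_mem P hσ.2) fun σ hσ ↦ hP σ hσ.1).trans ?_
    refine mul_le_mul_of_nonneg_right (Nat.cast_le.2 ?_) (Real.exp_pos _).le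
    refine card_le_card_sparseSubsets fun I hI ↦ h I T₀ fun J hJ ↦ ?_
    obtain ⟨_, hS, hSJ⟩ := hI hJ
    obtain ⟨σ, hσ, rfl⟩ := Finset.mem_image.1 hS
    exact ⟨σ, (Finset.mem_filter.1 hσ).2, hSJ⟩
  have hcover : G ⊆ ⋃ T₀ ∈ sparseSubsets ι M, G ∩ fiber T₀ := fun σ hσ ↦
    Set.mem_biUnion (x := T σ) (Finset.mem_filter.2 ⟨Finset.mem_univ _, hT σ hσ⟩)
      ⟨hσ, Finset.mem_filter.2 ⟨Finset.mem_univ σ, rfl⟩⟩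
  refine (density_le_sum_of_subset_biUnion hcover).trans ?_
  rw [sq, mul_assoc, ← nsmul_eq_mul]
  exact Finset.sum_le_card_nsmul _ _ _ fun T₀ _ ↦ hfiber T₀

theorem sum_boolSign_le (P : Finset ι) (σ : ι → Bool) :
    ∑ i ∈ P, boolSign (σ i) ≤ Fintype.card ι :=
  (Finset.sum_le_card_nsmul P _ 1 fun i _ ↦ boolSign_le_one (σ i)).trans <| by
    rw [nsmul_one]
    exact_mod_cast P.card_le_univ

theorem half_le_density_of_le_mean {c : ℝ} [Nonempty ι] (hc : 0 < c)
    {P T : (ι → Bool) → Finset ι} (h : c * Fintype.card ι ≤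
      mean fun σ ↦ ∑ i ∈ P σ, boolSign (σ i) - M * #(T σ)) :
    c / 2 ≤ density {σ | c / 2 * Fintype.card ι ≤ ∑ i ∈ P σ, boolSign (σ i) - M * #(T σ)} := by
  have hcard : (0 : ℝ) < Fintype.card ι := Nat.cast_pos.2 Fintype.card_pos
  have hmarkov := le_density_setOf_le (c := c / 2) (d := c / 2)
    (f := fun σ ↦ (Fintype.card ι : ℝ)⁻¹ * (∑ i ∈ P σ, boolSign (σ i) - M * #(T σ)))
    (fun σ ↦ by
      rw [inv_mul_le_iff₀ hcard, mul_one]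
      exact (sub_le_self _ (by positivity)).trans (sum_boolSign_le _ _))
    (half_pos hc).le
    (by rwa [mean_mul_left, add_halves, ← div_eq_inv_mul, le_div_iff₀ hcard])
  simpa only [← div_eq_inv_mul, le_div_iff₀ hcard] using hmarkov

theorem exists_shattering_of_le_mean {c : ℝ} (hc : 0 < c) : ∃ M k₀ : ℕ, 0 < M ∧
    ∀ {ι : Type*} [Fintype ι] [DecidableEq ι], k₀ ≤ Fintype.card ι →
    ∀ P T : (ι → Bool) → Finset ι, c * Fintype.card ι ≤
      mean (fun σ ↦ ∑ i ∈ P σ, boolSign (σ i) - M * #(T σ)) →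
    ∃ I T₀, Fintype.card ι ≤ M * #I ∧ ∀ J ⊆ I, ∃ σ, T σ = T₀ ∧ I ∩ P σ = J := by
  obtain ⟨M, k₀, hM, hsparse⟩ := exists_card_sparseSubsets_sq_mul_exp_lt (half_pos hc)
  refine ⟨M, k₀ + 1, hM, fun {ι} _ _ hcard P T h ↦ ?_⟩
  have : Nonempty ι := Fintype.card_pos_iff.1 (Nat.zero_lt_of_lt hcard)
  by_contra! hshatter
  let G : Set (ι → Bool) :=
    {σ | c / 2 * Fintype.card ι ≤ ∑ i ∈ P σ, boolSign (σ i) - M * #(T σ)}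
  have hT (σ) (hσ : σ ∈ G) : M * #(T σ) ≤ Fintype.card ι := by
    have hnonneg : 0 ≤ c / 2 * Fintype.card ι := by positivity
    have hle : (M : ℝ) * #(T σ) ≤ Fintype.card ι := by
      linarith [sum_boolSign_le (P σ) σ, Set.mem_ofPred_eq ▸ hσ]
    exact_mod_cast hle
  have hdensity := density_le_card_sparseSubsets_sq_mul_exp (half_pos hc).le
    (fun σ (hσ : σ ∈ G) ↦ le_trans hσ (sub_le_self _ (by positivity))) hT
    fun I T₀ hI ↦ le_of_lt <| not_le.1 fun hle ↦ by
      obtain ⟨J, hJ, hnot⟩ := hshatter I T₀ hle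
      obtain ⟨σ, hσ, hσJ⟩ := hI J hJ
      exact hnot σ hσ hσJ
  exact ((half_le_density_of_le_mean hc h).trans hdensity).not_gt
    (hsparse (Nat.le_of_succ_le hcard))

theorem abs_density_add_one_le_mul_sub_le {Q : ℕ} [NeZero Q] {a : ℝ} (ha : a ∈ Set.Icc (0 : ℝ) 1) :
    |density {s : Fin Q | (s : ℝ) + 1 ≤ a * Q} - a| ≤ 1 / Q := by
  have hQ : (0 : ℝ) < Q := Nat.cast_pos.2 (NeZero.pos Q)
  have haQ : 0 ≤ a * Q := mul_nonneg ha.1 hQ.le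
  have hfloor : {s : Fin Q | (s : ℝ) + 1 ≤ a * Q} =
      ({s : Fin Q | (s : ℕ) < ⌊a * Q⌋₊} : Finset (Fin Q)) := by
    ext s
    rw [Finset.coe_filter_univ, Set.mem_ofPred_eq, Set.mem_ofPred_eq, ← Nat.succ_le_iff,
      Nat.le_floor_iff haQ, Nat.cast_succ]
  have hle : ⌊a * Q⌋₊ ≤ Q :=
    Nat.floor_le_of_le (mul_le_of_le_one_left hQ.le ha.2)
  rw [density_eq_ncard_div, hfloor, Set.ncard_coe_finset, Fin.card_filter_val_lt,
    min_eq_right hle, Nat.card_fin, div_sub' hQ.ne', abs_div, abs_of_pos hQ, mul_comm (Q : ℝ) a]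
  gcongr
  have hlt := Nat.lt_floor_add_one (a * Q)
  exact abs_sub_le_iff.2 ⟨by linarith [Nat.floor_le haQ], by linarith⟩

theorem density_lt_and_lt_add_one_le (Q : ℕ) (x : ℝ) :
    density {s : Fin Q | (s : ℝ) < x ∧ x < s + 1} ≤ 1 / Q := by
  rw [density_eq_ncard_div, Nat.card_fin]
  gcongr
  refine Nat.cast_le_one.2 <| (Set.ncard_le_one_iff (Set.toFinite _)).2 fun {s s'} hs hs' ↦
    Fin.ext ?_
  have hlt : (s : ℕ) < s' + 1 := by exact_mod_cast hs.1.trans hs'.2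
  have hgt : (s' : ℕ) < s + 1 := by exact_mod_cast hs'.1.trans hs.2
  omega

open Classical in
/-- The coordinates of `a` that lie above the interval `(s i / Q, (s i + 1) / Q)`. -/
noncomputable def aboveThreshold {Q : ℕ} (s : ι → Fin Q) (a : ι → ℝ) : Finset ι :=
  {i | (s i : ℝ) + 1 ≤ a i * Q}

open Classical in
/-- The coordinates of `a` that lie in the interval `(s i / Q, (s i + 1) / Q)`, and for which
therefore no margin around its midpoint is available. -/
noncomputable def nearThreshold {Q : ℕ} (s : ι → Fin Q) (a : ι → ℝ) : Finset ι :=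
  {i | (s i : ℝ) < a i * Q ∧ a i * Q < s i + 1}

theorem sum_boolSign_mul_sub_le_mean_threshold {Q : ℕ} [NeZero Q] {a : ι → ℝ}
    (ha : ∀ i, a i ∈ Set.Icc (0 : ℝ) 1) (σ : ι → Bool) (M : ℕ) :
    (∑ i, boolSign (σ i) * a i) - (1 + M) / Q * Fintype.card ι ≤ mean fun s : ι → Fin Q ↦
      ∑ i ∈ aboveThreshold s a, boolSign (σ i) - M * #(nearThreshold s a) := by
  classical
  have hmean : (mean fun s : ι → Fin Q ↦
      ∑ i ∈ aboveThreshold s a, boolSign (σ i) - M * #(nearThreshold s a)) =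
      ∑ i, (boolSign (σ i) * density {s : Fin Q | (s : ℝ) + 1 ≤ a i * Q} -
        M * density {s : Fin Q | (s : ℝ) < a i * Q ∧ a i * Q < s + 1}) := by
    simp only [density, ← mean_mul_left, ← mean_sub]
    rw [Finset.sum_congr rfl fun i _ ↦ (mean_comp_eval (ι := ι) i _).symm, ← mean_sum]
    refine congrArg mean <| funext fun s ↦ ?_
    rw [Finset.sum_sub_distrib, ← Finset.mul_sum]
    simp [aboveThreshold, nearThreshold, Finset.sum_filter, Set.indicator_apply]
  rw [hmean, sub_le_iff_le_add', mul_comm, ← nsmul_eq_mul, ← Finset.card_univ, ← Finset.sum_const,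
    ← Finset.sum_add_distrib]
  refine Finset.sum_le_sum fun i _ ↦ ?_
  have habove := abs_sub_le_iff.1 (abs_density_add_one_le_mul_sub_le (Q := Q) (ha i))
  have hnear := mul_le_mul_of_nonneg_left (density_lt_and_lt_add_one_le Q (a i * Q))
    M.cast_nonneg
  rw [add_div, ← mul_one_div (M : ℝ)]
  cases σ i <;> simp only [boolSign, cond_true, cond_false] <;> linarith

/-- `a` realizes all patterns of lying above or below the thresholds `m i` on `I`, with margin
`γ`: fat shattering in the sense of statistical learning theory. -/
def FatShatters {X : Type*} (a : X → ι → ℝ) (I : Finset ι) (m : ι → ℝ) (γ : ℝ) : Prop :=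
  ∀ x : ι → Bool, ∃ σ, ∀ i ∈ I,
    (x i = true → m i + γ ≤ a σ i) ∧ (x i = false → a σ i ≤ m i - γ)

theorem FatShatters.mono {X κ : Type*} {a : X → κ → ℝ} {I : Finset κ} {m : κ → ℝ} {γ γ' : ℝ}
    (h : FatShatters a I m γ) (hγ : γ' ≤ γ) : FatShatters a I m γ' := by
  intro x
  obtain ⟨σ, hσ⟩ := h x
  exact ⟨σ, fun i hi ↦ ⟨fun hx ↦ le_trans (by gcongr) ((hσ i hi).1 hx),
    fun hx ↦ ((hσ i hi).2 hx).trans (by gcongr)⟩⟩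

theorem fatShatters_of_threshold [DecidableEq ι] {Q : ℕ} [NeZero Q] {X : Type*} {a : X → ι → ℝ}
    {s : ι → Fin Q} {I T : Finset ι}
    (h : ∀ J ⊆ I, ∃ σ, nearThreshold s (a σ) = T ∧ I ∩ aboveThreshold s (a σ) = J) :
    FatShatters a I (fun i ↦ (s i + 1 / 2) / Q) (1 / (2 * Q)) := by
  have hQ : (0 : ℝ) < Q := Nat.cast_pos.2 (NeZero.pos Q)
  have hdisjoint (i) (hi : i ∈ I) : i ∉ T := by
    obtain ⟨σ, rfl, hσ⟩ := h I subset_rfl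
    simp only [nearThreshold, Finset.mem_filter_univ, not_and, not_lt]
    have := Finset.inter_eq_left.1 hσ hi
    exact fun _ ↦ (Finset.mem_filter.1 this).2
  intro x
  obtain ⟨σ, rfl, hσ⟩ := h {i ∈ I | x i} (Finset.filter_subset _ I)
  refine ⟨σ, fun i hi ↦ ?_⟩
  have habove : s i + 1 ≤ a σ i * Q ↔ x i = true := by
    simpa [aboveThreshold, hi] using Finset.ext_iff.1 hσ i
  have hnear := hdisjoint i hi
  simp only [nearThreshold, Finset.mem_filter_univ, not_and, not_lt] at hnear
  constructor
  · intro hx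
    have := (div_le_iff₀ hQ).2 (habove.2 hx)
    refine le_of_eq_of_le ?_ this
    field_simp
    ring
  · intro hx
    have hle : a σ i * Q ≤ s i := by
      by_contra! hlt
      exact Bool.false_ne_true (hx.symm.trans (habove.1 (hnear hlt)))
    refine ((le_div_iff₀ hQ).2 hle).trans_eq ?_
    field_simp
    ring

theorem exists_fatShatters_of_le_mean {c : ℝ} (hc : 0 < c) : ∃ Q M k₀ : ℕ, 0 < Q ∧ 0 < M ∧
    ∀ {ι : Type*} [Fintype ι], k₀ ≤ Fintype.card ι → ∀ {a : (ι → Bool) → ι → ℝ},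
    (∀ σ i, a σ i ∈ Set.Icc (0 : ℝ) 1) →
    c * Fintype.card ι ≤ mean (fun σ ↦ ∑ i, boolSign (σ i) * a σ i) →
    ∃ I m, Fintype.card ι ≤ M * #I ∧ FatShatters a I m (1 / (2 * Q)) := by
  classical
  obtain ⟨M, k₀, hM, hshatter⟩ := exists_shattering_of_le_mean (half_pos hc)
  obtain ⟨Q, hQ⟩ := exists_nat_gt ((1 + M) / (c / 2))
  have hQpos : (0 : ℝ) < Q := (by positivity : (0 : ℝ) ≤ (1 + M) / (c / 2)).trans_lt hQ
  have : NeZero Q := ⟨(Nat.cast_pos.1 hQpos).ne'⟩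
  rw [div_lt_iff₀' (half_pos hc), ← div_lt_iff₀ hQpos] at hQ
  refine ⟨Q, M, k₀, NeZero.pos Q, hM, fun {ι} _ hcard a ha h ↦ ?_⟩
  have hround : c / 2 * Fintype.card ι ≤ mean fun s : ι → Fin Q ↦ mean fun σ ↦
      ∑ i ∈ aboveThreshold s (a σ), boolSign (σ i) - M * #(nearThreshold s (a σ)) := by
    rw [mean_comm]
    refine le_trans ?_ (mean_mono fun σ ↦ sum_boolSign_mul_sub_le_mean_threshold (ha σ) σ M)
    rw [mean_sub, mean_const]
    nlinarith [mul_le_mul_of_nonneg_right hQ.le (Nat.cast_nonneg (α := ℝ) (Fintype.card ι))]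
  obtain ⟨s, hs⟩ := exists_le_of_le_mean hround
  obtain ⟨I, T, hI, hIT⟩ := hshatter hcard _ _ hs
  exact ⟨I, _, hI, fatShatters_of_threshold hIT⟩

end Shattering

section Decoding

open scoped Finset

theorem correctProb_false {n q : ℕ} (D : Decoder n q) (y : Fin n → Bool) :
    D.correctProb y false = 1 - D.correctProb y true := by
  rw [eq_sub_iff_add_eq, ← D.sum_one, Decoder.correctProb, Decoder.correctProb,
    ← Finset.sum_add_distrib]
  refine Finset.sum_congr rfl fun a _ ↦ ?_
  cases a.2 y <;> simp

theorem exists_decoder_correctProb_eq {Ω : Type*} [Fintype Ω] {n q : ℕ} {w : Ω → ℝ}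
    (hw : w ∈ stdSimplex ℝ Ω) (F : Ω → Finset (Fin n) × ((Fin n → Bool) → Bool))
    (hq : ∀ o, #(F o).1 ≤ q) (hF : ∀ o, DependsOn (F o).2 (F o).1) :
    ∃ D : Decoder n q, ∀ y b, D.correctProb y b = ∑ o with (F o).2 y = b, w o := by
  classical
  have hmap (a) : stdSimplex.map F ⟨w, hw⟩ a = ∑ o with F o = a, w o := by
    rw [stdSimplex.map_coe, FunOnFinite.linearMap_apply_apply]
    rfl
  have hrange (a) (ha : stdSimplex.map F ⟨w, hw⟩ a ≠ 0) : ∃ o, F o = a := by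
    obtain ⟨o, ho, -⟩ := Finset.exists_ne_zero_of_sum_ne_zero (hmap a ▸ ha)
    exact ⟨o, (Finset.mem_filter.1 ho).2⟩
  refine ⟨{
    p := stdSimplex.map F ⟨w, hw⟩
    nonneg := stdSimplex.zero_le _
    sum_one := stdSimplex.sum_eq_one _
    query_bound := fun a ha ↦ by
      obtain ⟨o, rfl⟩ := hrange a ha
      exact hq o
    local_dep := fun a ha y y' h ↦ by
      obtain ⟨o, rfl⟩ := hrange a ha
      exact hF o h }, fun y b ↦ ?_⟩
  simp only [Decoder.correctProb, hmap, ← Finset.sum_filter]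
  rw [Finset.sum_comm' (t' := {o | (F o).2 y = b}) (s' := fun o ↦ {F o}) fun a o ↦ by
    simp only [Finset.mem_filter_univ, Finset.mem_singleton]
    grind]
  simp only [Finset.sum_singleton]

theorem density_symmDiff_eq_hammingDist_div {V : Type*} {N : ℕ} (e : V ≃ Fin N)
    (y : Fin N → Bool) (A : Set V) [DecidablePred (· ∈ A)] :
    density (symmDiff {v | y (e v) = true} A) =
      hammingDist y (fun j ↦ decide (e.symm j ∈ A)) / N := by
  have hpreimage : symmDiff {v | y (e v) = true} A =
      e ⁻¹' ↑({j | y j ≠ decide (e.symm j ∈ A)} : Finset (Fin N)) := by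
    ext v
    simp only [Set.mem_symmDiff, Set.mem_ofPred_eq, Set.mem_preimage, Finset.mem_coe,
      Finset.mem_filter_univ, Equiv.symm_apply_apply]
    grind
  rw [hpreimage, density_preimage_equiv, density_eq_ncard_div, Set.ncard_coe_finset, Nat.card_fin,
    hammingDist]

variable {R V : Type*} [Semiring R] [AddCommGroup V] [Module R V] [Finite V]

variable [Finite R]

variable (R) in
theorem exists_decoder_lineDensity {N : ℕ} (e : V ≃ Fin N) (z : V) {m : ℝ}
    (hm : m ∈ Set.Icc (0 : ℝ) 1) : ∃ D : Decoder N (Nat.card R), ∀ y,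
      D.correctProb y true = 1 / 2 + (lineDensity R z {v | y (e v) = true} - m) / 2 := by
  classical
  cases nonempty_fintype R
  cases nonempty_fintype V
  -- With probability `1 / 2` the decoder tests a random line, and otherwise it makes no query and
  -- outputs `true` with probability `1 - m`.
  let weight : V ⊕ Bool → ℝ :=
    Sum.elim (fun _ ↦ 1 / (2 * Fintype.card V)) fun b ↦ cond b ((1 - m) / 2) (m / 2)
  have hweight : weight ∈ stdSimplex ℝ (V ⊕ Bool) := by
    refine ⟨?_, ?_⟩
    · rintro (_ | _ | _)
      · exact one_div_nonneg.2 (by positivity)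
      · exact div_nonneg hm.1 zero_le_two
      · exact div_nonneg (sub_nonneg.2 hm.2) zero_le_two
    · simp only [weight, Fintype.sum_sum_type, Fintype.sum_bool, Sum.elim_inl, Sum.elim_inr,
        Finset.sum_const, Finset.card_univ, nsmul_eq_mul, cond]
      field_simp
      ring
  obtain ⟨D, hD⟩ := exists_decoder_correctProb_eq (q := Nat.card R) hweight
    (Sum.elim
      (fun x ↦ (Finset.univ.image fun a : R ↦ e (x + a • z),
        fun y ↦ decide (∀ a : R, y (e (x + a • z)) = true)))
      fun b ↦ (∅, fun _ ↦ b))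
    (by
      rintro (_ | _)
      · exact Finset.card_image_le.trans_eq (by simp)
      · exact Nat.zero_le _)
    (by
      rintro (x | _) y y' h
      · have (a : R) : y (e (x + a • z)) = y' (e (x + a • z)) :=
          h _ (Finset.mem_image_of_mem _ (Finset.mem_univ a))
        simp [this]
      · rfl)
  refine ⟨D, fun y ↦ ?_⟩
  rw [hD, Finset.sum_filter, Fintype.sum_sum_type, Fintype.sum_bool, lineDensity, density,
    mean_eq_sum_div]
  simp only [weight, Sum.elim_inl, Sum.elim_inr, decide_eq_true_eq, Set.indicator_apply,
    Set.mem_ofPred_eq, Pi.one_apply, cond, if_true, Bool.false_eq_true, if_false,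
    ← Finset.sum_filter, Finset.sum_const, nsmul_eq_mul]
  field_simp
  ring

theorem mem_Icc_of_fatShatters {ι X : Type*} {a : X → ι → ℝ} {I : Finset ι} {m : ι → ℝ} {γ : ℝ}
    (h : FatShatters a I m γ) (ha : ∀ x i, a x i ∈ Set.Icc (0 : ℝ) 1) (hγ : 0 ≤ γ) {i : ι}
    (hi : i ∈ I) : m i ∈ Set.Icc (0 : ℝ) 1 := by
  obtain ⟨x, hx⟩ := h fun _ ↦ true
  obtain ⟨x', hx'⟩ := h fun _ ↦ false
  have hupper := (hx i hi).1 rfl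
  have hlower := (hx' i hi).2 rfl
  constructor
  · linarith [(ha x' i).1]
  · linarith [(ha x i).2]

theorem exists_isLDC_of_fatShatters {ι X : Type*} {N : ℕ} (e : V ≃ Fin N) {z : ι → V}
    {S : X → Set V} {I : Finset ι} {m : ι → ℝ} {θ c : ℝ}
    (h : FatShatters (fun x i ↦ lineDensity R (z i) (S x)) I m θ) (hc₀ : 0 ≤ c)
    (hc : Nat.card R * c + 2 * c ≤ θ) :
    ∃ C : (Fin #I → Bool) → Fin N → Bool, IsLDC #I N (Nat.card R) c c C := by
  classical
  have hm {i} (hi : i ∈ I) : m i ∈ Set.Icc (0 : ℝ) 1 :=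
    mem_Icc_of_fatShatters h (fun x i ↦ ⟨lineDensity_nonneg _ _, lineDensity_le_one _ _⟩)
      ((by positivity : (0 : ℝ) ≤ Nat.card R * c + 2 * c).trans hc) hi
  choose σ hσ using h
  let index (j : Fin #I) : ι := I.equivFin.symm j
  have hindex : Injective index := Subtype.val_injective.comp I.equivFin.symm.injective
  let message (x : Fin #I → Bool) : ι → Bool := extend index x fun _ ↦ false
  refine ⟨fun x j ↦ decide (e.symm j ∈ S (σ (message x))), fun i ↦ ?_⟩
  have hi : index i ∈ I := (I.equivFin.symm i).2
  obtain ⟨D, hD⟩ := exists_decoder_lineDensity R e (z (index i)) (hm hi)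
  refine ⟨D, fun x y hy ↦ ?_⟩
  have hshatter := hσ (message x) (index i) hi
  rw [show message x (index i) = x i from hindex.extend_apply _ _ _] at hshatter
  have hdist : |lineDensity R (z (index i)) {v | y (e v) = true} -
      lineDensity R (z (index i)) (S (σ (message x)))| ≤ Nat.card R * c := by
    refine (abs_lineDensity_sub_le _ _ _).trans (mul_le_mul_of_nonneg_left ?_ (Nat.cast_nonneg _))
    rw [density_symmDiff_eq_hammingDist_div e y]
    exact div_le_of_le_mul₀ (Nat.cast_nonneg _) hc₀ hy
  rw [abs_sub_le_iff] at hdist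
  cases hx : x i
  · rw [correctProb_false, hD]
    linarith [hshatter.2 hx]
  · rw [hD]
    linarith [hshatter.1 hx]

theorem sq_mul_div_log_le {c t : ℝ} (hc : 0 < c) (hc' : c ≤ 1 / 4) (ht : 0 ≤ t) :
    c ^ 2 * t / Real.log (1 / c) ≤ c * t := by
  have hlog : 1 ≤ Real.log (1 / c) := by
    rw [Real.le_log_iff_exp_le (one_div_pos.2 hc)]
    have : 4 ≤ 1 / c := (le_one_div four_pos hc).2 hc'
    linarith [Real.exp_one_lt_d9]
  refine (div_le_self (by positivity) hlog).trans ?_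
  gcongr
  nlinarith

end Decoding

section ShatteredDirections

open scoped Finset

variable {R V ι : Type*} [Semiring R] [AddCommGroup V] [Module R V]

variable (R V) in
theorem fatShatters_singleton [Finite V] (i : ι) :
    FatShatters (fun (x : ι → Bool) _ ↦ lineDensity R (0 : V) {_v | x i = true}) {i}
      (fun _ ↦ 1 / 2) (1 / 2) := by
  refine fun x ↦ ⟨x, fun j hj ↦ ?_⟩
  rw [Finset.mem_singleton.1 hj]
  constructor <;> intro hx <;> norm_num [hx, lineDensity, density_univ, density_empty]

variable (R) in
theorem exists_fatShatters_lineDensity [Finite R] {ε : ℝ} (hε : 0 < ε) :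
    ∃ (n M : ℕ) (γ : ℝ), 0 < M ∧ 0 < γ ∧ ∀ {V ι : Type*} [AddCommGroup V] [Module R V] [Finite V]
      [Nontrivial V] [Fintype ι], n ≤ Nat.card V →
      1 / 2 ≤ density {z : ι → {v : V // v ≠ 0} | ∃ B : Set V, ε ≤ density B ∧
        ∀ i, lineDensity R (z i).1 B = 0} →
      ∃ (z : ι → V) (S : (ι → Bool) → Set V) (I : Finset ι) (m : ι → ℝ),
        Fintype.card ι ≤ M * #I ∧ FatShatters (fun x i ↦ lineDensity R (z i) (S x)) I m γ := by
  obtain ⟨κ, hκ, n, hgap⟩ := exists_le_mean_lineDensity_ne_zero R hε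
  obtain ⟨Q, M, k₀, hQ, hM, hshatter⟩ := exists_fatShatters_of_le_mean (by positivity : 0 < κ / 4)
  have hQ' : (1 : ℝ) ≤ Q := Nat.one_le_cast.2 hQ
  refine ⟨n, M + k₀, 1 / (2 * Q), Nat.add_pos_left hM k₀, by positivity,
    fun {V ι} _ _ _ _ _ hV h ↦ ?_⟩
  obtain hk | hk := lt_or_ge (Fintype.card ι) k₀
  · obtain _ | ⟨⟨i⟩⟩ := isEmpty_or_nonempty ι
    · exact ⟨0, fun _ ↦ ∅, ∅, 0, by simp, fun x ↦ ⟨x, by simp⟩⟩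
    · refine ⟨0, fun x ↦ {_v | x i = true}, {i}, _, ?_,
        (fatShatters_singleton R V i).mono (by gcongr; linarith)⟩
      rw [Finset.card_singleton]
      lia
  · have hsparse : 1 / 2 ≤ density {z : ι → {v : V // v ≠ 0} | ∃ B : Set V,
        (κ ≤ mean fun w : {v : V // v ≠ 0} ↦ lineDensity R w.1 B) ∧
          ∀ i, lineDensity R (z i).1 B = 0} :=
      h.trans <| density_mono <| Set.ofPred_subset_ofPred.2
        fun z ⟨B, hB, hz⟩ ↦ ⟨B, hgap hV B hB, hz⟩
    have : Nonempty {v : V // v ≠ 0} := nonempty_subtype.2 (exists_ne 0)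
    obtain ⟨z, S, hzS⟩ := exists_le_mean_sum_boolSign_mul_of_half_le_density
      (Φ := fun z : {v : V // v ≠ 0} ↦ lineDensity R z.1) (B₀ := ∅) hκ.le
      (fun z B ↦ lineDensity_nonneg z.1 B) (fun z ↦ lineDensity_eq_zero fun x hx ↦ hx 0) hsparse
    obtain ⟨I, m, hI, hshatters⟩ := hshatter hk
      (fun σ i ↦ ⟨lineDensity_nonneg (z i).1 (S σ), lineDensity_le_one _ _⟩) hzS
    exact ⟨fun i ↦ z i, S, I, m, hI.trans (by gcongr; lia), hshatters⟩

end ShatteredDirections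

end ForbiddenDirections

open scoped Finset in
open ForbiddenDirections in
theorem forbidden_directions_to_LDC_general (R : Type*) [Semiring R] [Finite R] {ε : ℝ}
    (hε : 0 < ε) : ∃ (n₁ : ℕ) (c : ℝ), c ∈ Set.Ioc (0 : ℝ) (1 / 4) ∧
    ∀ (V : Type*) [AddCommGroup V] [Module R V] [Finite V] (k : ℕ), n₁ ≤ Nat.card V →
      Nat.card (Fin k → {v : V // v ≠ 0}) ≤
        2 * Set.ncard {z : Fin k → {v : V // v ≠ 0} | ∃ B : Finset V, ε * Nat.card V ≤ B.card ∧
          ∀ i : Fin k, ∀ x : V, ¬∀ a : R, x + a • (z i : V) ∈ B} →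
      ∃ (l : ℕ) (C : (Fin l → Bool) → Fin (Nat.card V) → Bool),
        IsLDC l (Nat.card V) (Nat.card R) c c C ∧ c * k ≤ l := by
  obtain ⟨n, M, γ, hM, hγ, hshatter⟩ := exists_fatShatters_lineDensity R hε
  obtain ⟨c, hc, hcmin⟩ := exists_between
    (by positivity : (0 : ℝ) < min (1 / 4) (min (1 / (M : ℝ)) (γ / (Nat.card R + 2))))
  obtain ⟨hc₁, hc₂, hc₃⟩ := by simpa only [lt_inf_iff] using hcmin
  rw [lt_div_iff₀ (by positivity)] at hc₂ hc₃
  refine ⟨max n 2, c, ⟨hc, hc₁.le⟩, fun V _ _ _ k hV h ↦ ?_⟩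
  have : Nontrivial V := Finite.one_lt_card_iff_nontrivial.1 (le_of_max_le_right hV)
  have : Nonempty {v : V // v ≠ 0} := nonempty_subtype.2 (exists_ne 0)
  obtain ⟨z, S, I, m, hI, hfat⟩ := hshatter (ι := Fin k) (le_of_max_le_left hV) <| by
    refine (half_le_density_of_card_le h).trans <| density_mono <| Set.ofPred_subset_ofPred.2
      fun z ⟨B, hB, hz⟩ ↦ ⟨B, ?_, fun i ↦ lineDensity_eq_zero (hz i)⟩
    rwa [density_eq_ncard_div, Set.ncard_coe_finset, le_div_iff₀ (Nat.cast_pos.2 Nat.card_pos)]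
  obtain ⟨C, hC⟩ := exists_isLDC_of_fatShatters (Finite.equivFin V) hfat hc.le (by linarith)
  refine ⟨_, C, hC, ?_⟩
  calc c * k ≤ c * (M * #I) := by
        gcongr
        exact_mod_cast (Fintype.card_fin k).symm.trans_le hI
    _ ≤ #I := by
        rw [← mul_assoc]
        exact mul_le_of_le_one_left (Nat.cast_nonneg _) hc₂.le

/-- LDCs from sets avoiding lines in random directions.  A uniformly random direction in the
projective space `PF_p^{n−1}` is modeled by a uniformly random nonzero vector `z i`
(the uniform measure on nonzero vectors pushes forward to the uniform measure on
`PF_p^{n−1}`, and the event below depends only on the projective classes of the `z i`). -/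
theorem forbidden_directions_to_LDC :
    ∃ c0 : ℝ, 0 < c0 ∧
    ∀ p : ℕ, ∀ _ : Fact p.Prime, p ≠ 2 → ∀ ε : ℝ, ε ∈ Set.Ioc (0 : ℝ) 1 →
    ∃ (n1 : ℕ) (c : ℝ), 0 < n1 ∧ c ∈ Set.Ioc (0 : ℝ) (1/2) ∧
    ∀ n k : ℕ, n1 ≤ n → 0 < k →
    -- with probability at least 1/2 over independent uniform directions …
    Nat.card (Fin k → {v : Fin n → ZMod p // v ≠ 0}) ≤
      2 * Set.ncard {z : Fin k → {v : Fin n → ZMod p // v ≠ 0} |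
        ∃ B : Finset (Fin n → ZMod p),
          ε * (p : ℝ) ^ n ≤ B.card ∧
          -- B contains no line with direction among the (classes of the) z i
          ∀ i : Fin k, ∀ x : Fin n → ZMod p,
            ¬ (∀ lam : ZMod p, x + lam • (z i : Fin n → ZMod p) ∈ B)} →
    ∃ (l : ℕ) (C : (Fin l → Bool) → Fin (p ^ n) → Bool),
      IsLDC l (p ^ n) p c c C ∧
      c0 * c ^ 2 * k / Real.log (1/c) ≤ l := by
  refine ⟨1, one_pos, fun p _ _ ε hε ↦ ?_⟩
  obtain ⟨n₁, c, ⟨hc, hc'⟩, h⟩ := forbidden_directions_to_LDC_general (ZMod p) hε.1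
  refine ⟨n₁ + 1, c, n₁.succ_pos, ⟨hc, by linarith⟩, fun n k hn _ hB ↦ ?_⟩
  have hspace := h (Fin n → ZMod p) k
  rw [show Nat.card (Fin n → ZMod p) = p ^ n by simp, Nat.card_zmod, Nat.cast_pow] at hspace
  obtain ⟨l, C, hC, hl⟩ := hspace ((Nat.le_of_succ_le hn).trans
    (Nat.lt_pow_self (Fact.out : p.Prime).one_lt).le) hB
  refine ⟨l, C, hC, ?_⟩
  rw [one_mul]
  exact (ForbiddenDirections.sq_mul_div_log_le hc hc' k.cast_nonneg).trans hl
end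

section
/- For every odd prime p and every ε ∈ (0,1], there exist a positive integer n1(p,ε) and c(p,ε) ∈ (0,1] such that the following holds. For every n ≥ n1(p,ε) and every set S ⊆ F_p^n with |S| ≥ ε·p^n, the set S contains at least c(p,ε)·p^{2n} nontrivial lines; that is, Pr_{x ∈ F_p^n, y ∈ F_p^n \ {0}}[{x + λy : λ ∈ F_p} ⊆ S] ≥ c(p,ε), where x and y are independent and uniform. -/
/-!
A random affine image of a cube `ι → R` of large but fixed dimension meets `S`, with positive
probability, in a dense subset of the cube, which contains a combinatorial line by the density
Hales–Jewett theorem. Each of the finitely many combinatorial lines is mapped to a uniformly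
distributed affine line, so a positive proportion of all affine lines lies in `S`.

The density Hales–Jewett theorem for the alphabet `Option α` follows from the one for `α` by density
increment. Let `A` be dense and without combinatorial lines. Call a point a core point if replacing
its coordinates `none` by any letter of `α` gives a point of `A`; then `A` contains no core point
with a coordinate `none`. The theorem for `α` produces many core points. The complement of the core
set is a union of sets, one for each `a : α`, that are insensitive to exchanging `a` and `none`, and
such a union is, up to a small error, a disjoint union of combinatorial subspaces. Since `A` has to
fit into these subspaces, it has increased density on one of them.
-/

universe u v

namespace DensityHalesJewett

open Finset Function Combinatorics
open scoped BigOperators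

/-! ### Densities and averages -/

section Density

variable {X Y : Type*} [Fintype X] [Fintype Y] {A B : Set X}

/-- The density of a subset of a finite type, that is, its measure under the uniform probability
measure; it is `0` when the type is empty. -/
noncomputable def density (A : Set X) : ℝ := 𝔼 x, A.indicator 1 x

lemma density_nonneg (A : Set X) : 0 ≤ density A :=
  expect_nonneg fun x _ ↦ Set.indicator_nonneg (fun _ _ ↦ zero_le_one) x

lemma nonempty_of_density_pos (hA : 0 < density A) : A.Nonempty := by
  contrapose! hA
  simp [density, hA]

lemma density_eq_ncard_div_card (A : Set X) : density A = A.ncard / Nat.card X := by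
  classical
  obtain ⟨S, rfl⟩ := A.toFinite.exists_finset_coe
  simp [density, expect_indicator_one, dens_eq_card_div_card, ← NNRat.cast_divNat]

lemma density_mono (h : A ⊆ B) : density A ≤ density B :=
  expect_le_expect fun x _ ↦ Set.indicator_le_indicator_of_subset h (fun _ ↦ zero_le_one) x

lemma density_le_one (A : Set X) : density A ≤ 1 := by
  rw [density_eq_ncard_div_card]
  exact div_le_one_of_le₀ (mod_cast Set.ncard_le_card A) (Nat.cast_nonneg _)

lemma density_union (h : Disjoint A B) : density (A ∪ B) = density A + density B := by
  simp [density, ← expect_add_distrib, Set.indicator_union_of_disjoint h]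

lemma density_diff (h : B ⊆ A) : density (A \ B) = density A - density B := by
  rw [eq_sub_iff_add_eq', ← density_union Set.disjoint_sdiff_right, Set.union_sdiff_cancel h]

lemma expect_prod (f : X × Y → ℝ) : 𝔼 z, f z = 𝔼 x, 𝔼 y, f (x, y) := by
  rw [← expect_product (s := univ) (t := univ) (f := f), univ_product_univ]

lemma density_prod (A : Set (X × Y)) : density A = 𝔼 x, density {y | (x, y) ∈ A} :=
  expect_prod _

lemma density_prod_right (A : Set (X × Y)) : density A = 𝔼 y, density {x | (x, y) ∈ A} :=
  (density_prod A).trans (expect_comm ..)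

variable {ι κ α : Type*} [Fintype ι] [DecidableEq ι] [Fintype κ] [DecidableEq κ] [Fintype α]

lemma expect_sumElim (f : (ι ⊕ κ → α) → ℝ) :
    𝔼 z, f z = 𝔼 x : ι → α, 𝔼 y : κ → α, f (Sum.elim x y) := by
  rw [← expect_prod fun z : (ι → α) × (κ → α) ↦ f (Sum.elim z.1 z.2)]
  refine Fintype.expect_equiv (Equiv.sumArrowEquivProdArrow ι κ α) _ _ fun z ↦ ?_
  simp [Equiv.sumArrowEquivProdArrow]

lemma density_sumElim (A : Set (ι ⊕ κ → α)) :
    density A = 𝔼 x : ι → α, density {y : κ → α | Sum.elim x y ∈ A} :=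
  expect_sumElim _

/-- The involution `(w, b) ↦ (update w i b, w i)` of `(ι → α) × α` is measure preserving. -/
lemma expect_update [Nonempty α] (i : ι) (f : (ι → α) → ℝ) :
    𝔼 w, 𝔼 b, f (update w i b) = 𝔼 w, f w := by
  let swap : (ι → α) × α → (ι → α) × α := fun z ↦ (update z.1 i z.2, z.1 i)
  have swap_swap : Involutive swap := fun z ↦ by simp [swap]
  calc 𝔼 w, 𝔼 b, f (update w i b) = 𝔼 z : (ι → α) × α, f (swap z).1 := by rw [expect_prod]
    _ = 𝔼 z : (ι → α) × α, f z.1 :=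
      Fintype.expect_equiv swap_swap.toPerm _ (fun z ↦ f z.1) fun z ↦ by
        rw [Involutive.coe_toPerm]
    _ = 𝔼 w, f w := by rw [expect_prod]; simp

lemma expect_indicator_range {e : X → Y} (he : Injective e) (g : Y → ℝ) :
    𝔼 y, (Set.range e).indicator g y = density (Set.range e) * 𝔼 x, g (e x) := by
  have sum_range (g : Y → ℝ) : ∑ y, (Set.range e).indicator g y = ∑ x, g (e x) :=
    (Fintype.sum_of_injective e he _ _ (fun y hy ↦ Set.indicator_of_notMem hy g)
      fun x ↦ (Set.indicator_of_mem (Set.mem_range_self x) g).symm).symm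
  rcases isEmpty_or_nonempty X
  · simp [Set.range_eq_empty]
  have : (Fintype.card X : ℝ) ≠ 0 := by positivity
  simp only [density, Fintype.expect_eq_sum_div_card, sum_range]
  simp [field]

/-- The summand `1` keeps the bound positive, hence usable as a parameter, before `K` is known to
be nonempty. -/
lemma exists_le_density_of_le_expect_density {K : Type*} [Finite K] {A : Y → Set X}
    {Q : K → Y → Prop} {δ : ℝ} (hδ : 0 < δ) (hA : δ ≤ 𝔼 y, density (A y))
    (hQ : ∀ y, δ / 2 ≤ density (A y) → ∃ k, Q k y) :
    ∃ k, δ / 2 / (Nat.card K + 1) ≤ density {y | Q k y} := by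
  classical
  have := Fintype.ofFinite K
  by_contra! hlt
  rw [Nat.card_eq_fintype_card] at hlt
  have : Nonempty Y := by
    by_contra! h
    rw [univ_eq_empty, expect_empty] at hA
    exact hA.not_gt hδ
  have pointwise (y : Y) : density (A y) ≤ δ / 2 + ∑ k, {y | Q k y}.indicator 1 y := by
    have indicator_nonneg (k : K) : (0 : ℝ) ≤ {y | Q k y}.indicator 1 y :=
      Set.indicator_nonneg (fun _ _ ↦ zero_le_one) y
    rcases le_or_gt (δ / 2) (density (A y)) with hy | hy
    · obtain ⟨k, hk⟩ := hQ y hy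
      calc density (A y) ≤ 1 := density_le_one _
        _ = {y | Q k y}.indicator 1 y := by rw [Set.indicator_of_mem (by exact hk), Pi.one_apply]
        _ ≤ ∑ k, {y | Q k y}.indicator 1 y :=
          single_le_sum (fun k _ ↦ indicator_nonneg k) (mem_univ k)
        _ ≤ δ / 2 + ∑ k, {y | Q k y}.indicator 1 y := by linarith
    · linarith [sum_nonneg fun k (_ : k ∈ univ) ↦ indicator_nonneg k]
  have : δ < δ := calc
    δ ≤ 𝔼 y, (δ / 2 + ∑ k, {y | Q k y}.indicator 1 y) :=
      hA.trans (expect_le_expect fun y _ ↦ pointwise y)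
    _ = δ / 2 + ∑ k, density {y | Q k y} := by
      rw [expect_add_distrib, Fintype.expect_const, expect_sum_comm]; rfl
    _ ≤ δ / 2 + ∑ _k : K, δ / 2 / (Fintype.card K + 1) := by gcongr with k; exact (hlt k).le
    _ = δ / 2 + δ / 2 * (Fintype.card K / (Fintype.card K + 1)) := by
      rw [sum_const, card_univ, nsmul_eq_mul]; ring
    _ < δ / 2 + δ / 2 * 1 := by
      gcongr
      rw [div_lt_one (by positivity)]
      linarith
    _ = δ := by ring
  exact this.false

end Density

/-! ### Combinatorial subspaces -/

section Subspace

variable {α β η θ ι κ : Type*}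

instance [Finite α] [Finite ι] : Finite (Line α ι) :=
  .of_injective Line.idxFun fun _ _ ↦ Line.ext

instance [Finite η] [Finite α] [Finite ι] : Finite (Subspace η α ι) :=
  .of_injective Subspace.idxFun fun _ _ ↦ Subspace.ext

lemma subspace_injective (V : Subspace η α ι) : Injective V := by
  intro x y hxy
  ext e
  obtain ⟨i, hi⟩ := V.proper e
  simpa only [Subspace.apply_inr hi] using congrFun hxy i

/-- The composition of two subspaces. -/
def compSubspace (V : Subspace η α ι) (W : Subspace θ α η) : Subspace θ α ι where
  idxFun i := (V.idxFun i).elim Sum.inl W.idxFun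
  proper e := by
    obtain ⟨j, hj⟩ := W.proper e
    obtain ⟨i, hi⟩ := V.proper j
    exact ⟨i, by simp [hi, hj]⟩

@[simp] lemma compSubspace_apply (V : Subspace η α ι) (W : Subspace θ α η) (x : θ → α) :
    compSubspace V W x = V (W x) := by
  ext i
  cases hi : V.idxFun i <;> simp [compSubspace, Subspace.coe_apply, hi]

/-- The line of a subspace `V` that corresponds to the line `l` in the coordinates of `V`. -/
def compLine (V : Subspace η α ι) (l : Line α η) : Line α ι where
  idxFun i := (V.idxFun i).elim some l.idxFun
  proper := by
    obtain ⟨j, hj⟩ := l.proper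
    obtain ⟨i, hi⟩ := V.proper j
    exact ⟨i, by simp [hi, hj]⟩

lemma compLine_apply (V : Subspace η α ι) (l : Line α η) (a : α) :
    compLine V l a = V (l a) := by
  ext i
  cases hi : V.idxFun i <;> simp [compLine, Subspace.coe_apply, hi]

/-- The product of a subspace and a point. -/
def horizontalSubspace (V : Subspace η α ι) (y : κ → α) : Subspace η α (ι ⊕ κ) where
  idxFun := Sum.elim V.idxFun (Sum.inl ∘ y)
  proper e := let ⟨i, hi⟩ := V.proper e; ⟨Sum.inl i, hi⟩

@[simp] lemma horizontalSubspace_apply (V : Subspace η α ι) (y : κ → α) (x : η → α) :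
    horizontalSubspace V y x = Sum.elim (V x) y := by
  ext (_ | _) <;> rfl

/-- The product of a point and a subspace. -/
def verticalSubspace (x : ι → α) (V : Subspace η α κ) : Subspace η α (ι ⊕ κ) where
  idxFun := Sum.elim (Sum.inl ∘ x) V.idxFun
  proper e := let ⟨i, hi⟩ := V.proper e; ⟨Sum.inr i, hi⟩

@[simp] lemma verticalSubspace_apply (x : ι → α) (V : Subspace η α κ) (y : η → α) :
    verticalSubspace x V y = Sum.elim x (V y) := by
  ext (_ | _) <;> rfl

/-- The product of a line and a subspace; the direction of the line is the new index `none`. -/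
def consSubspace (l : Line α ι) (V : Subspace η α κ) : Subspace (Option η) α (ι ⊕ κ) where
  idxFun := Sum.elim (fun i ↦ (l.idxFun i).elim (Sum.inr none) Sum.inl)
    fun k ↦ (V.idxFun k).map id some
  proper
    | none => let ⟨i, hi⟩ := l.proper; ⟨Sum.inl i, by simp [hi]⟩
    | some e => let ⟨k, hk⟩ := V.proper e; ⟨Sum.inr k, by simp [hk]⟩

@[simp] lemma consSubspace_apply (l : Line α ι) (V : Subspace η α κ) (x : Option η → α) :
    consSubspace l V x = Sum.elim (l (x none)) (V (x ∘ some)) := by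
  ext (i | k)
  · cases hi : l.idxFun i <;> simp [consSubspace, Subspace.coe_apply, hi]
  · cases hk : V.idxFun k <;> simp [consSubspace, Subspace.coe_apply, hk]

/-- The image of a subspace under a map of alphabets. -/
def mapSubspace (f : α → β) (V : Subspace η α ι) : Subspace η β ι where
  idxFun i := (V.idxFun i).map f id
  proper e := let ⟨i, hi⟩ := V.proper e; ⟨i, by simp [hi]⟩

lemma mapSubspace_apply_comp (f : α → β) (V : Subspace η α ι) (x : η → α) :
    mapSubspace f V (f ∘ x) = f ∘ V x := by
  ext i
  cases hi : V.idxFun i <;> simp [mapSubspace, Subspace.coe_apply, hi]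

end Subspace

/-! ### Density Hales–Jewett properties -/

section Property

variable {η ι κ α : Type*}

/-- The set `A` contains all points of some combinatorial line. -/
def ContainsLine (A : Set (ι → α)) : Prop := ∃ l : Line α ι, ∀ a, l a ∈ A

lemma ContainsLine.of_preimage {A : Set (ι → α)} {V : Subspace η α ι}
    (h : ContainsLine (V ⁻¹' A)) : ContainsLine A :=
  let ⟨l, hl⟩ := h; ⟨compLine V l, fun a ↦ by rw [compLine_apply]; exact hl a⟩

variable [Fintype α]

variable (α) in
/-- The density Hales–Jewett property of the alphabet `α` at density `δ`: in some dimension, every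
set of density at least `δ` contains a combinatorial line. -/
def DHJ (δ : ℝ) : Prop :=
  ∃ (ι : Type) (_ : Fintype ι) (_ : DecidableEq ι),
    ∀ A : Set (ι → α), δ ≤ density A → ContainsLine A

variable (η α) in
/-- The multidimensional density Hales–Jewett property: in some dimension, every set of density at
least `δ` contains a combinatorial subspace with index set `η`. -/
def MDHJ (δ : ℝ) : Prop :=
  ∃ (ι : Type) (_ : Fintype ι) (_ : DecidableEq ι),
    ∀ A : Set (ι → α), δ ≤ density A → ∃ V : Subspace η α ι, ∀ x, V x ∈ A

lemma MDHJ.of_equiv (e : η ≃ κ) {δ : ℝ} (h : MDHJ η α δ) : MDHJ κ α δ := by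
  obtain ⟨ι, _, _, hι⟩ := h
  refine ⟨ι, ‹_›, ‹_›, fun A hA ↦ ?_⟩
  obtain ⟨V, hV⟩ := hι A hA
  refine ⟨V.reindex e (.refl α) (.refl ι), fun x ↦ ?_⟩
  rw [show V.reindex e (.refl α) (.refl ι) x = V (x ∘ e) from funext fun i ↦ by simp]
  exact hV _

lemma mdhj_pempty {δ : ℝ} (hδ : 0 < δ) : MDHJ PEmpty α δ := by
  refine ⟨PEmpty, inferInstance, inferInstance, fun A hA ↦
    ⟨⟨PEmpty.elim, nofun⟩, fun x ↦ ?_⟩⟩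
  rw [Subsingleton.eq_univ_of_nonempty (nonempty_of_density_pos (hδ.trans_le hA))]
  exact Set.mem_univ _

/-- By pigeonhole a single subspace `V` works for many points of a cube of dimension `ι`; a line
of such points times `V` is the desired subspace. -/
lemma MDHJ.option (hα : ∀ δ > 0, DHJ α δ) {δ : ℝ} (hδ : 0 < δ) (hη : MDHJ η α (δ / 2)) [Finite η] :
    MDHJ (Option η) α δ := by
  obtain ⟨κ, _, _, hκ⟩ := hη
  obtain ⟨ι, _, _, hι⟩ := hα (δ / 2 / (Nat.card (Subspace η α κ) + 1)) (by positivity)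
  refine ⟨ι ⊕ κ, inferInstance, inferInstance, fun A hA ↦ ?_⟩
  rw [density_sumElim] at hA
  obtain ⟨V, hV⟩ := exists_le_density_of_le_expect_density
    (A := fun x ↦ {y | Sum.elim x y ∈ A})
    (Q := fun (V : Subspace η α κ) x ↦ ∀ y, Sum.elim x (V y) ∈ A) hδ hA fun x ↦ hκ _
  obtain ⟨l, hl⟩ := hι _ hV
  refine ⟨consSubspace l V, fun x ↦ ?_⟩
  rw [consSubspace_apply]
  exact hl (x none) _

lemma mdhj_of_dhj (hα : ∀ δ > 0, DHJ α δ) (η : Type*) [Finite η] : ∀ δ > 0, MDHJ η α δ := by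
  induction η using Finite.induction_empty_option with
  | of_equiv e ih => exact fun δ hδ ↦ (ih δ hδ).of_equiv e
  | h_empty => exact fun δ hδ ↦ mdhj_pempty hδ
  | h_option ih => exact fun δ hδ ↦ .option hα hδ (ih (δ / 2) (half_pos hδ))

end Property

/-! ### Equidistributed random subspaces -/

section Equidistribution

variable {ι κ η : Type*} {α : Type u} [DecidableEq ι]

/-- The line through the points `update w i b`. -/
def updateLine (w : ι → α) (i : ι) : Line α ι where
  idxFun := update (some ∘ w) i none
  proper := ⟨i, update_self ..⟩

lemma updateLine_apply (w : ι → α) (i : ι) (a : α) : updateLine w i a = update w i a := by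
  ext j
  rcases eq_or_ne j i with rfl | hj <;> simp [updateLine, *]

variable [Fintype ι] [Fintype κ] [DecidableEq κ] [Fintype α]

section Line

variable [DecidableEq α] {a : α} {i j : ι}

/-- The normalised deviation of the event `w i = a` from its expectation. For distinct `i` these
functions are independent of mean zero, whence the second moment bound below. -/
def excess (a : α) (i : ι) (w : ι → α) : ℝ := (if w i = a then (Fintype.card α : ℝ) else 0) - 1

lemma expect_excess_mul (a : α) (i : ι) (f : (ι → α) → ℝ) :
    𝔼 w, excess a i w * f w = 𝔼 w, f (update w i a) - 𝔼 w, f w := by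
  have : Nonempty α := ⟨a⟩
  simp only [excess, sub_mul, one_mul, expect_sub_distrib]
  congr 1
  rw [← expect_update i]
  simp [NNRat.smul_def]

lemma expect_excess (a : α) (i : ι) : 𝔼 w, excess a i w = 0 := by
  simpa using expect_excess_mul a i 1

lemma expect_excess_mul_excess (h : i ≠ j) : 𝔼 w, excess a i w * excess a j w = 0 := by
  rw [expect_excess_mul, sub_eq_zero]
  simp [excess, update_of_ne h.symm]

lemma expect_excess_mul_self_le : 𝔼 w, excess a i w * excess a i w ≤ Fintype.card α := by
  have : Nonempty α := ⟨a⟩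
  rw [expect_excess_mul, expect_excess]
  simp [excess]

lemma expect_sq_expect_excess_le :
    𝔼 w : ι → α, (𝔼 i, excess a i w) ^ 2 ≤ Fintype.card α / Fintype.card ι := calc
  𝔼 w : ι → α, (𝔼 i, excess a i w) ^ 2 = 𝔼 i : ι, 𝔼 j, 𝔼 w, excess a i w * excess a j w := by
    simp only [sq, expect_mul_expect, expect_comm (s := (univ : Finset (ι → α)))]
  _ ≤ 𝔼 i : ι, 𝔼 j, if i = j then (Fintype.card α : ℝ) else 0 := by
    gcongr with i _ j _
    split_ifs with h
    · subst h
      exact expect_excess_mul_self_le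
    · exact (expect_excess_mul_excess h).le
  _ = Fintype.card α / Fintype.card ι := by
    rcases isEmpty_or_nonempty ι <;> simp [NNRat.smul_def, div_eq_inv_mul]

end Line

lemma expect_sub_le_expect_update {ε : ℝ} (hε : 0 < ε)
    (hι : Fintype.card α ≤ ε ^ 2 * Fintype.card ι) {h : (ι → α) → ℝ}
    (hh : ∀ x, h x ∈ Set.Icc 0 1) (a : α) :
    𝔼 w, h w - ε ≤ 𝔼 i, 𝔼 w, h (update w i a) := by
  classical
  have : Nonempty α := ⟨a⟩
  have : Nonempty ι := by
    by_contra! hempty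
    simp at hι
  have variance_le : 𝔼 w : ι → α, (𝔼 i, excess a i w) ^ 2 ≤ ε ^ 2 :=
    expect_sq_expect_excess_le.trans <| (div_le_iff₀ (by positivity)).2 hι
  have pointwise (w : ι → α) :
      -ε / 2 - (2 * ε)⁻¹ * (𝔼 i, excess a i w) ^ 2 ≤ (𝔼 i, excess a i w) * h w := by
    obtain ⟨h0, h1⟩ := hh w
    have hsq : h w ^ 2 ≤ 1 := by nlinarith
    have hexpand : (2 * ε)⁻¹ * (𝔼 i, excess a i w + ε * h w) ^ 2 =
        (2 * ε)⁻¹ * (𝔼 i, excess a i w) ^ 2 + (𝔼 i, excess a i w) * h w + ε / 2 * h w ^ 2 := by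
      field_simp
      ring
    have : 0 ≤ (2 * ε)⁻¹ * (𝔼 i, excess a i w + ε * h w) ^ 2 := by positivity
    nlinarith
  have : 𝔼 w, (𝔼 i, excess a i w) * h w = 𝔼 i, 𝔼 w, h (update w i a) - 𝔼 w, h w := by
    simp only [expect_mul]
    rw [expect_comm]
    simp only [expect_excess_mul, expect_sub_distrib, Fintype.expect_const]
  calc 𝔼 w, h w - ε = 𝔼 w, h w + (-ε / 2 - (2 * ε)⁻¹ * ε ^ 2) := by field_simp; ring
    _ ≤ 𝔼 w, h w + (-ε / 2 - (2 * ε)⁻¹ * 𝔼 w : ι → α, (𝔼 i, excess a i w) ^ 2) := by gcongr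
    _ = 𝔼 w, h w + 𝔼 w : ι → α, (-ε / 2 - (2 * ε)⁻¹ * (𝔼 i, excess a i w) ^ 2) := by
      rw [expect_sub_distrib, Fintype.expect_const, mul_expect]
    _ ≤ 𝔼 w, h w + 𝔼 w, (𝔼 i, excess a i w) * h w := by gcongr with w; exact pointwise w
    _ = 𝔼 i, 𝔼 w, h (update w i a) := by rw [this]; ring

/-- The random subspace `V ω`, for uniform `ω`, is equidistributed up to an error `ε`: each of its
points is nearly uniform in the cube, as far as lower bounds for the probabilities of events (or
the expectations of `[0, 1]`-valued functions) are concerned. -/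
def IsEquidistributed {Ω : Type*} [Fintype Ω] (ε : ℝ) (V : Ω → Subspace η α ι) : Prop :=
  ∀ (t : η → α) (h : (ι → α) → ℝ), (∀ x, h x ∈ Set.Icc 0 1) → 𝔼 x, h x - ε ≤ 𝔼 ω, h (V ω t)

lemma IsEquidistributed.density_sub_le {Ω : Type*} [Fintype Ω] {ε : ℝ} {V : Ω → Subspace η α ι}
    (hV : IsEquidistributed ε V) (A : Set (ι → α)) (t : η → α) :
    density A - ε ≤ density {ω | V ω t ∈ A} :=
  hV t (A.indicator 1) fun x ↦
    ⟨Set.indicator_nonneg (fun _ _ ↦ zero_le_one) x,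
      Set.indicator_le_self' (fun _ _ ↦ zero_le_one) x⟩

lemma IsEquidistributed.density_sub_le_prod {Ω Q : Type*} [Fintype Ω] [Fintype Q] [Nonempty Q]
    {ε : ℝ} {V : Ω → Subspace η α ι} (hV : IsEquidistributed ε V) (A : Set (ι → α))
    (t : Q → η → α) :
    density A - ε ≤ density {z : Ω × Q | V z.1 (t z.2) ∈ A} := by
  rw [density_prod_right]
  exact le_expect univ_nonempty fun q _ ↦ hV.density_sub_le A (t q)

lemma IsEquidistributed.consSubspace {Ω : Type*} [Fintype Ω] [Nonempty Ω] {ε : ℝ}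
    {V : Ω → Subspace η α κ} (hV : IsEquidistributed (ε / 2) V) (hε : 0 < ε)
    (hι : Fintype.card α ≤ (ε / 2) ^ 2 * Fintype.card ι) :
    IsEquidistributed ε fun ω : (ι × (ι → α)) × Ω ↦
      consSubspace (updateLine ω.1.2 ω.1.1) (V ω.2) := by
  classical
  intro t h hh
  have : Nonempty α := ⟨t none⟩
  have : Nonempty ι := by
    by_contra! hempty
    simp at hι
  have expect_mem (x : ι → α) : 𝔼 y, h (Sum.elim x y) ∈ Set.Icc 0 1 :=
    ⟨expect_nonneg fun y _ ↦ (hh _).1, expect_le univ_nonempty fun y _ ↦ (hh _).2⟩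
  have inner (x : ι → α) :
      𝔼 y, h (Sum.elim x y) - ε / 2 ≤ 𝔼 ω, h (Sum.elim x (V ω (t ∘ some))) :=
    hV (t ∘ some) (fun y ↦ h (Sum.elim x y)) fun y ↦ hh _
  have outer := expect_sub_le_expect_update (half_pos hε) hι expect_mem (t none)
  simp only [consSubspace_apply, updateLine_apply, expect_prod, expect_sumElim h]
  calc 𝔼 x, 𝔼 y, h (Sum.elim x y) - ε
      ≤ 𝔼 i, 𝔼 w, 𝔼 y, h (Sum.elim (update w i (t none)) y) - ε / 2 := by linarith
    _ = 𝔼 i, 𝔼 w, (𝔼 y, h (Sum.elim (update w i (t none)) y) - ε / 2) := by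
      simp only [expect_sub_distrib, Fintype.expect_const]
    _ ≤ 𝔼 i, 𝔼 w, 𝔼 ω, h (Sum.elim (update w i (t none)) (V ω (t ∘ some))) := by
      gcongr
      exact inner _

variable (α) in
lemma exists_isEquidistributed [Nonempty α] (η : Type*) [Finite η] :
    ∀ ε > 0, ∃ (ι : Type) (_ : Fintype ι) (_ : DecidableEq ι) (Ω : Type u) (_ : Fintype Ω)
      (_ : Nonempty Ω) (V : Ω → Subspace η α ι), IsEquidistributed ε V := by
  classical
  induction η using Finite.induction_empty_option with
  | of_equiv e ih =>
    intro ε hε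
    obtain ⟨ι, _, _, Ω, _, _, V, hV⟩ := ih ε hε
    refine ⟨ι, ‹_›, ‹_›, Ω, ‹_›, ‹_›, fun ω ↦ (V ω).reindex e (.refl α) (.refl ι), fun t h hh ↦ ?_⟩
    have hreindex (ω : Ω) : (V ω).reindex e (.refl α) (.refl ι) t = V ω (t ∘ e) :=
      funext fun i ↦ by simp
    simpa only [hreindex] using hV (t ∘ e) h hh
  | h_empty =>
    refine fun ε hε ↦ ⟨PEmpty, inferInstance, inferInstance, PUnit, inferInstance, inferInstance,
      fun _ ↦ ⟨PEmpty.elim, nofun⟩, fun t h _ ↦ ?_⟩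
    rw [Fintype.expect_const, sub_le_iff_le_add]
    exact (expect_le univ_nonempty fun x _ ↦ (congrArg h (Subsingleton.elim x _)).le).trans
      (le_add_of_nonneg_right hε.le)
  | h_option ih =>
    intro ε hε
    obtain ⟨κ, _, _, Ω, _, _, V, hV⟩ := ih (ε / 2) (half_pos hε)
    obtain ⟨L, hL⟩ := exists_nat_ge (Fintype.card α / (ε / 2) ^ 2)
    have hcard : Fintype.card α ≤ (ε / 2) ^ 2 * Fintype.card (Fin (L + 1)) := by
      rw [Fintype.card_fin, ← div_le_iff₀' (by positivity)]
      exact hL.trans (mod_cast L.le_succ)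
    exact ⟨Fin (L + 1) ⊕ κ, inferInstance, inferInstance,
      (Fin (L + 1) × (Fin (L + 1) → α)) × Ω, inferInstance, inferInstance, _,
      hV.consSubspace hε hcard⟩

end Equidistribution

/-! ### Insensitive sets -/

section Insensitive

variable {η ι κ : Type*} {α : Type*} {a : α}

/-- Replace every letter `none` of a word by `a`. -/
def fill (a : α) (x : ι → Option α) : ι → α := fun i ↦ (x i).getD a

@[simp] lemma fill_some_comp (a : α) (x : ι → α) : fill a (some ∘ x) = x := rfl

lemma fill_apply (a : α) (V : Subspace η (Option α) ι) (x : η → Option α) :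
    fill a (V x) = mapSubspace (Option.getD · a) V (fill a x) :=
  (mapSubspace_apply_comp (Option.getD · a) V x).symm

lemma fill_mapSubspace_some (a : α) (V : Subspace η α ι) (x : η → Option α) :
    fill a (mapSubspace some V x) = V (fill a x) := by
  ext i
  cases hi : V.idxFun i <;> simp [fill, mapSubspace, Subspace.coe_apply, hi]

lemma fill_sumElim (a : α) (x : ι → Option α) (y : κ → Option α) :
    fill a (Sum.elim x y) = Sum.elim (fill a x) (fill a y) := by
  ext (_ | _) <;> rfl

/-- Membership in `E` does not change when letters `none` of a word are replaced by `a` or vice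
versa. -/
def IsInsensitive (a : α) (E : Set (ι → Option α)) : Prop :=
  ∀ ⦃x y⦄, fill a x = fill a y → x ∈ E → y ∈ E

namespace IsInsensitive

variable {E F : Set (ι → Option α)}

lemma compl (hE : IsInsensitive a E) : IsInsensitive a Eᶜ :=
  fun _ _ hxy hx hy ↦ hx (hE hxy.symm hy)

lemma diff (hE : IsInsensitive a E) (hF : IsInsensitive a F) : IsInsensitive a (E \ F) :=
  fun _ _ hxy hx ↦ ⟨hE hxy hx.1, hF.compl hxy hx.2⟩

lemma preimage (hE : IsInsensitive a E) (V : Subspace η (Option α) ι) :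
    IsInsensitive a (V ⁻¹' E) :=
  fun _ _ hxy hx ↦ hE (by simp only [fill_apply, hxy]) hx

lemma left_fiber {E : Set (ι ⊕ κ → Option α)} (hE : IsInsensitive a E) (y : κ → Option α) :
    IsInsensitive a {x | Sum.elim x y ∈ E} :=
  fun _ _ hxx' hx ↦ hE (by simp only [fill_sumElim, hxx']) hx

lemma right_fiber {E : Set (κ ⊕ ι → Option α)} (hE : IsInsensitive a E) (x : κ → Option α) :
    IsInsensitive a {y | Sum.elim x y ∈ E} :=
  fun _ _ hyz hy ↦ hE (by simp only [fill_sumElim, hyz]) hy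

end IsInsensitive

end Insensitive

/-- By equidistribution a set of density `ε` has density at least `ε / 2` on the words over `α` of
some subspace. By the density Hales–Jewett property for `α` it then contains all words over `α` of
a smaller subspace, hence all words of it by insensitivity. -/
lemma MDHJ.exists_subspace_of_isInsensitive {η : Type*} {α : Type u} [Fintype α] {ε : ℝ}
    (hε : 0 < ε) (hα : MDHJ η α (ε / 2)) :
    ∃ (ι : Type) (_ : Fintype ι) (_ : DecidableEq ι), ∀ (a : α) (E : Set (ι → Option α)),
      IsInsensitive a E → ε ≤ density E → ∃ V : Subspace η (Option α) ι, ∀ x, V x ∈ E := by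
  obtain ⟨κ, _, _, hκ⟩ := hα
  obtain ⟨ι, _, _, Ω, _, _, V, hV⟩ := exists_isEquidistributed (Option α) κ (ε / 2) (half_pos hε)
  refine ⟨ι, ‹_›, ‹_›, fun a E hE hdens ↦ ?_⟩
  have : Nonempty α := ⟨a⟩
  have average_le : ε / 2 ≤ 𝔼 ω, density {x : κ → α | V ω (some ∘ x) ∈ E} := calc
    ε / 2 ≤ 𝔼 _x : κ → α, (density E - ε / 2) := by rw [Fintype.expect_const]; linarith
    _ ≤ 𝔼 x : κ → α, density {ω | V ω (some ∘ x) ∈ E} := by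
      gcongr with x
      exact hV.density_sub_le E _
    _ = 𝔼 ω, density {x : κ → α | V ω (some ∘ x) ∈ E} := expect_comm ..
  obtain ⟨ω, -, hω⟩ := exists_le_of_le_expect univ_nonempty average_le
  obtain ⟨W, hW⟩ := hκ _ hω
  refine ⟨compSubspace (V ω) (mapSubspace some W), fun x ↦ ?_⟩
  rw [compSubspace_apply]
  exact hE.preimage (V ω) (by rw [fill_mapSubspace_some, fill_some_comp]) (hW (fill a x))

/-! ### Tiling by subspaces -/

section Tiling

variable {η ι κ α : Type*} [Fintype ι] [DecidableEq ι] [Fintype κ] [DecidableEq κ] [Fintype η]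
  [DecidableEq η] [Fintype α] {ε ε₁ ε₂ : ℝ} {E F : Set (ι → α)}

variable (η) in
/-- Up to density `ε`, the set `E` is a fractional disjoint union of `η`-dimensional subspaces.
This is expressed through linear programming duality: a function bounded by `1` whose mean on
every subspace is nonpositive has at most the integral `ε` over `E`. -/
def IsNearlyTiled (ε : ℝ) (E : Set (ι → α)) : Prop :=
  ∀ g : (ι → α) → ℝ, (∀ x, g x ≤ 1) → (∀ V : Subspace η α ι, 𝔼 x, g (V x) ≤ 0) →
    𝔼 x, E.indicator g x ≤ ε

namespace IsNearlyTiled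

lemma mono (hE : IsNearlyTiled η ε₁ E) (h : ε₁ ≤ ε₂) : IsNearlyTiled η ε₂ E :=
  fun g hg hV ↦ (hE g hg hV).trans h

variable (η E) in
lemma of_density : IsNearlyTiled η (density E) E :=
  fun _ hg _ ↦ expect_le_expect fun x _ ↦ Set.indicator_le_indicator (hg x)

lemma union (hE : IsNearlyTiled η ε₁ E) (hF : IsNearlyTiled η ε₂ F) (h : Disjoint E F) :
    IsNearlyTiled η (ε₁ + ε₂) (E ∪ F) := fun g hg hV ↦ by
  simp only [Set.indicator_union_of_disjoint h, expect_add_distrib]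
  exact add_le_add (hE g hg hV) (hF g hg hV)

lemma of_fibers {E : Set (κ ⊕ ι → α)} {ε : (κ → α) → ℝ}
    (hE : ∀ x, IsNearlyTiled η (ε x) {y | Sum.elim x y ∈ E}) :
    IsNearlyTiled η (𝔼 x, ε x) E := fun g hg hV ↦ by
  rw [expect_sumElim]
  refine expect_le_expect fun x _ ↦
    hE x (fun y ↦ g (Sum.elim x y)) (fun y ↦ hg _) fun V ↦ ?_
  simpa only [verticalSubspace_apply] using hV (verticalSubspace x V)

lemma inter [Nonempty α] (hE : IsNearlyTiled κ ε₁ E)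
    (hF : ∀ V : Subspace κ α ι, IsNearlyTiled η ε₂ (V ⁻¹' F)) (hε₂ : 0 ≤ ε₂) :
    IsNearlyTiled η (ε₁ + ε₂) (E ∩ F) := by
  intro g hg hV
  have excess_le_one (x : ι → α) : F.indicator g x - ε₂ ≤ 1 := by
    have := Set.indicator_le' (fun y (_ : y ∈ F) ↦ hg y) (fun _ _ ↦ zero_le_one) x
    linarith
  have expect_excess_le (V : Subspace κ α ι) : 𝔼 x, (F.indicator g (V x) - ε₂) ≤ 0 := by
    rw [expect_sub_distrib, Fintype.expect_const, sub_nonpos]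
    refine hF V (g ∘ V) (fun x ↦ hg _) fun W ↦ ?_
    simpa only [comp_apply, compSubspace_apply] using hV (compSubspace V W)
  calc 𝔼 x, (E ∩ F).indicator g x
      ≤ 𝔼 x, (E.indicator (fun y ↦ F.indicator g y - ε₂) x + ε₂) := by
        gcongr with x
        rw [← Set.indicator_indicator]
        by_cases hx : x ∈ E <;> simp [hx, hε₂]
    _ ≤ ε₁ + ε₂ := by
        rw [expect_add_distrib, Fintype.expect_const]
        gcongr
        exact hE _ excess_le_one expect_excess_le

end IsNearlyTiled

end Tiling

section Cylinder

variable {η ι κ α : Type*} {V : Subspace η α κ} {Y : Set (ι → α)}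

/-- The product of a subspace and a set. -/
def cylinder (V : Subspace η α κ) (Y : Set (ι → α)) : Set (κ ⊕ ι → α) :=
  {z | z ∘ Sum.inl ∈ Set.range V ∧ z ∘ Sum.inr ∈ Y}

lemma sumElim_mem_cylinder {x : κ → α} {y : ι → α} :
    Sum.elim x y ∈ cylinder V Y ↔ x ∈ Set.range V ∧ y ∈ Y :=
  Iff.rfl

lemma indicator_cylinder_sumElim (g : (κ ⊕ ι → α) → ℝ) (x : κ → α) (y : ι → α) :
    (cylinder V Y).indicator g (Sum.elim x y) =
      Y.indicator (fun y ↦ (Set.range V).indicator (fun x ↦ g (Sum.elim x y)) x) y := by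
  by_cases hx : x ∈ Set.range V <;> by_cases hy : y ∈ Y <;>
    simp [Set.indicator, sumElim_mem_cylinder, hx, hy, -Set.mem_range]

variable [Fintype ι] [DecidableEq ι] [Fintype κ] [DecidableEq κ] [Fintype α]

variable (V Y) in
lemma density_cylinder : density (cylinder V Y) = density (Set.range V) * density Y := by
  simp only [density, expect_mul_expect]
  rw [expect_sumElim]
  congr! with x _ y
  by_cases hx : x ∈ Set.range V <;> by_cases hy : y ∈ Y <;>
    simp [Set.indicator, sumElim_mem_cylinder, hx, hy, -Set.mem_range]

variable (V Y) in
lemma isNearlyTiled_cylinder [Fintype η] [DecidableEq η] : IsNearlyTiled η 0 (cylinder V Y) := by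
  intro g _ hV
  rw [expect_sumElim, expect_comm]
  refine (expect_le_expect fun y _ ↦ ?_).trans (expect_const_zero univ).le
  simp only [indicator_cylinder_sumElim]
  by_cases hy : y ∈ Y
  · simp only [Set.indicator_of_mem hy]
    rw [expect_indicator_range (subspace_injective V)]
    refine mul_nonpos_of_nonneg_of_nonpos (density_nonneg _) ?_
    simpa only [horizontalSubspace_apply] using hV (horizontalSubspace V y)
  · simp [hy]

lemma inv_card_le_density_range [Nonempty α] (V : Subspace η α κ) :
    (Fintype.card (κ → α) : ℝ)⁻¹ ≤ density (Set.range V) := by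
  obtain ⟨x⟩ : Nonempty (η → α) := inferInstance
  calc (Fintype.card (κ → α) : ℝ)⁻¹ = density {V x} := by
        simp [density_eq_ncard_div_card]
    _ ≤ density (Set.range V) := density_mono (by simp)

end Cylinder

/-! ### Insensitive sets are nearly tiled -/

section InsensitiveTiling

variable {η : Type*} {α : Type u} [Fintype α] {ε : ℝ}

/-- Many fibres of `E` have density at least `ε / 2` and therefore contain a subspace. -/
lemma exists_cylinder_subset_of_isInsensitive [Finite η] (hε : 0 < ε) (hα : ∀ δ > 0, MDHJ η α δ) :
    ∃ (κ : Type) (_ : Fintype κ) (_ : DecidableEq κ), ∃ θ > 0,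
      ∀ (ι : Type) [Fintype ι] [DecidableEq ι] (a : α) (E : Set (κ ⊕ ι → Option α)),
        IsInsensitive a E → ε ≤ density E → ∃ (V : Subspace η (Option α) κ)
          (Y : Set (ι → Option α)), IsInsensitive a Y ∧ cylinder V Y ⊆ E ∧
            θ ≤ density (cylinder V Y) := by
  obtain ⟨κ, _, _, hκ⟩ := MDHJ.exists_subspace_of_isInsensitive (half_pos hε)
    (hα (ε / 2 / 2) (by positivity))
  refine ⟨κ, ‹_›, ‹_›, (Fintype.card (κ → Option α) : ℝ)⁻¹ *
    (ε / 2 / (Nat.card (Subspace η (Option α) κ) + 1)), by positivity, ?_⟩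
  intro ι _ _ a E hE hdens
  rw [density, expect_sumElim, expect_comm] at hdens
  obtain ⟨V, hV⟩ := exists_le_density_of_le_expect_density
    (A := fun y : ι → Option α ↦ {x : κ → Option α | Sum.elim x y ∈ E})
    (Q := fun (V : Subspace η (Option α) κ) y ↦ ∀ x, Sum.elim (V x) y ∈ E)
    hε hdens fun y ↦ hκ a _ (hE.left_fiber y)
  refine ⟨V, {y | ∀ x, Sum.elim (V x) y ∈ E},
    fun y y' hyy' hy x ↦ hE.right_fiber (V x) hyy' (hy x), ?_, ?_⟩
  · rintro z ⟨⟨x, hx⟩, hz⟩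
    rw [← Sum.elim_comp_inl_inr z, ← hx]
    exact hz x
  · rw [density_cylinder]
    exact mul_le_mul (inv_card_le_density_range V) hV (by positivity) (density_nonneg _)

variable [Fintype η] [DecidableEq η]

/-- Removing cylinders repeatedly: each step decreases the density by the factor `1 + θ`. -/
lemma exists_isNearlyTiled_geometric_of_isInsensitive (hε : 0 < ε)
    (hα : ∀ δ > 0, MDHJ η α δ) :
    ∃ θ > 0, ∀ s : ℕ, ∃ (ι : Type) (_ : Fintype ι) (_ : DecidableEq ι),
      ∀ (a : α) (E : Set (ι → Option α)), IsInsensitive a E →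
        IsNearlyTiled η (ε + density E / (1 + θ) ^ s) E := by
  obtain ⟨κ, _, _, θ, hθ, hκ⟩ := exists_cylinder_subset_of_isInsensitive hε hα
  refine ⟨θ, hθ, fun s ↦ ?_⟩
  induction s with
  | zero =>
    refine ⟨PEmpty, inferInstance, inferInstance, fun a E _ ↦ ?_⟩
    refine (IsNearlyTiled.of_density η E).mono ?_
    rw [pow_zero, div_one]
    exact le_add_of_nonneg_left hε.le
  | succ s ih =>
    obtain ⟨ι, _, _, hι⟩ := ih
    refine ⟨κ ⊕ ι, inferInstance, inferInstance, fun a E hE ↦ ?_⟩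
    rcases lt_or_ge (density E) ε with hdens | hdens
    · refine (IsNearlyTiled.of_density η E).mono ?_
      have := density_nonneg E
      exact hdens.le.trans (le_add_of_nonneg_right (by positivity))
    obtain ⟨V, Y, hY, hVY, hθV⟩ := hκ ι a E hE hdens
    have diff_insensitive (x : κ → Option α) :
        IsInsensitive a {y | Sum.elim x y ∈ E \ cylinder V Y} :=
      (hE.right_fiber x).diff fun y y' hyy' hy ↦ ⟨hy.1, hY hyy' hy.2⟩
    have tiled_diff := IsNearlyTiled.of_fibers fun x ↦ hι a _ (diff_insensitive x)
    have tiled := (isNearlyTiled_cylinder V Y).union tiled_diff disjoint_sdiff_self_right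
    rw [Set.union_sdiff_cancel hVY] at tiled
    refine tiled.mono ?_
    have diff_le : density (E \ cylinder V Y) ≤ density E / (1 + θ) := by
      rw [density_diff hVY, le_div_iff₀ (by positivity)]
      nlinarith [density_le_one E]
    calc 0 + 𝔼 x, (ε + density {y | Sum.elim x y ∈ E \ cylinder V Y} / (1 + θ) ^ s)
        = ε + density (E \ cylinder V Y) / (1 + θ) ^ s := by
          rw [zero_add, expect_add_distrib, Fintype.expect_const, ← expect_div, ← density_sumElim]
      _ ≤ ε + density E / (1 + θ) / (1 + θ) ^ s := by gcongr
      _ = ε + density E / (1 + θ) ^ (s + 1) := by rw [div_div, pow_succ']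

lemma exists_isNearlyTiled_of_isInsensitive (hε : 0 < ε) (hα : ∀ δ > 0, MDHJ η α δ) :
    ∃ (ι : Type) (_ : Fintype ι) (_ : DecidableEq ι), ∀ (a : α) (E : Set (ι → Option α)),
      IsInsensitive a E → IsNearlyTiled η ε E := by
  obtain ⟨θ, hθ, htiled⟩ := exists_isNearlyTiled_geometric_of_isInsensitive (half_pos hε) hα
  obtain ⟨s, hs⟩ := pow_unbounded_of_one_lt (2 / ε) (lt_add_of_pos_right 1 hθ)
  obtain ⟨ι, _, _, hι⟩ := htiled s
  refine ⟨ι, inferInstance, inferInstance, fun a E hE ↦ (hι a E hE).mono ?_⟩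
  have remainder_le : density E / (1 + θ) ^ s ≤ ε / 2 := by
    rw [div_lt_iff₀ hε] at hs
    rw [div_le_iff₀ (by positivity)]
    linarith [density_le_one E]
  linarith

end InsensitiveTiling

section UnionTiling

variable {α : Type u} [Fintype α] {ε : ℝ}

lemma exists_isNearlyTiled_biUnion (hα : ∀ δ > 0, DHJ α δ) {s : Finset α} (hs : s.Nonempty)
    (η : Type*) [Fintype η] [DecidableEq η] (hε : 0 < ε) :
    ∃ (ι : Type) (_ : Fintype ι) (_ : DecidableEq ι), ∀ E : α → Set (ι → Option α),
      (∀ a, IsInsensitive a (E a)) → IsNearlyTiled η ε (⋃ a ∈ s, E a) := by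
  induction hs using Nonempty.cons_induction generalizing ε with
  | singleton a =>
    obtain ⟨ι, _, _, hι⟩ := exists_isNearlyTiled_of_isInsensitive hε (mdhj_of_dhj hα η)
    exact ⟨ι, ‹_›, ‹_›, fun E hE ↦ by simpa using hι a (E a) (hE a)⟩
  | cons a s has hs ih =>
    obtain ⟨κ, _, _, hκ⟩ := ih (ε := ε / 4) (by positivity)
    obtain ⟨ι, _, _, hι⟩ :=
      exists_isNearlyTiled_of_isInsensitive (ε := ε / 4) (by positivity) (mdhj_of_dhj hα κ)
    refine ⟨ι, ‹_›, ‹_›, fun E hE ↦ ?_⟩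
    have univ_tiled : IsNearlyTiled η (ε / 4) (Set.univ : Set (κ → Option α)) := by
      have := hκ (fun _ ↦ Set.univ) fun _ _ _ _ hx ↦ hx
      rwa [show ⋃ a ∈ s, Set.univ = (Set.univ : Set (κ → Option α)) from
        Set.biUnion_const (s := (s : Set α)) hs _] at this
    have tiled := (hι a _ (hE a)).inter (F := Set.univ) (fun _ ↦ univ_tiled) (by positivity)
    have compl_tiled := (hι a _ (hE a).compl).inter (F := ⋃ b ∈ s, E b) (fun V ↦ by
      simpa only [Set.preimage_iUnion] using hκ _ fun b ↦ (hE b).preimage V) (by positivity)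
    have union_tiled := tiled.union compl_tiled
      (disjoint_compl_right.mono Set.inter_subset_left Set.inter_subset_left)
    rw [Set.inter_univ, Set.union_inter_distrib_left, Set.union_compl_self, Set.univ_inter]
      at union_tiled
    simp only [Finset.mem_cons, Set.iUnion_iUnion_eq_or_left]
    exact union_tiled.mono (by linarith)

lemma exists_isNearlyTiled_iUnion [Nonempty α] (hα : ∀ δ > 0, DHJ α δ) (η : Type*) [Fintype η]
    [DecidableEq η] (hε : 0 < ε) :
    ∃ (ι : Type) (_ : Fintype ι) (_ : DecidableEq ι), ∀ E : α → Set (ι → Option α),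
      (∀ a, IsInsensitive a (E a)) → IsNearlyTiled η ε (⋃ a, E a) := by
  simpa using exists_isNearlyTiled_biUnion hα univ_nonempty η hε

end UnionTiling

/-! ### The density increment -/

section FillCore

variable {η ι κ μ α : Type*} {A : Set (ι → Option α)}

/-- The words all of whose fillings by letters of `α` lie in `A`. -/
def fillCore (A : Set (ι → Option α)) : Set (ι → Option α) := {x | ∀ a, some ∘ fill a x ∈ A}

/-- A word is turned into a line by letting the positions of the letter `none` vary. -/
lemma containsLine_of_mem_fillCore {x : ι → Option α} (hx : ∃ i, x i = none) (hA : x ∈ A)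
    (hcore : x ∈ fillCore A) : ContainsLine A := by
  refine ⟨⟨fun i ↦ (x i).map some, hx.imp fun i hi ↦ by simp [hi]⟩, ?_⟩
  rintro (_ | a)
  · convert hA using 1
    ext1 i
    cases hi : x i <;> simp [Line.coe_apply, hi]
  · convert hcore a using 1
    ext1 i
    cases hi : x i <;> simp [Line.coe_apply, fill, hi]

lemma exists_iUnion_eq_compl_preimage_fillCore (U : Subspace η (Option α) ι) :
    ∃ E : α → Set (η → Option α), (∀ a, IsInsensitive a (E a)) ∧
      ⋃ a, E a = (U ⁻¹' fillCore A)ᶜ := by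
  refine ⟨fun a ↦ U ⁻¹' {x | some ∘ fill a x ∉ A}, fun a ↦ .preimage (fun x y hxy hx ↦ ?_) U, ?_⟩
  · rwa [Set.mem_ofPred_eq, ← hxy]
  · ext x
    simp [fillCore]

/-- The blocks `q j`, in which every letter `none` is replaced by `y j`, followed by the word `y`.
Every line of words `y` becomes a line of words `mix q y`, for each `q`. -/
def mix (q : κ → μ → Option α) (y : κ → Option α) : (κ × μ) ⊕ κ → Option α :=
  Sum.elim (fun p ↦ (q p.1 p.2).or (y p.1)) y

lemma some_comp_fill_mix (a : α) (q : κ → μ → Option α) (y : κ → Option α) :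
    some ∘ fill a (mix q y) = mix q (some ∘ fill a y) := by
  ext1 (⟨j, b⟩ | j)
  · cases h : q j b <;> simp [fill, mix, h]
  · rfl

end FillCore

section Increment

variable {η ι κ μ α Ω : Type*} {ε δ : ℝ}

/-- The subspace that varies the block of `j` in `mix q y`. -/
def mixSubspace [DecidableEq κ] (q : κ → μ → Option α) (y : κ → Option α) (j : κ) :
    Subspace μ (Option α) ((κ × μ) ⊕ κ) where
  idxFun := Sum.elim
    (fun p ↦ if p.1 = j then .inr p.2 else .inl ((q p.1 p.2).or (y p.1))) (fun k ↦ .inl (y k))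
  proper b := ⟨.inl (j, b), by simp⟩

lemma mixSubspace_apply [DecidableEq κ] {y : κ → Option α} {j : κ} (hj : y j = none)
    (q : κ → μ → Option α) (u : μ → Option α) :
    mixSubspace q y j u = mix (update q j u) y := by
  ext1 (⟨k, b⟩ | k)
  · by_cases h : k = j
    · subst h
      simp [mixSubspace, Subspace.coe_apply, mix, hj]
    · simp [mixSubspace, Subspace.coe_apply, mix, h]
  · rfl

variable [Fintype η] [DecidableEq η] [Fintype ι] [DecidableEq ι] [Fintype κ] [DecidableEq κ]
  [Fintype μ] [DecidableEq μ] [Fintype α] [Fintype Ω]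

lemma IsNearlyTiled.density_add_mul_density_le [Nonempty α] {A C : Set (ι → α)}
    (hC : IsNearlyTiled η ε Cᶜ) (hAC : Disjoint A C) (hδ : 0 ≤ δ)
    (hA : ∀ V : Subspace η α ι, density (V ⁻¹' A) ≤ δ) :
    density A + δ * density C ≤ δ + ε := by
  have indicator_le (x : ι → α) : A.indicator 1 x - δ ≤ 1 := by
    have : A.indicator 1 x ≤ (1 : ℝ) :=
      Set.indicator_le_self' (fun _ _ ↦ zero_le_one) x
    linarith
  have indicator_compl (x : ι → α) : Cᶜ.indicator (fun x ↦ A.indicator 1 x - δ) x =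
      A.indicator 1 x + δ * C.indicator 1 x - δ := by
    by_cases hx : x ∈ C
    · simp [hx, hAC.notMem_of_mem_right hx]
    · simp [hx]
  have tiled := hC _ indicator_le fun V ↦ by
    rw [expect_sub_distrib, Fintype.expect_const, sub_nonpos]
    exact hA V
  simp only [indicator_compl, expect_sub_distrib, expect_add_distrib, ← mul_expect,
    Fintype.expect_const] at tiled
  exact sub_le_iff_le_add'.mp tiled

lemma density_mix_add_mul_density_le
    (hμ : ∀ E : α → Set (μ → Option α), (∀ a, IsInsensitive a (E a)) →
      IsNearlyTiled η ε (⋃ a, E a))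
    (hδ : 0 ≤ δ) (hη : ∀ A : Set (η → Option α), δ ≤ density A → ContainsLine A)
    {A : Set ((κ × μ) ⊕ κ → Option α)} (hA : ¬ ContainsLine A) {y : κ → Option α}
    (hy : ∃ j, y j = none) :
    density {q | mix q y ∈ A} + δ * density {q | mix q y ∈ fillCore A} ≤ δ + ε := by
  obtain ⟨j, hj⟩ := hy
  have density_eq (B : Set ((κ × μ) ⊕ κ → Option α)) :
      density {q | mix q y ∈ B} = 𝔼 q, density (mixSubspace q y j ⁻¹' B) := by
    rw [density, ← expect_update j]
    simp only [density, Set.preimage, mixSubspace_apply hj]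
    rfl
  rw [density_eq, density_eq, mul_expect, ← expect_add_distrib]
  refine expect_le univ_nonempty fun q _ ↦ ?_
  refine IsNearlyTiled.density_add_mul_density_le (η := η) ?_ ?_ hδ fun V ↦ ?_
  · obtain ⟨E, hE, hE_eq⟩ := exists_iUnion_eq_compl_preimage_fillCore (A := A) (mixSubspace q y j)
    exact hE_eq ▸ hμ E hE
  · refine Set.disjoint_left.mpr fun u hu hcore ↦ hA ?_
    exact containsLine_of_mem_fillCore ⟨.inr j, hj⟩ hu hcore
  · by_contra! hV
    exact hA (hη _ hV.le).of_preimage.of_preimage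

variable {V : Ω → Subspace ((κ × μ) ⊕ κ) (Option α) ι} {A : Set (ι → Option α)}

lemma IsEquidistributed.exists_line_le_density_fillCore [Nonempty α] (hV : IsEquidistributed ε V)
    (hδ : 0 < δ) (hκ : ∀ B : Set (κ → α), δ / 2 ≤ density B → ContainsLine B)
    (hA : δ + ε ≤ density A) :
    ∃ l : Line α κ, δ / 2 / (Nat.card (Line α κ) + 1) ≤
      density {z : Ω × (κ → μ → Option α) | mix z.2 l.idxFun ∈ fillCore (V z.1 ⁻¹' A)} := by
  refine exists_le_density_of_le_expect_density
    (A := fun z : Ω × (κ → μ → Option α) ↦ {t : κ → α | V z.1 (mix z.2 (some ∘ t)) ∈ A})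
    (Q := fun (l : Line α κ) z ↦ mix z.2 l.idxFun ∈ fillCore (V z.1 ⁻¹' A)) hδ ?_ fun z hz ↦ ?_
  · calc δ ≤ 𝔼 t : κ → α,
          density {z : Ω × (κ → μ → Option α) | V z.1 (mix z.2 (some ∘ t)) ∈ A} :=
        le_expect univ_nonempty fun t _ ↦ by
          linarith [hV.density_sub_le_prod A fun q ↦ mix q (some ∘ t)]
      _ = 𝔼 z : Ω × (κ → μ → Option α), density {t : κ → α | V z.1 (mix z.2 (some ∘ t)) ∈ A} :=
        expect_comm ..
  · obtain ⟨l, hl⟩ := hκ _ hz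
    refine ⟨l, fun a ↦ ?_⟩
    rw [some_comp_fill_mix]
    exact hl a

/-- The extremal density of line-free sets is almost attained on average over the random subspaces,
but those whose word `mix z.2 l.idxFun` lies in `fillCore` must lose density. -/
lemma exists_dhj_increment [Nonempty α] (hα : ∀ δ > 0, DHJ α δ) {δ₀ : ℝ} (hδ₀ : 0 < δ₀) :
    ∃ γ > 0, ∀ δ ≥ δ₀, DHJ (Option α) (δ + γ) → DHJ (Option α) δ := by
  obtain ⟨κ, _, _, hκ⟩ := hα (δ₀ / 2 / 2) (by positivity)
  set c : ℝ := δ₀ / 2 / 2 / (Nat.card (Line α κ) + 1)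
  have hc_pos : 0 < c := by positivity
  set ε : ℝ := min (δ₀ / 2) (δ₀ * c / 3)
  have hε_pos : 0 < ε := by positivity
  refine ⟨ε, hε_pos, ?_⟩
  rintro δ hδ ⟨η, _, _, hη⟩
  obtain ⟨μ, _, _, hμ⟩ := exists_isNearlyTiled_iUnion hα η hε_pos
  obtain ⟨ι, _, _, Ω, _, _, V, hV⟩ := exists_isEquidistributed (Option α) ((κ × μ) ⊕ κ) ε hε_pos
  refine ⟨ι, inferInstance, inferInstance, fun A hA ↦ ?_⟩
  by_contra hno
  have half_le : δ₀ / 2 + ε ≤ density A := by linarith [min_le_left (δ₀ / 2) (δ₀ * c / 3)]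
  obtain ⟨l, hl⟩ := hV.exists_line_le_density_fillCore (half_pos hδ₀) hκ half_le
  have lower := hV.density_sub_le_prod A fun q ↦ mix q l.idxFun
  have upper : density {z : Ω × (κ → μ → Option α) | V z.1 (mix z.2 l.idxFun) ∈ A} +
      (δ + ε) * density {z : Ω × (κ → μ → Option α) | mix z.2 l.idxFun ∈ fillCore (V z.1 ⁻¹' A)} ≤
        δ + ε + ε := by
    rw [density_prod, density_prod, mul_expect, ← expect_add_distrib]
    exact expect_le univ_nonempty fun ω _ ↦
      density_mix_add_mul_density_le (A := V ω ⁻¹' A) hμ (hδ₀.le.trans (by linarith)) hη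
        (mt ContainsLine.of_preimage hno) l.proper
  have gain := mul_le_mul (add_le_add_left hδ ε) hl hc_pos.le (by linarith)
  nlinarith [mul_pos hε_pos hc_pos, min_le_right (δ₀ / 2) (δ₀ * c / 3)]

end Increment

/-! ### The density Hales–Jewett theorem -/

section Induction

variable {α β : Type*} [Fintype α]

lemma forall_pos_of_increment {P : ℝ → Prop} (one_lt : ∀ δ > 1, P δ)
    (increment : ∀ δ₀ > 0, ∃ γ > 0, ∀ δ ≥ δ₀, P (δ + γ) → P δ) : ∀ δ > 0, P δ := by
  intro δ₀ hδ₀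
  obtain ⟨γ, hγ, hP⟩ := increment δ₀ hδ₀
  have descend (n : ℕ) : ∀ δ ≥ δ₀, 1 < δ + n * γ → P δ := by
    induction n with
    | zero => exact fun δ _ hδ ↦ one_lt δ (by simpa using hδ)
    | succ n ih =>
      refine fun δ hδ hn ↦ hP δ hδ (ih _ (by linarith) ?_)
      push_cast at hn
      linarith
  obtain ⟨n, hn⟩ := exists_nat_gt (1 / γ)
  rw [div_lt_iff₀ hγ] at hn
  exact descend n δ₀ le_rfl (by linarith)

lemma DHJ.of_one_lt {δ : ℝ} (hδ : 1 < δ) : DHJ α δ :=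
  ⟨Unit, inferInstance, inferInstance, fun A hA ↦ absurd (density_le_one A) (by linarith)⟩

lemma DHJ.of_subsingleton [Subsingleton α] {δ : ℝ} (hδ : 0 < δ) : DHJ α δ := by
  refine ⟨Unit, inferInstance, inferInstance, fun A hA ↦ ?_⟩
  rw [Subsingleton.eq_univ_of_nonempty (nonempty_of_density_pos (hδ.trans_le hA))]
  exact ⟨.diagonal α Unit, fun _ ↦ Set.mem_univ _⟩

lemma DHJ.of_equiv [Fintype β] (e : α ≃ β) {δ : ℝ} (h : DHJ α δ) : DHJ β δ := by
  obtain ⟨ι, _, _, hι⟩ := h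
  refine ⟨ι, inferInstance, inferInstance, fun A hA ↦ ?_⟩
  have density_eq : density A = density {x : ι → α | e ∘ x ∈ A} :=
    (Fintype.expect_equiv ((Equiv.refl ι).arrowCongr e) _ _ fun x ↦ rfl).symm
  obtain ⟨l, hl⟩ := hι {x | e ∘ x ∈ A} (density_eq ▸ hA)
  refine ⟨l.map e, fun b ↦ ?_⟩
  obtain ⟨a, rfl⟩ := e.surjective b
  rw [Line.map_apply]
  exact hl a

theorem dhj (α : Type*) [Fintype α] : ∀ δ > 0, DHJ α δ := by
  refine Fintype.induction_empty_option (P := fun α _ ↦ ∀ δ > 0, DHJ α δ) ?_ ?_ ?_ α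
  · intro α β _ e h δ hδ
    let _ := Fintype.ofEquiv β e.symm
    exact (h δ hδ).of_equiv e
  · exact fun δ hδ ↦ .of_subsingleton hδ
  · intro α _ h
    rcases isEmpty_or_nonempty α
    · exact fun δ hδ ↦ .of_subsingleton hδ
    · exact forall_pos_of_increment (fun δ ↦ .of_one_lt) fun δ₀ ↦ exists_dhj_increment h

end Induction

/-! ### Lines in finite modules -/

section FiniteModule

lemma density_preimage_of_surjective {G H : Type*} [AddGroup G] [AddGroup H] [Fintype G]
    [Fintype H] {f : G →+ H} (hf : Surjective f) (S : Set H) :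
    density (f ⁻¹' S) = density S := by
  have translate (h : H) : 𝔼 g, S.indicator 1 (f g + h) = density (f ⁻¹' S) := by
    obtain ⟨k, rfl⟩ := hf h
    refine Fintype.expect_equiv (Equiv.addRight k) _ _ fun g ↦ ?_
    rw [Equiv.coe_addRight, ← map_add]
    rfl
  calc density (f ⁻¹' S) = 𝔼 h : H, 𝔼 g, S.indicator 1 (f g + h) := by
        simp only [translate, Fintype.expect_const]
    _ = 𝔼 g, 𝔼 h, S.indicator 1 (f g + h) := expect_comm ..
    _ = 𝔼 _g : G, density S := by
        congr! 1 with g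
        exact Fintype.expect_equiv (Equiv.addLeft (f g)) _ _ fun h ↦ rfl
    _ = density S := Fintype.expect_const _

variable {ι R W : Type*} [Fintype ι] [AddCommGroup W] [DistribSMul R W]

/-- The point with coordinates `t` of the parametrized affine space with origin `z.1` and
directions `z.2`, as a function of `z`. -/
def affineSum (t : ι → R) : W × (ι → W) →+ W :=
  .mk' (fun z ↦ z.1 + ∑ j, t j • z.2 j) fun z z' ↦ by
    simp only [Prod.fst_add, Prod.snd_add, Pi.add_apply, smul_add, sum_add_distrib]
    abel

lemma affineSum_surjective (t : ι → R) : Surjective (affineSum (W := W) t) :=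
  fun x ↦ ⟨(x, 0), by simp [affineSum]⟩

/-- The base point and the direction of the image of a combinatorial line under `t ↦ affineSum t z`,
as a function of `z`. -/
def affineLine (l : Line R ι) : W × (ι → W) →+ W × W :=
  .mk' (fun z ↦ (z.1 + ∑ j, (l.idxFun j).elim 0 (· • z.2 j), ∑ j, (l.idxFun j).elim (z.2 j) 0))
    fun z z' ↦ by
      have elim_add (j : ι) (u v : W) : (l.idxFun j).elim (u + v) 0 =
          (l.idxFun j).elim u 0 + (l.idxFun j).elim v 0 := by
        cases l.idxFun j <;> simp
      have elim_smul_add (j : ι) (u v : W) : (l.idxFun j).elim 0 (· • (u + v)) =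
          (l.idxFun j).elim 0 (· • u) + (l.idxFun j).elim 0 (· • v) := by
        cases l.idxFun j <;> simp
      ext
      · simp only [Prod.fst_add, Prod.snd_add, Pi.add_apply, elim_smul_add, sum_add_distrib]
        abel
      · simp only [Prod.snd_add, Pi.add_apply, elim_add, sum_add_distrib]

lemma affineLine_fst_add_smul_snd (l : Line R ι) (z : W × (ι → W)) (a : R) :
    (affineLine l z).1 + a • (affineLine l z).2 = affineSum (l a) z := by
  change z.1 + _ + a • ∑ j, (l.idxFun j).elim (z.2 j) 0 = z.1 + _
  rw [smul_sum, add_assoc, ← sum_add_distrib]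
  congr! 2 with j
  cases h : l.idxFun j <;> simp [Line.coe_apply, h]

lemma affineLine_surjective (l : Line R ι) : Surjective (affineLine (W := W) l) := by
  classical
  rintro ⟨x, y⟩
  obtain ⟨j, hj⟩ := l.proper
  refine ⟨(x, Pi.single j y), Prod.ext ?_ ?_⟩
  · change x + ∑ k, (l.idxFun k).elim 0 (· • (Pi.single j y : ι → W) k) = x
    rw [add_eq_left]
    refine sum_eq_zero fun k _ ↦ ?_
    cases hk : l.idxFun k with
    | none => rfl
    | some a =>
      have : k ≠ j := by grind
      simp [this]
  · change ∑ k, (l.idxFun k).elim ((Pi.single j y : ι → W) k) 0 = y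
    rw [sum_eq_single_of_mem j (mem_univ j) fun k _ hkj ↦ ?_, hj]
    · simp
    · cases l.idxFun k <;> simp [hkj]

lemma exists_le_density_lines (R : Type*) [Finite R] [Nonempty R] {ε : ℝ} (hε : 0 < ε) :
    ∃ c > 0, ∀ (W : Type*) [AddCommGroup W] [DistribSMul R W] [Fintype W] (S : Set W),
      ε ≤ density S → c ≤ density {xy : W × W | ∀ a : R, xy.1 + a • xy.2 ∈ S} := by
  have := Fintype.ofFinite R
  obtain ⟨ι, _, _, hι⟩ := dhj R (ε / 2) (half_pos hε)
  refine ⟨ε / 2 / (Nat.card (Line R ι) + 1), by positivity, fun W _ _ _ S hS ↦ ?_⟩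
  have average_le : ε ≤ 𝔼 z : W × (ι → W), density {t : ι → R | affineSum t z ∈ S} := calc
    ε ≤ 𝔼 t : ι → R, density (affineSum t ⁻¹' S) := by
      refine le_expect univ_nonempty fun t _ ↦ ?_
      rwa [density_preimage_of_surjective (affineSum_surjective t)]
    _ = 𝔼 z : W × (ι → W), density {t : ι → R | affineSum t z ∈ S} := expect_comm ..
  obtain ⟨l, hl⟩ := exists_le_density_of_le_expect_density
    (Q := fun (l : Line R ι) z ↦ ∀ a, affineSum (l a) z ∈ S) hε average_le fun z ↦ hι _
  rw [← density_preimage_of_surjective (affineLine_surjective l)]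
  simpa only [Set.preimage_ofPred_eq, affineLine_fst_add_smul_snd] using hl

lemma ncard_le_ncard_snd_ne_zero_add {X Y : Type*} [Finite X] [Finite Y] [Zero Y]
    (T : Set (X × Y)) : T.ncard ≤ {z | z.2 ≠ 0 ∧ z ∈ T}.ncard + Nat.card X := by
  have subset_union : T ⊆ {z | z.2 ≠ 0 ∧ z ∈ T} ∪ Set.range (·, 0) := by
    rintro ⟨x, y⟩ hz
    by_cases hy : y = 0
    · exact .inr ⟨x, by simp [hy]⟩
    · exact .inl ⟨hy, hz⟩
  calc T.ncard ≤ ({z | z.2 ≠ 0 ∧ z ∈ T} ∪ Set.range (·, 0)).ncard := Set.ncard_le_ncard subset_union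
    _ ≤ {z | z.2 ≠ 0 ∧ z ∈ T}.ncard + (Set.range ((·, 0) : X → X × Y)).ncard :=
      Set.ncard_union_le _ _
    _ = {z | z.2 ≠ 0 ∧ z ∈ T}.ncard + Nat.card X := by
      rw [Set.ncard_range_of_injective (Prod.mk_left_injective 0)]

end FiniteModule

end DensityHalesJewett

open DensityHalesJewett in
theorem varnavides_lines_general (R : Type u) [Finite R] [Nonempty R] {ε : ℝ}
    (hε : 0 < ε) :
    ∃ (N : ℕ) (c : ℝ), 0 < N ∧ c ∈ Set.Ioc (0 : ℝ) 1 ∧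
      ∀ (W : Type v) [AddCommGroup W] [DistribSMul R W] [Finite W], N ≤ Nat.card W →
        ∀ S : Set W, ε * Nat.card W ≤ S.ncard →
          c * (Nat.card W : ℝ) ^ 2 ≤
            {xy : W × W | xy.2 ≠ 0 ∧ ∀ a : R, xy.1 + a • xy.2 ∈ S}.ncard := by
  obtain ⟨c, hc, hlines⟩ := exists_le_density_lines.{u, v} R hε
  refine ⟨⌈2 / c⌉₊, min (c / 2) 1, by positivity, ⟨by positivity, min_le_right _ _⟩,
    fun W _ _ _ hW S hS ↦ ?_⟩
  have := Fintype.ofFinite W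
  have hN : 2 ≤ c * Nat.card W := by
    rw [← div_le_iff₀' hc]
    exact Nat.ceil_le.1 hW
  set T := {xy : W × W | ∀ a : R, xy.1 + a • xy.2 ∈ S}
  have hT : c * (Nat.card W : ℝ) ^ 2 ≤ T.ncard := by
    have := hlines W S <| by
      rwa [density_eq_ncard_div_card, le_div_iff₀ (mod_cast Nat.card_pos)]
    rwa [density_eq_ncard_div_card, Nat.card_prod, Nat.cast_mul, ← sq,
      le_div_iff₀ (pow_pos (mod_cast Nat.card_pos) 2)] at this
  calc min (c / 2) 1 * (Nat.card W : ℝ) ^ 2 ≤ c / 2 * (Nat.card W : ℝ) ^ 2 := by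
        gcongr
        exact min_le_left _ _
    _ ≤ c * (Nat.card W : ℝ) ^ 2 - Nat.card W := by nlinarith
    _ ≤ T.ncard - Nat.card W := by gcongr
    _ ≤ {xy | xy.2 ≠ 0 ∧ xy ∈ T}.ncard := by
      rw [sub_le_iff_le_add]
      exact_mod_cast ncard_le_ncard_snd_ne_zero_add T

/-- Varnavides-type version of Szemerédi's theorem in `F_p^n`: every set of density `ε`
contains at least `c(p,ε)·p^{2n}` nontrivial lines (counted as pairs `(x,y)`, `y ≠ 0`,
with `{x + λy : λ ∈ F_p} ⊆ S`). -/
theorem varnavides_lines :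
    ∀ p : ℕ, ∀ _ : Fact p.Prime, p ≠ 2 → ∀ ε : ℝ, ε ∈ Set.Ioc (0 : ℝ) 1 →
    ∃ (n1 : ℕ) (c : ℝ), 0 < n1 ∧ c ∈ Set.Ioc (0 : ℝ) 1 ∧
    ∀ n : ℕ, n1 ≤ n → ∀ S : Finset (Fin n → ZMod p), ε * (p : ℝ) ^ n ≤ S.card →
      c * (p : ℝ) ^ (2 * n) ≤
        ((Finset.univ.filter fun xy : (Fin n → ZMod p) × (Fin n → ZMod p) =>
            xy.2 ≠ 0 ∧ ∀ lam : ZMod p, xy.1 + lam • xy.2 ∈ S).card : ℝ) := by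
  intro p _ _ ε hε
  obtain ⟨N, c, hN, hc, hlines⟩ := varnavides_lines_general (ZMod p) hε.1
  refine ⟨N, c, hN, hc, fun n hn S hS ↦ ?_⟩
  have card_eq : Nat.card (Fin n → ZMod p) = p ^ n := by simp
  have hNn : N ≤ Nat.card (Fin n → ZMod p) := by
    rw [card_eq]
    exact hn.trans (Nat.lt_pow_self (Fact.out : p.Prime).one_lt).le
  have := hlines _ hNn (S : Set (Fin n → ZMod p)) <| by
    rwa [Set.ncard_coe_finset, card_eq, Nat.cast_pow]
  rw [card_eq, Nat.cast_pow, ← pow_mul'] at this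
  rwa [← Set.ncard_coe_finset, Finset.coe_filter_univ]
end
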